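/- Let K be a field and k ∈ ℕ. For n ∈ ℕ let R_n := K[x_{i,j} : i, j ∈ [n]], with Sym([n]) acting by K-algebra automorphisms via π·x_{i,j} = x_{π(i),π(j)}, and with the inclusion R_n → R_{n+1} induced by [n] ⊆ [n+1]. Let (J_n)_{n∈ℕ} be a family of ideals J_n ⊆ R_n such that: each J_n contains all (k+1)×(k+1) minors of the n×n matrix of variables (x_{i,j}); each J_n is stable under the Sym([n])-action; and the inclusion R_n → R_{n+1} maps J_n into J_{n+1}. Then the number of Sym([n])-orbits on the set of minimal prime ideals of R_n over J_n is a quasipolynomial in n for all n ≫ 0. -/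

import Mathlib

/-- A function `f : ℤ → ℚ` is a quasipolynomial if there are an integer `N ≥ 1` and
polynomials `p i ∈ ℚ[t]` such that `f n = p (n mod N) (n)` for all `n`. -/
def IsQuasiPolynomial (f : ℤ → ℚ) : Prop :=
  ∃ N : ℕ, 0 < N ∧ ∃ p : ZMod N → Polynomial ℚ,
    ∀ n : ℤ, f n = (p (n : ZMod N)).eval (n : ℚ)

/-- A quantity `a : ℕ → ℕ` is a quasipolynomial in `n` for all `n ≫ 0`. -/
def QuasiPolynomialCount (a : ℕ → ℕ) : Prop :=
  ∃ f : ℤ → ℚ, IsQuasiPolynomial f ∧ ∃ n₀ : ℕ, ∀ n : ℕ, n₀ ≤ n → (a n : ℚ) = f n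

open MvPolynomial

/-!
The radicals of the ideals `J n` extend to a family of ideals on all index sets that is functorial
for injections. Matrices of rank at most `k` are products `U * Vᵀ` of matrices with `k` columns, so
Higman's lemma, applied to leading monomials, shows that such families satisfy the ascending chain
condition, and one can argue by Noetherian induction.

Let `r` be the generic rank of the family. Choose a component on some index set `S` with an
invertible `r × r` submatrix such that the ideal of possible further rows over its generic point has
as many leading exponents as possible. Then, over a dense open subset `h ≠ 0` of that component,
further rows can be added independently of each other. The components of the geometric fibre are
finitely many colours, on which the Galois group of the function field acts, and every component
that meets the open set is described by an embedding of `S` into the index set and a colouring of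
the remaining indices. The other components belong to the smaller family on which all copies of `h`
vanish.

Consequently the number of classes of interchangeable indices of a component is bounded, and a
component is determined up to relabelling by the sizes of its large classes and one of finitely many
skeletons, modulo the action of a finite group. By Burnside's lemma the number of orbits is a
combination of numbers of solutions of equations `∑ j, d j * m j = n` in natural numbers, which are
quasipolynomials.
-/

/-! ### Generic matrices and their factorizations -/

section EntryRing

variable {K : Type*} [CommRing K] {α β δ : Type*}

/-- The coordinate ring `K[x_{i,j} : i, j ∈ α]` of the space of `α × α` matrices. -/
abbrev EntryRing (K α : Type*) [CommRing K] := MvPolynomial (α × α) K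

/-- The substitution `x_{i,j} ↦ x_{e i, e j}`, the functoriality of `EntryRing K` in its index
set. -/
noncomputable def relabel (e : α → β) : EntryRing K α →ₐ[K] EntryRing K β :=
  rename (Prod.map e e)

/-- The preimage of an ideal under `relabel e`. For injective `e` and prime `P` it defines the
closure of the projection of the variety of `P` to the `α × α` submatrix. -/
noncomputable def relabelComap (e : α → β) (P : Ideal (EntryRing K β)) : Ideal (EntryRing K α) :=
  P.comap (relabel e)

lemma mem_relabelComap {e : α → β} {P : Ideal (EntryRing K β)} {f : EntryRing K α} :
    f ∈ relabelComap e P ↔ relabel e f ∈ P :=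
  Iff.rfl

@[simp] lemma relabel_X (e : α → β) (p : α × α) :
    relabel (K := K) e (X p) = X (e p.1, e p.2) := by
  simp [relabel, Prod.map]

lemma relabel_relabel (e : α → β) (g : β → δ) (f : EntryRing K α) :
    relabel g (relabel e f) = relabel (g ∘ e) f := by
  simp [relabel, rename_rename, Prod.map_comp_map]

@[simp] lemma relabel_id (f : EntryRing K α) : relabel id f = f := by
  simp [relabel]

lemma relabelComap_relabelComap (e : α → β) (g : β → δ) (P : Ideal (EntryRing K δ)) :
    relabelComap e (relabelComap g P) = relabelComap (g ∘ e) P := by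
  ext f
  simp only [mem_relabelComap, relabel_relabel]

@[simp] lemma relabelComap_id (P : Ideal (EntryRing K α)) : relabelComap id P = P := by
  ext f
  simp only [mem_relabelComap, relabel_id]

lemma relabelComap_mono (e : α → β) {P Q : Ideal (EntryRing K β)} (h : P ≤ Q) :
    relabelComap e P ≤ relabelComap e Q :=
  Ideal.comap_mono h

lemma relabelComap_isPrime (e : α → β) (P : Ideal (EntryRing K β)) [P.IsPrime] :
    (relabelComap e P).IsPrime :=
  Ideal.comap_isPrime _ _

lemma relabel_injective {e : α → β} (he : Function.Injective e) :
    Function.Injective (relabel (K := K) e) :=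
  rename_injective _ (he.prodMap he)

/-- The minor of the generic `α × α` matrix with rows `ρ` and columns `γ`. -/
noncomputable def genericMinor {r : ℕ} (ρ γ : Fin r → α) : EntryRing K α :=
  Matrix.det (Matrix.of fun a b => X (ρ a, γ b))

lemma map_genericMinor {r : ℕ} {B F : Type*} [CommRing B] [FunLike F (EntryRing K α) B]
    [RingHomClass F (EntryRing K α) B] (φ : F) (ρ γ : Fin r → α) :
    φ (genericMinor ρ γ) = ((Matrix.of fun i j => φ (X (i, j))).submatrix ρ γ).det :=
  (RingHom.map_det (φ : EntryRing K α →+* B) _).trans rfl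

lemma relabel_genericMinor {r : ℕ} (e : α → β) (ρ γ : Fin r → α) :
    relabel (K := K) e (genericMinor ρ γ) = genericMinor (e ∘ ρ) (e ∘ γ) := by
  rw [map_genericMinor]
  simp only [relabel_X]
  rfl

end EntryRing

section FactorEval

variable {α β B B' : Type*} {r : ℕ} [CommRing B'] [CommRing B]

/-- The product `U * Vᵀ` of two matrices with `r` columns. The pair `(U, V)` is encoded by its
concatenated rows: the row `s` of `U` is the first half of `y s`, that of `V` the second half. -/
def factorProduct (y : α → Fin (r + r) → B) : Matrix α α B :=
  Matrix.of fun s t => ∑ a : Fin r, y s (Fin.castAdd r a) * y t (Fin.natAdd r a)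

lemma map_factorProduct (φ : B →+* B') (y : α → Fin (r + r) → B) :
    (factorProduct y).map φ = factorProduct fun s a => φ (y s a) := by
  ext s t
  simp [factorProduct]

variable {K : Type*} [CommRing K] [Algebra K B'] [Algebra K B]

/-- Evaluation of polynomials in the entries of a matrix at the matrix `factorProduct y`. -/
noncomputable def factorEval (y : α → Fin (r + r) → B) : EntryRing K α →ₐ[K] B :=
  aeval fun p => factorProduct y p.1 p.2

@[simp] lemma factorEval_X (y : α → Fin (r + r) → B) (p : α × α) :
    factorEval (K := K) y (X p) = factorProduct y p.1 p.2 := by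
  simp [factorEval]

lemma factorEval_relabel (e : α → β) (y : β → Fin (r + r) → B) (f : EntryRing K α) :
    factorEval y (relabel e f) = factorEval (y ∘ e) f := by
  simp only [factorEval, relabel, aeval_rename]
  rfl

lemma map_factorEval (φ : B →ₐ[K] B') (y : α → Fin (r + r) → B) (f : EntryRing K α) :
    φ (factorEval y f) = factorEval (fun s a => φ (y s a)) f := by
  have h : φ.comp (factorEval y) = factorEval (K := K) fun s a => φ (y s a) := by
    ext p
    simp [factorProduct]
  exact DFunLike.congr_fun h f

lemma factorEval_genericMinor {n : ℕ} (y : α → Fin (r + r) → B) (ρ γ : Fin n → α) :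
    factorEval (K := K) y (genericMinor ρ γ) = ((factorProduct y).submatrix ρ γ).det := by
  simp only [map_genericMinor, factorEval_X]
  rfl

end FactorEval

section NormalizedFactor

variable {α β B B' : Type*} {r : ℕ} [CommRing B] [CommRing B'] {ρ γ : Fin r → α}
  {A : Matrix α α B} {y : α → Fin (r + r) → B}

/-- The pair of matrices `(U, V)` encoded by `y` is the one obtained from `A` by Cramer's rule for
the rows `ρ` and the columns `γ`: `U` consists of the columns `γ` of `A`, and `V` solves
`A[ρ, γ] * Vᵀ = A[ρ, ·]`. If `A` has rank `r` and `A[ρ, γ]` is invertible, then `A = U * Vᵀ`, and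
this is the only such factorization in which the rows `γ` of `V` form the identity matrix. -/
structure IsCramerFactor (ρ γ : Fin r → α) (A : Matrix α α B) (y : α → Fin (r + r) → B) :
    Prop where
  left : ∀ t a, y t (Fin.castAdd r a) = A t (γ a)
  right : ∀ t, (A.submatrix ρ γ).mulVec (fun b => y t (Fin.natAdd r b)) = fun a => A (ρ a) t

/-- The rows `γ` of the second matrix of the pair `(U, V)` encoded by `y` form the identity
matrix. -/
def IsNormalized (γ : Fin r → α) (y : α → Fin (r + r) → B) : Prop :=
  ∀ a b, y (γ a) (Fin.natAdd r b) = if a = b then 1 else 0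

lemma IsNormalized.map (φ : B →+* B') (hy : IsNormalized γ y) :
    IsNormalized γ fun s a => φ (y s a) := fun a b => by
  simp only [hy a, apply_ite φ, map_one, map_zero]

namespace IsCramerFactor

lemma exists_of_isUnit_det (hA : IsUnit (A.submatrix ρ γ).det) :
    ∃ y, IsCramerFactor ρ γ A y := by
  refine ⟨fun t => Fin.append (fun a => A t (γ a))
    ((A.submatrix ρ γ)⁻¹.mulVec fun a => A (ρ a) t), fun t a => by simp, fun t => ?_⟩
  simp only [Fin.append_right]
  rw [Matrix.mulVec_mulVec, Matrix.mul_nonsing_inv _ hA, Matrix.one_mulVec]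

lemma unique [IsDomain B] (hA : (A.submatrix ρ γ).det ≠ 0) {y' : α → Fin (r + r) → B}
    (hy : IsCramerFactor ρ γ A y) (hy' : IsCramerFactor ρ γ A y') : y = y' := by
  funext t c
  induction c using Fin.addCases with
  | left a => rw [hy.left, hy'.left]
  | right b =>
    refine congrFun (sub_eq_zero.1 (Matrix.eq_zero_of_mulVec_eq_zero hA
      (v := (fun c => y t (Fin.natAdd r c)) - fun c => y' t (Fin.natAdd r c)) ?_)) b
    rw [Matrix.mulVec_sub, hy.right, hy'.right, sub_self]

lemma of_isNormalized (hy : IsNormalized γ y) : IsCramerFactor ρ γ (factorProduct y) y := by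
  have hcol (s : α) (a : Fin r) : factorProduct y s (γ a) = y s (Fin.castAdd r a) := by
    simp only [factorProduct, Matrix.of_apply, hy a, mul_ite, mul_one, mul_zero,
      Finset.sum_ite_eq, Finset.mem_univ, if_true]
  refine ⟨fun t a => (hcol t a).symm, fun t => ?_⟩
  ext a
  simp only [Matrix.mulVec, dotProduct, Matrix.submatrix_apply, hcol]
  rfl

lemma isNormalized [IsDomain B] (hA : (A.submatrix ρ γ).det ≠ 0)
    (hy : IsCramerFactor ρ γ A y) : IsNormalized γ y := by
  intro a b
  refine congrFun (sub_eq_zero.1 (Matrix.eq_zero_of_mulVec_eq_zero hA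
    (v := (fun c => y (γ a) (Fin.natAdd r c)) - fun c => if a = c then 1 else 0) ?_)) b
  rw [Matrix.mulVec_sub, hy.right, sub_eq_zero]
  ext c
  simp [Matrix.mulVec, dotProduct]

end IsCramerFactor

lemma IsNormalized.eq_of_factorProduct_eq [IsDomain B] {y' : α → Fin (r + r) → B}
    (hy : IsNormalized γ y) (hy' : IsNormalized γ y') (h : factorProduct y = factorProduct y')
    (hdet : ((factorProduct y).submatrix ρ γ).det ≠ 0) : y = y' :=
  (IsCramerFactor.of_isNormalized hy).unique hdet (h ▸ .of_isNormalized hy')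

lemma apply_eq_of_det_bordered_eq_zero {L : Type*} [Field L] {A : Matrix α α L}
    (hA : (A.submatrix ρ γ).det ≠ 0) (s t : α)
    (hbord : (A.submatrix (Fin.append ρ fun _ : Fin 1 => s)
      (Fin.append γ fun _ : Fin 1 => t)).det = 0) :
    A s t = dotProduct (fun a => A s (γ a))
      ((A.submatrix ρ γ)⁻¹.mulVec fun a => A (ρ a) t) := by
  set D := A.submatrix ρ γ
  let _ : Invertible D := D.invertibleOfIsUnitDet (isUnit_iff_ne_zero.2 hA)
  have hblocks : (A.submatrix (Fin.append ρ fun _ : Fin 1 => s)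
      (Fin.append γ fun _ : Fin 1 => t)).submatrix finSumFinEquiv finSumFinEquiv =
      Matrix.fromBlocks D (Matrix.of fun a _ => A (ρ a) t) (Matrix.of fun _ b => A s (γ b))
        (Matrix.of fun _ _ => A s t) := by
    ext (i | i) (j | j) <;> simp [D]
  rw [← Matrix.det_submatrix_equiv_self finSumFinEquiv, hblocks, Matrix.det_fromBlocks₁₁,
    mul_eq_zero, or_iff_right hA] at hbord
  simp only [Matrix.det_unique, Matrix.sub_apply, sub_eq_zero, Matrix.of_apply] at hbord
  rw [hbord, Matrix.mul_assoc, Matrix.mul_apply, Matrix.invOf_eq_nonsing_inv]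
  rfl

lemma IsCramerFactor.factorProduct_eq {L : Type*} [Field L] {A : Matrix α α L}
    {y : α → Fin (r + r) → L} (hA : (A.submatrix ρ γ).det ≠ 0) (hy : IsCramerFactor ρ γ A y)
    (hminors : ∀ ρ' γ' : Fin (r + 1) → α, (A.submatrix ρ' γ').det = 0) :
    factorProduct y = A := by
  ext s t
  rw [apply_eq_of_det_bordered_eq_zero hA s t (hminors _ _), ← hy.right t, Matrix.mulVec_mulVec,
    Matrix.nonsing_inv_mul _ (isUnit_iff_ne_zero.2 hA), Matrix.one_mulVec]
  simp only [factorProduct, Matrix.of_apply, dotProduct, hy.left]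

lemma exists_factorProduct_eq {L : Type*} [Field L] {k : ℕ} (A : Matrix α α L)
    (hminors : ∀ ρ γ : Fin (k + 1) → α, (A.submatrix ρ γ).det = 0) :
    ∃ r ≤ k, ∃ y : α → Fin (r + r) → L, factorProduct y = A := by
  induction k with
  | zero =>
    refine ⟨0, le_rfl, fun _ => Fin.elim0, ?_⟩
    ext s t
    have hst : A s t = 0 := by simpa using hminors (fun _ => s) fun _ => t
    simp [factorProduct, hst]
  | succ k ih =>
    by_cases h : ∀ ρ γ : Fin (k + 1) → α, (A.submatrix ρ γ).det = 0
    · obtain ⟨r, hr, y, hy⟩ := ih h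
      exact ⟨r, hr.trans k.le_succ, y, hy⟩
    · push Not at h
      obtain ⟨ρ, γ, hdet⟩ := h
      obtain ⟨y, hy⟩ := IsCramerFactor.exists_of_isUnit_det (isUnit_iff_ne_zero.2 hdet)
      exact ⟨k + 1, le_rfl, y, hy.factorProduct_eq hdet hminors⟩

end NormalizedFactor

/-! ### Noetherianity up to increasing maps -/

section Noetherianity

lemma exists_strictMono_of_sublistForall₂_ofFn {A : Type*} {R : A → A → Prop} {m n : ℕ}
    {u : Fin m → A} {v : Fin n → A} (h : List.SublistForall₂ R (List.ofFn u) (List.ofFn v)) :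
    ∃ e : Fin m → Fin n, StrictMono e ∧ ∀ i, R (u i) (v (e i)) := by
  obtain ⟨l, hul, hlv⟩ := List.sublistForall₂_iff.1 h
  obtain ⟨f, hf⟩ := List.sublist_iff_exists_fin_orderEmbedding_get_eq.1 hlv
  have hlen : m = l.length := by simpa only [List.length_ofFn] using hul.length_eq
  refine ⟨fun i => Fin.cast List.length_ofFn (f (Fin.cast hlen i)),
    fun i j hij => f.strictMono (show Fin.cast hlen i < Fin.cast hlen j from hij), fun i => ?_⟩
  have hR : R ((List.ofFn u).get (Fin.cast (by simp) i)) (l.get (Fin.cast hlen i)) :=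
    (List.forall₂_iff_get.1 hul).2 i (by simp) (by omega)
  rw [hf (Fin.cast hlen i)] at hR
  simp only [List.get_ofFn] at hR
  exact hR

lemma exists_bounded_below_of_wellQuasiOrdered {T A : Type*} {r : A → A → Prop} [Std.Refl r]
    (hr : WellQuasiOrdered r) (size : T → ℕ) (f : T → A) :
    ∃ N, ∀ x, ∃ y, size y ≤ N ∧ r (f y) (f x) := by
  by_contra! hbad
  choose F hF using hbad
  have hsize (N : ℕ) : N < size (F N) := by
    by_contra! hN
    exact hF N (F N) hN (refl _)
  let s : ℕ → T := fun j => Nat.rec (F 0) (fun _ x => F (size x)) j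
  have hmono : StrictMono fun j => size (s j) := strictMono_nat_of_lt_succ fun j => hsize _
  obtain ⟨i, j, hij, h⟩ := hr fun j => f (s j)
  obtain ⟨j, rfl⟩ := Nat.exists_eq_succ_of_ne_zero (Nat.ne_zero_of_lt hij)
  exact hF _ _ (hmono.monotone (Nat.le_of_lt_succ hij)) h

lemma toLex_mapDomain_lt {σ τ : Type*} [LinearOrder σ] [LinearOrder τ] {e : σ → τ}
    (he : StrictMono e) {a b : σ →₀ ℕ} (h : toLex a < toLex b) :
    toLex (Finsupp.mapDomain e a) < toLex (Finsupp.mapDomain e b) := by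
  rw [Finsupp.Lex.lt_iff] at h ⊢
  simp only [ofLex_toLex] at h ⊢
  obtain ⟨j, hbelow, hj⟩ := h
  refine ⟨e j, fun d hd => ?_, by simpa only [Finsupp.mapDomain_apply he.injective] using hj⟩
  by_cases hrange : d ∈ Set.range e
  · obtain ⟨i, rfl⟩ := hrange
    simpa only [Finsupp.mapDomain_apply he.injective] using hbelow i (he.lt_iff_lt.1 hd)
  · simp only [Finsupp.mapDomain_of_notMem_range _ _ hrange]

open MonomialOrder in
lemma lex_degree_rename {σ τ R : Type*} [CommSemiring R] [LinearOrder σ] [LinearOrder τ]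
    [WellFoundedGT σ] [WellFoundedGT τ] {e : σ → τ} (he : StrictMono e) (f : MvPolynomial σ R) :
    (lex (σ := τ)).degree (rename e f) = Finsupp.mapDomain e ((lex (σ := σ)).degree f) := by
  obtain rfl | hf := eq_or_ne f 0
  · simp
  refine (lex (σ := τ)).toSyn.injective (le_antisymm ?_ ?_)
  · rw [degree_le_iff]
    intro d hd
    obtain ⟨u, rfl, hu⟩ := coeff_rename_ne_zero _ _ _ (mem_support_iff.1 hd)
    have h := (lex (σ := σ)).le_degree (mem_support_iff.2 hu)
    rw [lex_le_iff] at h ⊢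
    obtain h | h := h.eq_or_lt
    · rw [toLex_inj.1 h]
    · exact (toLex_mapDomain_lt he h).le
  · apply le_degree
    rw [mem_support_iff, coeff_rename_mapDomain _ he.injective]
    exact coeff_degree_ne_zero_iff.2 hf

lemma ideal_le_of_forall_exists_degree_le {σ L : Type*} [Field L] (m : MonomialOrder σ)
    {I Q : Ideal (MvPolynomial σ L)}
    (h : ∀ f ∈ I, f ≠ 0 → ∃ g ∈ I, g ∈ Q ∧ g ≠ 0 ∧ m.degree g ≤ m.degree f) : I ≤ Q := by
  intro f hf
  induction hd : m.toSyn (m.degree f) using WellFoundedLT.induction generalizing f with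
  | ind d ih =>
    subst hd
    obtain rfl | hf0 := eq_or_ne f 0
    · exact Q.zero_mem
    obtain ⟨g, hgI, hgQ, hg0, hg⟩ := h f hf hf0
    have hunit : IsUnit (m.leadingCoeff g) :=
      isUnit_iff_ne_zero.2 (m.leadingCoeff_ne_zero_iff.2 hg0)
    by_cases hdeg : m.degree f = 0
    · rw [hdeg, le_zero_iff] at hg
      rw [m.eq_C_of_degree_eq_zero hg] at hgQ
      rw [Ideal.eq_top_of_isUnit_mem _ hgQ (hunit.map C)]
      trivial
    · have hreduce : m.reduce hunit f ∈ Q := ih _ (m.degree_reduce_lt hunit hg hdeg)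
        (I.sub_mem hf (I.mul_mem_left _ hgI)) rfl
      have hsum := Q.add_mem hreduce (Q.mul_mem_left
        (monomial (m.degree f - m.degree g) (hunit.unit⁻¹ * m.leadingCoeff f)) hgQ)
      simpa [MonomialOrder.reduce] using hsum

/-- The map of index sets of variables `x_{i,a}`, ordered lexicographically, that is induced by a
map `e` between the sets of indices `i`. -/
def lexProdMap {m n t : ℕ} (e : Fin m → Fin n) : Fin m ×ₗ Fin t → Fin n ×ₗ Fin t :=
  fun p => toLex (e (ofLex p).1, (ofLex p).2)

lemma lexProdMap_strictMono {m n t : ℕ} {e : Fin m → Fin n} (he : StrictMono e) :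
    StrictMono (lexProdMap (t := t) e) := by
  intro p q h
  rw [Prod.Lex.lt_iff] at h
  rw [lexProdMap, Prod.Lex.lt_iff]
  exact h.imp (fun h => he h) fun h => ⟨congrArg e h.1, h.2⟩

lemma mapDomain_lexProdMap_le {m n t : ℕ} {e : Fin m → Fin n} (he : StrictMono e)
    {a : Fin m ×ₗ Fin t →₀ ℕ} {b : Fin n ×ₗ Fin t →₀ ℕ}
    (h : ∀ i j, a (toLex (i, j)) ≤ b (toLex (e i, j))) :
    Finsupp.mapDomain (lexProdMap e) a ≤ b := by
  intro p
  by_cases hp : p ∈ Set.range (lexProdMap (t := t) e)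
  · obtain ⟨q, rfl⟩ := hp
    rw [Finsupp.mapDomain_apply (lexProdMap_strictMono he).injective]
    exact h _ _
  · rw [Finsupp.mapDomain_of_notMem_range _ _ hp]
    exact Nat.zero_le _

/-- Exponent vectors in `n` blocks of `t` variables are words in `ℕᵗ`, so Higman's lemma applies to
leading monomials. -/
theorem exists_bound_ideal_le_of_strictMono {K Col : Type*} [Field K] [Finite Col] (t : ℕ)
    (I : ∀ n, (Fin n → Col) → Ideal (MvPolynomial (Fin n ×ₗ Fin t) K))
    (hI : ∀ (m n : ℕ) (w : Fin n → Col) (e : Fin m → Fin n), StrictMono e →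
      ∀ f ∈ I m (w ∘ e), rename (lexProdMap e) f ∈ I n w) :
    ∃ N, ∀ n (w : Fin n → Col) (Q : Ideal (MvPolynomial (Fin n ×ₗ Fin t) K)),
      (∀ m ≤ N, ∀ e : Fin m → Fin n, StrictMono e →
        ∀ f ∈ I m (w ∘ e), rename (lexProdMap e) f ∈ Q) → I n w ≤ Q := by
  let T := Σ n : ℕ,
    {p : (Fin n → Col) × MvPolynomial (Fin n ×ₗ Fin t) K // p.2 ∈ I n p.1 ∧ p.2 ≠ 0}
  let word : T → List (Col × (Fin t → ℕ)) := fun x =>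
    List.ofFn fun i => (x.2.1.1 i, fun j => MonomialOrder.lex.degree x.2.1.2 (toLex (i, j)))
  let le : Col × (Fin t → ℕ) → Col × (Fin t → ℕ) → Prop := fun p q => p.1 = q.1 ∧ p.2 ≤ q.2
  have : IsPreorder _ le :=
    { refl := fun a => ⟨rfl, le_rfl⟩
      trans := fun a b c hab hbc => ⟨hab.1.trans hbc.1, hab.2.trans hbc.2⟩ }
  have hle : WellQuasiOrdered le :=
    (Finite.wellQuasiOrdered fun a b : Col => a = b).prod (wellQuasiOrdered_le (α := Fin t → ℕ))
  have hhigman : WellQuasiOrdered (List.SublistForall₂ le) := by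
    rw [← Set.partiallyWellOrderedOn_univ_iff] at hle ⊢
    simpa using Set.PartiallyWellOrderedOn.partiallyWellOrderedOn_sublistForall₂ le hle
  obtain ⟨N, hN⟩ := exists_bounded_below_of_wellQuasiOrdered hhigman (fun x : T => x.1) word
  refine ⟨N, fun n w Q hQ => ideal_le_of_forall_exists_degree_le MonomialOrder.lex
    fun f hf hf0 => ?_⟩
  obtain ⟨⟨m, ⟨w', g⟩, hg, hg0⟩, hm, hword⟩ := hN ⟨n, ⟨w, f⟩, hf, hf0⟩
  obtain ⟨e, he, hle⟩ : ∃ e : Fin m → Fin n, StrictMono e ∧ ∀ i,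
      le (w' i, fun j => MonomialOrder.lex.degree g (toLex (i, j)))
        (w (e i), fun j => MonomialOrder.lex.degree f (toLex (e i, j))) :=
    exists_strictMono_of_sublistForall₂_ofFn hword
  obtain rfl : w' = w ∘ e := funext fun i => (hle i).1
  refine ⟨rename (lexProdMap e) g, hI _ _ _ _ he _ hg, hQ m hm e he _ hg, ?_, ?_⟩
  · simpa using (rename_injective _ (lexProdMap_strictMono he).injective).ne hg0
  · rw [lex_degree_rename (lexProdMap_strictMono he)]
    exact mapDomain_lexProdMap_le he fun i => (hle i).2

/-- The rows of two generic matrices with `r` columns, in the encoding of `factorProduct`. -/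
noncomputable def genericRows (K : Type*) [CommRing K] (r n : ℕ) :
    Fin n → Fin (r + r) → MvPolynomial (Fin n ×ₗ Fin (r + r)) K :=
  fun i a => X (toLex (i, a))

lemma rename_factorEval_genericRows {K : Type*} [CommRing K] (r : ℕ) {m n : ℕ}
    (e : Fin m → Fin n) (f : EntryRing K (Fin m)) :
    rename (lexProdMap e) (factorEval (genericRows K r m) f) =
      factorEval (genericRows K r n) (relabel e f) := by
  rw [map_factorEval, factorEval_relabel]
  congr 2
  ext1 i
  ext1 a
  simp [genericRows, lexProdMap]

lemma exists_residueField_factor {K α : Type*} [Field K] {k : ℕ} (Q : Ideal (EntryRing K α))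
    [Q.IsPrime] (hQ : ∀ ρ γ : Fin (k + 1) → α, genericMinor ρ γ ∈ Q) :
    ∃ r ≤ k, ∃ y : α → Fin (r + r) → Q.ResidueField,
      ∀ f, factorEval (K := K) y f = 0 ↔ f ∈ Q := by
  let φ := IsScalarTower.toAlgHom K (EntryRing K α) Q.ResidueField
  obtain ⟨r, hr, y, hy⟩ := exists_factorProduct_eq (Matrix.of fun i j => φ (X (i, j)))
    fun ρ γ => by
      rw [← map_genericMinor]
      exact Ideal.algebraMap_residueField_eq_zero.2 (hQ ρ γ)
  refine ⟨r, hr, y, fun f => ?_⟩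
  have heval : factorEval y = φ := by
    ext p
    rw [factorEval_X, hy]
    rfl
  rw [heval]
  exact Ideal.algebraMap_residueField_eq_zero

/-- Families of ideals that are compatible with increasing maps are determined, modulo primes of
bounded rank, by finitely many of their members: matrices of rank at most `k` are products of two
matrices with `k` columns, whose entries form boundedly many variables for each index. -/
theorem exists_bound_ideal_le_of_bounded_rank {K Col : Type*} [Field K] (k : ℕ) [Finite Col]
    (I : ∀ n, (Fin n → Col) → Ideal (EntryRing K (Fin n)))
    (hI : ∀ (m n : ℕ) (w : Fin n → Col) (e : Fin m → Fin n), StrictMono e →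
      I m (w ∘ e) ≤ relabelComap e (I n w)) :
    ∃ N, ∀ n (w : Fin n → Col) (Q : Ideal (EntryRing K (Fin n))), Q.IsPrime →
      (∀ ρ γ : Fin (k + 1) → Fin n, genericMinor ρ γ ∈ Q) →
      (∀ m ≤ N, ∀ e : Fin m → Fin n, StrictMono e → I m (w ∘ e) ≤ relabelComap e Q) →
      I n w ≤ Q := by
  choose N hN using fun r : ℕ => exists_bound_ideal_le_of_strictMono (K := K) (r + r)
    (fun n w => (I n w).map (factorEval (genericRows K r n))) fun m n w e he f hf => by
      refine (Ideal.map_le_iff_le_comap (K := Ideal.comap (rename (R := K) (lexProdMap e))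
        ((I n w).map (factorEval (genericRows K r n))))).2 (fun f hf => ?_) hf
      rw [Ideal.mem_comap, Ideal.mem_comap, rename_factorEval_genericRows]
      exact Ideal.mem_map_of_mem _ (hI _ _ _ _ he hf)
  refine ⟨(Finset.range (k + 1)).sup N, fun n w Q _ hminors hQ f hf => ?_⟩
  obtain ⟨r, hr, y, hy⟩ := exists_residueField_factor Q hminors
  let ψ : MvPolynomial (Fin n ×ₗ Fin (r + r)) K →ₐ[K] Q.ResidueField :=
    aeval fun p => y (ofLex p).1 (ofLex p).2
  have hψ (f : EntryRing K (Fin n)) : ψ (factorEval (genericRows K r n) f) = 0 ↔ f ∈ Q := by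
    rw [map_factorEval, ← hy]
    simp [ψ, genericRows]
  refine (hψ f).1 (hN r n w (RingHom.ker ψ) (fun m hm e he g hg => ?_)
    (Ideal.mem_map_of_mem _ hf))
  refine (Ideal.map_le_iff_le_comap (K := Ideal.comap (rename (R := K) (lexProdMap e))
    (RingHom.ker ψ))).2 (fun g hg => ?_) hg
  rw [Ideal.mem_comap, Ideal.mem_comap, rename_factorEval_genericRows, RingHom.mem_ker, hψ]
  exact hQ m (hm.trans (Finset.le_sup (Finset.mem_range.2 (by omega)))) e he hg

end Noetherianity

/-! ### Families of varieties of bounded rank -/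

section BoundedRankFamily

/-- A family of radical ideals `I α` in the coordinate rings of `α × α` matrices, one for each index
set `α`, that contain the `(k + 1) × (k + 1)` minors and are functorial for injections. It
corresponds to closed subvarieties of the matrices of rank at most `k` that are stable under passing
to principal submatrices. -/
structure BoundedRankFamily (K : Type*) [Field K] (k : ℕ) where
  ideal : ∀ α : Type, Ideal (EntryRing K α)
  isRadical : ∀ α, (ideal α).IsRadical
  genericMinor_mem : ∀ (α : Type) (ρ γ : Fin (k + 1) → α), genericMinor ρ γ ∈ ideal α
  le_relabelComap : ∀ {α β : Type} (e : α → β), Function.Injective e →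
    ideal α ≤ relabelComap e (ideal β)

lemma ideal_le_of_forall_isPrime {R : Type*} [CommRing R] {I J : Ideal R} (hJ : J.IsRadical)
    (h : ∀ Q : Ideal R, Q.IsPrime → J ≤ Q → I ≤ Q) : I ≤ J := by
  rw [← hJ.radical, Ideal.radical_eq_sInf]
  exact le_sInf fun Q hQ => h Q hQ.2 hQ.1

namespace BoundedRankFamily

variable {K : Type*} [Field K] {k : ℕ}

/-- The irreducible components of the variety of `F.ideal α`, as prime ideals. -/
abbrev components (F : BoundedRankFamily K k) (α : Type) : Set (Ideal (EntryRing K α)) :=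
  (F.ideal α).minimalPrimes

/-- `F` cuts out a family of varieties that is properly contained in that of `G`. -/
def Lt (F G : BoundedRankFamily K k) : Prop :=
  (∀ n, G.ideal (Fin n) ≤ F.ideal (Fin n)) ∧ ∃ n, G.ideal (Fin n) ≠ F.ideal (Fin n)

theorem wellFounded_lt : WellFounded (Lt (K := K) (k := k)) := by
  rw [wellFounded_iff_isEmpty_descending_chain]
  refine ⟨fun ⟨F, hF⟩ => ?_⟩
  have hmono (n : ℕ) : Monotone fun j => (F j).ideal (Fin n) :=
    monotone_nat_of_le_succ fun j => (hF j).1 n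
  choose j hj using fun n => monotone_stabilizes_iff_noetherian.2
    (inferInstance : IsNoetherianRing (EntryRing K (Fin n))) ⟨_, hmono n⟩
  obtain ⟨N, hN⟩ := exists_bound_ideal_le_of_bounded_rank (K := K) k (Col := Unit)
    (fun n _ => ⨆ j, (F j).ideal (Fin n)) fun m n _ e he => iSup_le fun j =>
      ((F j).le_relabelComap e he.injective).trans
        (relabelComap_mono _ (le_iSup (fun j => (F j).ideal (Fin n)) j))
  set J := (Finset.range (N + 1)).sup j
  have hJ (m : ℕ) (hm : m ≤ N) (i : ℕ) : (F i).ideal (Fin m) ≤ (F J).ideal (Fin m) := by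
    have hstable : (F (j m)).ideal (Fin m) = (F J).ideal (Fin m) :=
      hj m J (Finset.le_sup (Finset.mem_range.2 (by omega)))
    obtain h | h := le_total i (j m)
    · exact (hmono m h).trans hstable.le
    · exact (hj m i h).ge.trans hstable.le
  obtain ⟨n, hn⟩ := (hF J).2
  refine hn (le_antisymm ((hF J).1 n) (ideal_le_of_forall_isPrime ((F J).isRadical _)
    fun Q hQ hle => ?_))
  refine (le_iSup (fun j => (F j).ideal (Fin n)) (J + 1)).trans
    (hN n (fun _ => ()) Q hQ (fun ρ γ => hle ((F J).genericMinor_mem _ ρ γ)) fun m hm e he => ?_)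
  exact iSup_le fun i => (hJ m hm i).trans
    (((F J).le_relabelComap e he.injective).trans (relabelComap_mono e hle))

end BoundedRankFamily

end BoundedRankFamily

/-! ### Products of varieties -/

section Conjugation

lemma exists_ringHom_comp_algebraMap_eq_of_injective {R S M : Type*} [CommRing R] [CommRing S]
    [IsDomain S] [Algebra R S] [FaithfulSMul R S] [Algebra.IsIntegral R S] [Field M] [IsAlgClosed M]
    {b : R →+* M} (hb : Function.Injective b) : ∃ φ : S →+* M, φ.comp (algebraMap R S) = b := by
  let _ : Algebra R M := b.toAlgebra
  have : IsDomain R := hb.isDomain b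
  have : FaithfulSMul R M := (faithfulSMul_iff_algebraMap_injective R M).2 hb
  exact ⟨(IsAlgClosed.lift : S →ₐ[R] M), AlgHom.comp_algebraMap _⟩

lemma exists_ringHom_comp_algebraMap_eq {R S M : Type*} [CommRing R] [CommRing S] [Algebra R S]
    [Algebra.IsIntegral R S] [Field M] [IsAlgClosed M] (b : R →+* M) (I : Ideal S)
    (hI : I.comap (algebraMap R S) ≤ RingHom.ker b) :
    ∃ φ : S →+* M, φ.comp (algebraMap R S) = b ∧ I ≤ RingHom.ker φ := by
  have := RingHom.ker_isPrime b
  obtain ⟨Q, hIQ, _, hQ⟩ := Ideal.exists_ideal_over_prime_of_isIntegral (RingHom.ker b) I hI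
  have : Q.LiesOver (RingHom.ker b) := ⟨hQ.symm⟩
  obtain ⟨φ, hφ⟩ := exists_ringHom_comp_algebraMap_eq_of_injective (S := S ⧸ Q)
    (RingHom.kerLift_injective b)
  refine ⟨φ.comp (Ideal.Quotient.mk Q), RingHom.ext fun x => ?_, fun x hx => ?_⟩
  · exact DFunLike.congr_fun hφ (Ideal.Quotient.mk _ x)
  · rw [RingHom.mem_ker, RingHom.comp_apply, Ideal.Quotient.eq_zero_iff_mem.2 (hIQ hx), map_zero]

attribute [local instance] MvPolynomial.algebraMvPolynomial

variable {κ F σ : Type*} [Field κ] [Field F] [Algebra κ F]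

lemma mvPolynomial_isIntegral [Algebra.IsIntegral κ F] :
    Algebra.IsIntegral (MvPolynomial σ κ) (MvPolynomial σ F) := by
  refine ⟨fun f => ?_⟩
  induction f using MvPolynomial.induction_on with
  | C a =>
    exact ((Algebra.IsIntegral.isIntegral (R := κ) a).map
      (IsScalarTower.toAlgHom κ F (MvPolynomial σ F))).tower_top
  | add p q hp hq => exact hp.add hq
  | mul_X p i hp =>
    rw [← map_X (algebraMap κ F) i]
    exact hp.mul (isIntegral_algebraMap (R := MvPolynomial σ κ) (x := X i))

/-- Extend the generic point of `Q₂`, restricted to `κ`-polynomials, along the integral extension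
to a point of `Q₁`. The two points then differ by an automorphism of the algebraic closure `F`. -/
theorem exists_algEquiv_map_mem_of_forall_map_mem [IsAlgClosure κ F]
    (Q₁ Q₂ : Ideal (MvPolynomial σ F)) [Q₂.IsPrime]
    (h : ∀ f : MvPolynomial σ κ, map (algebraMap κ F) f ∈ Q₁ → map (algebraMap κ F) f ∈ Q₂) :
    ∃ s : F ≃ₐ[κ] F, ∀ f ∈ Q₁, map (s : F →+* F) f ∈ Q₂ := by
  have : IsAlgClosed F := IsAlgClosure.isAlgClosed κ
  have : Algebra.IsAlgebraic κ F := IsAlgClosure.isAlgebraic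
  have : Algebra.IsIntegral (MvPolynomial σ κ) (MvPolynomial σ F) := mvPolynomial_isIntegral
  let M := AlgebraicClosure Q₂.ResidueField
  let ev : MvPolynomial σ F →ₐ[F] M :=
    (IsScalarTower.toAlgHom F Q₂.ResidueField M).comp
      (IsScalarTower.toAlgHom F (MvPolynomial σ F) Q₂.ResidueField)
  have hev (f : MvPolynomial σ F) : ev f = 0 ↔ f ∈ Q₂ :=
    (map_eq_zero (algebraMap Q₂.ResidueField M)).trans Ideal.algebraMap_residueField_eq_zero
  obtain ⟨φ, hφ, hQ₁⟩ := exists_ringHom_comp_algebraMap_eq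
    ((ev : MvPolynomial σ F →+* M).comp (algebraMap (MvPolynomial σ κ) (MvPolynomial σ F)))
    Q₁ fun f hf => (hev _).2 (h f hf)
  have hφ (f : MvPolynomial σ κ) : φ (map (algebraMap κ F) f) = ev (map (algebraMap κ F) f) :=
    DFunLike.congr_fun hφ f
  let ψ : F →ₐ[κ] M :=
    { φ.comp C with
      commutes' := fun r => by
        have hr := hφ (C r)
        rw [map_C] at hr
        exact hr.trans ((ev.commutes (algebraMap κ F r)).trans
          (IsScalarTower.algebraMap_apply κ F M r).symm) }
  have hψ : (ev : MvPolynomial σ F →+* M).comp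
      (map ((ψ.restrictNormal' F : F ≃ₐ[κ] F) : F →+* F)) = φ := by
    refine ringHom_ext (fun x => ?_) fun i => ?_
    · simp only [RingHom.comp_apply, map_C]
      exact (ev.commutes (ψ.restrictNormal F x)).trans (ψ.restrictNormal_commutes F x)
    · have hX := (hφ (X i)).symm
      rw [map_X] at hX
      rw [RingHom.comp_apply, map_X]
      exact hX
  refine ⟨ψ.restrictNormal' F, fun f hf => ?_⟩
  rw [← hev]
  exact (DFunLike.congr_fun hψ f).trans (hQ₁ hf)

end Conjugation

section ProductIdeal

variable {F σ M M' : Type*} [Field F]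

/-- The ideal of the product of copies of the variety of `I`, one for each `i : M`. -/
noncomputable def blockSum {R : Type*} [CommRing R] (M : Type*) (I : Ideal (MvPolynomial σ R)) :
    Ideal (MvPolynomial (M × σ) R) :=
  ⨆ i : M, I.map (rename fun a => (i, a))

lemma rename_mk_mem_blockSum {R : Type*} [CommRing R] {I : Ideal (MvPolynomial σ R)} (i : M)
    {f : MvPolynomial σ R} (hf : f ∈ I) : rename (fun a => (i, a)) f ∈ blockSum M I :=
  Ideal.mem_iSup_of_mem i (Ideal.mem_map_of_mem _ hf)

lemma blockSum_le {R : Type*} [CommRing R] {I : Ideal (MvPolynomial σ R)}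
    {J : Ideal (MvPolynomial (M × σ) R)} (h : ∀ i, ∀ f ∈ I, rename (fun a => (i, a)) f ∈ J) :
    blockSum M I ≤ J :=
  iSup_le fun i => Ideal.map_le_iff_le_comap.2 (h i)

/-- The vanishing ideal of the product over `i : M` of the zero loci of the ideals `c i`. -/
noncomputable def productIdeal (c : M → Ideal (MvPolynomial σ F)) :
    Ideal (MvPolynomial (M × σ) F) :=
  vanishingIdeal F {x | ∀ i, (fun a => x (i, a)) ∈ zeroLocus F (c i)}

lemma mem_productIdeal {c : M → Ideal (MvPolynomial σ F)} {f : MvPolynomial (M × σ) F} :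
    f ∈ productIdeal c ↔
      ∀ x : M → σ → F, (∀ i, x i ∈ zeroLocus F (c i)) → aeval (Function.uncurry x) f = 0 :=
  ⟨fun h _ hx => h _ hx, fun h x hx => h (Function.curry x) hx⟩

lemma mem_radical_of_forall_mem_productIdeal [IsAlgClosed F] [Finite M] [Finite σ]
    (I : Ideal (MvPolynomial σ F)) (f : MvPolynomial (M × σ) F)
    (h : ∀ c : M → Ideal (MvPolynomial σ F), (∀ i, c i ∈ I.minimalPrimes) →
      f ∈ productIdeal c) :
    f ∈ (blockSum M I).radical := by
  rw [← vanishingIdeal_zeroLocus_eq_radical (K := F), mem_vanishingIdeal_iff]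
  intro x hx
  have hblock (i : M) : ∃ c ∈ I.minimalPrimes, (fun a => x (i, a)) ∈ zeroLocus F c := by
    have hle : I ≤ RingHom.ker (aeval (R := F) fun a => x (i, a)) := fun g hg => by
      have hzero := hx _ (rename_mk_mem_blockSum i hg)
      rwa [aeval_rename] at hzero
    have := RingHom.ker_isPrime (aeval (R := F) fun a => x (i, a))
    obtain ⟨c, hc, hle⟩ := Ideal.exists_minimalPrimes_le hle
    exact ⟨c, hc, hle⟩
  choose c hc hx using hblock
  exact h c hc x hx

variable [IsAlgClosed F] [Finite σ]

lemma zeroLocus_nonempty (P : Ideal (MvPolynomial σ F)) [hP : P.IsPrime] :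
    (zeroLocus F P).Nonempty := by
  by_contra h
  have hvanish := IsPrime.vanishingIdeal_zeroLocus (K := F) P
  rw [Set.not_nonempty_iff_eq_empty.1 h, vanishingIdeal_empty] at hvanish
  exact hP.ne_top hvanish.symm

lemma exists_mem_zeroLocus_aeval_update_ne_zero [DecidableEq M] (P : Ideal (MvPolynomial σ F))
    [hP : P.IsPrime] (i : M) {u v : M → σ → F} (hu : u i ∈ zeroLocus F P)
    (hv : v i ∈ zeroLocus F P) {f g : MvPolynomial (M × σ) F}
    (hf : aeval (Function.uncurry u) f ≠ 0) (hg : aeval (Function.uncurry v) g ≠ 0) :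
    ∃ z ∈ zeroLocus F P, aeval (Function.uncurry (Function.update u i z)) f ≠ 0 ∧
      aeval (Function.uncurry (Function.update v i z)) g ≠ 0 := by
  let restrict (u : M → σ → F) : MvPolynomial (M × σ) F →ₐ[F] MvPolynomial σ F :=
    aeval (Function.uncurry (Function.update (fun j a => C (u j a)) i X))
  have hrestrict (u : M → σ → F) (z : σ → F) (f : MvPolynomial (M × σ) F) :
      aeval z (restrict u f) = aeval (Function.uncurry (Function.update u i z)) f := by
    have h : (aeval z).comp (restrict u) = aeval (Function.uncurry (Function.update u i z)) := by
      ext ⟨j, a⟩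
      obtain rfl | hj := eq_or_ne j i <;> simp [restrict, *]
    exact DFunLike.congr_fun h f
  have hnotMem {u : M → σ → F} (hu : u i ∈ zeroLocus F P) {f : MvPolynomial (M × σ) F}
      (hf : aeval (Function.uncurry u) f ≠ 0) : restrict u f ∉ P := fun hm => by
    have hzero := hu _ hm
    rw [hrestrict, Function.update_eq_self] at hzero
    exact hf hzero
  have hmul : restrict u f * restrict v g ∉ P := fun h =>
    (hP.mem_or_mem h).elim (hnotMem hu hf) (hnotMem hv hg)
  rw [← IsPrime.vanishingIdeal_zeroLocus (K := F) P, mem_vanishingIdeal_iff] at hmul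
  push Not at hmul
  obtain ⟨z, hz, hne⟩ := hmul
  rw [map_mul, hrestrict, hrestrict] at hne
  exact ⟨z, hz, left_ne_zero_of_mul hne, right_ne_zero_of_mul hne⟩

/-- Points `u`, `v` of the product with `f u ≠ 0` and `g v ≠ 0` are made equal in one block after
the other. -/
theorem productIdeal_isPrime [Finite M] (c : M → Ideal (MvPolynomial σ F))
    (hc : ∀ i, (c i).IsPrime) : (productIdeal c).IsPrime := by
  classical
  choose z hz using fun i => zeroLocus_nonempty (c i)
  refine ⟨(Ideal.ne_top_iff_one _).2 fun h => by simpa using mem_productIdeal.1 h z hz,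
    fun {f g} hfg => ?_⟩
  by_contra! h
  simp only [mem_productIdeal] at h
  push Not at h
  obtain ⟨⟨u, hu, hfu⟩, v, hv, hgv⟩ := h
  have hagree (s : Finset M) : ∃ u v : M → σ → F, (∀ i, u i ∈ zeroLocus F (c i)) ∧
      (∀ i, v i ∈ zeroLocus F (c i)) ∧ aeval (Function.uncurry u) f ≠ 0 ∧
      aeval (Function.uncurry v) g ≠ 0 ∧ ∀ i ∈ s, u i = v i := by
    induction s using Finset.induction_on with
    | empty => exact ⟨u, v, hu, hv, hfu, hgv, by simp⟩
    | insert i s _ ih =>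
      obtain ⟨u, v, hu, hv, hfu, hgv, huv⟩ := ih
      obtain ⟨z, hz, hfz, hgz⟩ :=
        exists_mem_zeroLocus_aeval_update_ne_zero (c i) i (hu i) (hv i) hfu hgv
      have hupdate {u : M → σ → F} (hu : ∀ i, u i ∈ zeroLocus F (c i)) (j : M) :
          Function.update u i z j ∈ zeroLocus F (c j) := by
        obtain rfl | hj := eq_or_ne j i <;> simp [*]
      refine ⟨_, _, hupdate hu, hupdate hv, hfz, hgz, fun j hj => ?_⟩
      obtain rfl | hji := eq_or_ne j i
      · simp
      · simp [hji, huv j (Finset.mem_of_mem_insert_of_ne hj hji)]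
  have := Fintype.ofFinite M
  obtain ⟨u, v, hu, -, hfu, hgv, huv⟩ := hagree Finset.univ
  obtain rfl : u = v := funext fun i => huv i (Finset.mem_univ _)
  have hzero := mem_productIdeal.1 hfg u hu
  rw [map_mul] at hzero
  exact mul_ne_zero hfu hgv hzero

lemma rename_mem_productIdeal {c : M' → Ideal (MvPolynomial σ F)} (hc : ∀ i, (c i).IsPrime)
    {e : M → M'} (he : Function.Injective e) {f : MvPolynomial (M × σ) F} :
    rename (Prod.map e id) f ∈ productIdeal c ↔ f ∈ productIdeal (c ∘ e) := by
  classical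
  have hcomp (x : M' → σ → F) :
      Function.uncurry x ∘ Prod.map e id = Function.uncurry (x ∘ e) := rfl
  simp only [mem_productIdeal, aeval_rename, hcomp]
  refine ⟨fun h x hx => ?_, fun h x hx => h _ fun i => hx (e i)⟩
  choose z hz using fun i => zeroLocus_nonempty (c i)
  have hextend := h (Function.extend e x z) fun j => by
    by_cases hj : ∃ i, e i = j
    · obtain ⟨i, rfl⟩ := hj
      rw [he.extend_apply]
      exact hx i
    · rw [Function.extend_apply' _ _ _ hj]
      exact hz j
  rwa [Function.extend_comp he] at hextend

lemma rename_mk_mem_productIdeal {c : M → Ideal (MvPolynomial σ F)} (hc : ∀ i, (c i).IsPrime)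
    {i : M} {g : MvPolynomial σ F} :
    rename (fun a => (i, a)) g ∈ productIdeal c ↔ g ∈ c i := by
  have h := rename_mem_productIdeal hc (Function.injective_of_subsingleton fun _ : Unit => i)
    (f := rename (fun a => ((), a)) g)
  rw [rename_rename] at h
  refine h.trans ?_
  conv_rhs => rw [← IsPrime.vanishingIdeal_zeroLocus (K := F) (c i)]
  simp only [mem_productIdeal, mem_vanishingIdeal_iff, aeval_rename]
  exact ⟨fun h x hx => h (fun _ => x) fun _ => hx, fun h x hx => h _ (hx ())⟩

end ProductIdeal

section LeadingExponents

open MonomialOrder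

variable {σ : Type*} (m : MonomialOrder σ)

lemma degree_map_of_injective {B B' : Type*} [CommSemiring B] [CommSemiring B'] {φ : B →+* B'}
    (hφ : Function.Injective φ) (f : MvPolynomial σ B) : m.degree (map φ f) = m.degree f := by
  unfold MonomialOrder.degree
  rw [support_map_of_injective _ hφ]

/-- The exponents of the leading monomials of the nonzero elements of an ideal. -/
def leadingExponents {B : Type*} [CommRing B] (I : Ideal (MvPolynomial σ B)) : Set (σ →₀ ℕ) :=
  {d | ∃ f ∈ I, f ≠ 0 ∧ m.degree f = d}

variable {L : Type*} [Field L]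

lemma isUpperSet_leadingExponents (I : Ideal (MvPolynomial σ L)) :
    IsUpperSet (leadingExponents m I) := by
  classical
  rintro d e hde ⟨f, hf, hf0, rfl⟩
  have h1 : monomial (e - m.degree f) (1 : L) ≠ 0 := by simp
  refine ⟨monomial (e - m.degree f) 1 * f, I.mul_mem_left _ hf, mul_ne_zero h1 hf0, ?_⟩
  rw [degree_mul h1 hf0, degree_monomial, if_neg one_ne_zero]
  exact tsub_add_cancel_of_le hde

lemma exists_maximal_of_isUpperSet {ι A : Type*} [Nonempty ι] [Preorder A]
    [WellQuasiOrderedLE A] (D : ι → Set A) (hD : ∀ i, IsUpperSet (D i)) :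
    ∃ i, ∀ j, D i ⊆ D j → D j ⊆ D i := by
  have hwf : WellFounded fun i j : ι => D j ⊂ D i := by
    rw [wellFounded_iff_isEmpty_descending_chain]
    refine ⟨fun ⟨u, hu⟩ => ?_⟩
    have hmono : Monotone fun n => D (u n) := monotone_nat_of_le_succ fun n => (hu n).1
    choose d hd hd' using fun n => Set.exists_of_ssubset (hu n)
    obtain ⟨a, b, hab, hle⟩ := wellQuasiOrdered_le d
    exact hd' b (hmono (Nat.succ_le_of_lt hab) (hD _ hle (hd a)))
  obtain ⟨i, -, hi⟩ := hwf.has_min Set.univ Set.univ_nonempty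
  exact ⟨i, fun j hij => by_contra fun h => hi j trivial ⟨hij, h⟩⟩

lemma exists_finite_groebnerBasis [Finite σ] (I : Ideal (MvPolynomial σ L)) :
    ∃ (n : ℕ) (G : Fin n → MvPolynomial σ L), (∀ i, G i ∈ I ∧ G i ≠ 0) ∧
      ∀ d ∈ leadingExponents m I, ∃ i, m.degree (G i) ≤ d := by
  have hfin := WellQuasiOrderedLE.finite_of_isAntichain
    (setOfPred_minimal_antichain (· ∈ leadingExponents m I))
  obtain ⟨n, ⟨e⟩⟩ := finite_iff_exists_equiv_fin.1 hfin
  choose G hG using fun i : Fin n => (e.symm i).2.prop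
  refine ⟨n, G, fun i => ⟨(hG i).1, (hG i).2.1⟩, fun d hd => ?_⟩
  obtain ⟨d', hle, hmin⟩ :=
    exists_minimal_le_of_wellFoundedLT (· ∈ leadingExponents m I) d hd
  refine ⟨e ⟨d', hmin⟩, ?_⟩
  rw [(hG _).2.2]
  simpa using hle

lemma exists_mem_coeff_eq_apply {κ : Type*} [Field κ] [Algebra κ L] {I : Ideal (MvPolynomial σ κ)}
    {f : MvPolynomial σ L} (hf : f ∈ I.map (map (algebraMap κ L))) (l : L →ₗ[κ] κ) :
    ∃ g ∈ I, ∀ d, coeff d g = l (coeff d f) := by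
  induction hf using Submodule.span_induction generalizing l with
  | mem f hf =>
    obtain ⟨g, hg, rfl⟩ := hf
    refine ⟨g * C (l 1), I.mul_mem_right _ hg, fun d => ?_⟩
    rw [mul_comm, coeff_C_mul, mul_comm, coeff_map, Algebra.algebraMap_eq_smul_one, map_smul,
      smul_eq_mul]
  | zero => exact ⟨0, I.zero_mem, fun d => by rw [coeff_zero, coeff_zero, map_zero]⟩
  | add f f' _ _ hf hf' =>
    obtain ⟨g, hg, hgf⟩ := hf l
    obtain ⟨g', hg', hgf'⟩ := hf' l
    exact ⟨g + g', I.add_mem hg hg', fun d => by rw [coeff_add, coeff_add, map_add, hgf, hgf']⟩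
  | smul p f _ hf =>
    induction p using MvPolynomial.induction_on' generalizing l with
    | monomial s b =>
      obtain ⟨g, hg, hgf⟩ := hf (l ∘ₗ LinearMap.mulLeft κ b)
      refine ⟨monomial s 1 * g, I.mul_mem_left _ hg, fun d => ?_⟩
      rw [smul_eq_mul, coeff_monomial_mul', coeff_monomial_mul', hgf, one_mul, apply_ite l,
        map_zero]
      rfl
    | add p q hp hq =>
      obtain ⟨g, hg, hgf⟩ := hp l
      obtain ⟨g', hg', hgf'⟩ := hq l
      exact ⟨g + g', I.add_mem hg hg', fun d => by
        rw [add_smul, coeff_add, coeff_add, map_add, hgf, hgf']⟩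

lemma leadingExponents_map {κ : Type*} [Field κ] [Algebra κ L] (I : Ideal (MvPolynomial σ κ)) :
    leadingExponents m (I.map (map (algebraMap κ L))) = leadingExponents m I := by
  have hinj : Function.Injective (algebraMap κ L) := (algebraMap κ L).injective
  refine Set.Subset.antisymm ?_ fun d ⟨f, hf, hf0, hd⟩ => ⟨_, Ideal.mem_map_of_mem _ hf,
    (map_ne_zero_iff _ (map_injective _ hinj)).2 hf0, (degree_map_of_injective m hinj f).trans hd⟩
  rintro _ ⟨f, hf, hf0, rfl⟩
  obtain ⟨l, hl⟩ : ∃ l : L →ₗ[κ] κ, l (m.leadingCoeff f) ≠ 0 := by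
    by_contra! h
    exact leadingCoeff_ne_zero_iff.2 hf0 ((Module.forall_dual_apply_eq_zero_iff κ _).1 h)
  obtain ⟨g, hg, hgf⟩ := exists_mem_coeff_eq_apply hf l
  have hlead : coeff (m.degree f) g ≠ 0 := hgf _ ▸ hl
  refine ⟨g, hg, ne_zero_iff.2 ⟨_, hlead⟩, m.toSyn.injective (le_antisymm ?_ ?_)⟩
  · rw [degree_le_iff]
    intro d hd
    apply le_degree
    rw [mem_support_iff, hgf] at hd
    exact mem_support_iff.2 fun h => hd (by rw [h, map_zero])
  · exact le_degree (mem_support_iff.2 hlead)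

end LeadingExponents

section BlockReduction

variable {B σ τ : Type*} [CommRing B]

/-- The `B`-linear map that replaces the monomial with exponent `s` by `rem s`. -/
noncomputable def monomialSubst (rem : (σ →₀ ℕ) → MvPolynomial τ B) :
    MvPolynomial σ B →ₗ[B] MvPolynomial τ B :=
  (basisMonomials σ B).constr B rem

lemma monomialSubst_monomial (rem : (σ →₀ ℕ) → MvPolynomial τ B) (s : σ →₀ ℕ) (b : B) :
    monomialSubst rem (monomial s b) = b • rem s := by
  have hbasis := (basisMonomials σ B).constr_basis B rem s
  rw [coe_basisMonomials] at hbasis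
  rw [← mul_one b, ← smul_eq_mul, ← smul_monomial, map_smul, monomialSubst, hbasis, smul_eq_mul,
    mul_one]

lemma map_monomialSubst {B' : Type*} [CommRing B'] (φ : B →+* B')
    (rem : (σ →₀ ℕ) → MvPolynomial τ B) (f : MvPolynomial σ B) :
    map φ (monomialSubst rem f) = monomialSubst (fun d => map φ (rem d)) (map φ f) := by
  induction f using MvPolynomial.induction_on' with
  | monomial s a =>
    simp only [monomialSubst_monomial, map_monomial, smul_eq_C_mul, map_mul, map_C]
  | add p q hp hq => simp only [map_add, hp, hq]

lemma sub_monomialSubst_mem {rem : (σ →₀ ℕ) → MvPolynomial σ B} {I : Ideal (MvPolynomial σ B)}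
    (h : ∀ d, monomial d 1 - rem d ∈ I) (f : MvPolynomial σ B) : f - monomialSubst rem f ∈ I := by
  induction f using MvPolynomial.induction_on' with
  | monomial s a =>
    have hmonomial : monomial s a = a • (monomial s 1 : MvPolynomial σ B) := by
      rw [smul_monomial, smul_eq_mul, mul_one]
    rw [monomialSubst_monomial, hmonomial, ← smul_sub, smul_eq_C_mul]
    exact I.mul_mem_left _ (h s)
  | add p q hp hq =>
    rw [map_add, add_sub_add_comm]
    exact I.add_mem hp hq

lemma coeff_monomialSubst_eq_zero {rem : (σ →₀ ℕ) → MvPolynomial τ B} {e : τ →₀ ℕ}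
    (h : ∀ d, coeff e (rem d) = 0) (f : MvPolynomial σ B) : coeff e (monomialSubst rem f) = 0 := by
  induction f using MvPolynomial.induction_on' with
  | monomial s a => rw [monomialSubst_monomial, coeff_smul, h, smul_zero]
  | add p q hp hq => rw [map_add, coeff_add, hp, hq, add_zero]

lemma monomialSubst_eq_zero_of_mem {m : MonomialOrder σ} {rem : (σ →₀ ℕ) → MvPolynomial σ B}
    {I : Ideal (MvPolynomial σ B)} (hmem : ∀ d, monomial d 1 - rem d ∈ I)
    (hcoeff : ∀ e ∈ leadingExponents m I, ∀ d, coeff e (rem d) = 0) {f : MvPolynomial σ B}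
    (hf : f ∈ I) : monomialSubst rem f = 0 := by
  by_contra hne
  have hsubst : monomialSubst rem f ∈ I := by
    simpa only [sub_sub_cancel] using I.sub_mem hf (sub_monomialSubst_mem hmem f)
  exact m.coeff_degree_ne_zero_iff.2 hne
    (coeff_monomialSubst_eq_zero (hcoeff _ ⟨_, hsubst, hne, rfl⟩) f)

lemma exists_remainder {ι : Type*} {m : MonomialOrder σ} {I : Ideal (MvPolynomial σ B)}
    {G : ι → MvPolynomial σ B} (hunit : ∀ i, IsUnit (m.leadingCoeff (G i))) (hG : ∀ i, G i ∈ I)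
    (d : σ →₀ ℕ) : ∃ r, monomial d 1 - r ∈ I ∧ ∀ i c, m.degree (G i) ≤ c → coeff c r = 0 := by
  obtain ⟨g, r, hdiv, -, hr⟩ := m.div hunit (monomial d 1)
  refine ⟨r, ?_, fun i c hc => by_contra fun h => hr c (mem_support_iff.2 h) i hc⟩
  rw [hdiv, add_sub_cancel_right, Finsupp.linearCombination_apply]
  exact Ideal.sum_mem _ fun i _ => I.mul_mem_left _ (hG i)

variable {M : Type*}

lemma mapDomain_prodMk_apply [DecidableEq M] (i j : M) (d : σ →₀ ℕ) (a : σ) :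
    Finsupp.mapDomain (fun a => (i, a)) d (j, a) = if j = i then d a else 0 := by
  split_ifs with h
  · subst h
    exact Finsupp.mapDomain_apply (Prod.mk_right_injective j) d a
  · exact Finsupp.mapDomain_of_notMem_range _ _ fun ⟨b, hb⟩ => h (Prod.ext_iff.1 hb).1.symm

section Fintype

variable [Fintype M]

/-- Reduction in all blocks at once: monomials in the variables `x_{i,a}` are products of monomials
in the blocks `x_{i,·}`, and `rem` is applied to each factor. -/
noncomputable def blockProduct (rem : (σ →₀ ℕ) → MvPolynomial σ B) (s : M × σ →₀ ℕ) :
    MvPolynomial (M × σ) B :=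
  ∏ i : M, rename (fun a => (i, a)) (rem (Finsupp.curry s i))

lemma blockProduct_monomial (s : M × σ →₀ ℕ) :
    blockProduct (fun d => monomial d (1 : B)) s = monomial s 1 := by
  classical
  simp only [blockProduct, rename_monomial]
  rw [← monomial_sum_one]
  congr 2
  ext ⟨j, a⟩
  simp [Finsupp.finsetSum_apply, mapDomain_prodMk_apply]

lemma monomial_sub_blockProduct_mem {rem : (σ →₀ ℕ) → MvPolynomial σ B}
    {I : Ideal (MvPolynomial σ B)} (h : ∀ d, monomial d 1 - rem d ∈ I) (s : M × σ →₀ ℕ) :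
    monomial s 1 - blockProduct rem s ∈ blockSum M I := by
  rw [← blockProduct_monomial, blockProduct, blockProduct, ← Ideal.Quotient.eq, map_prod, map_prod]
  refine Finset.prod_congr rfl fun i _ => ?_
  rw [Ideal.Quotient.eq, ← map_sub]
  exact rename_mk_mem_blockSum i (h _)

lemma monomialSubst_blockProduct_mul [DecidableEq M] (rem : (σ →₀ ℕ) → MvPolynomial σ B) (i : M)
    (s : M × σ →₀ ℕ) (b : B) (g : MvPolynomial σ B) :
    monomialSubst (blockProduct rem) (monomial s b * rename (fun a => (i, a)) g) =
      b • (rename (fun a => (i, a)) (monomialSubst rem (monomial (Finsupp.curry s i) 1 * g)) *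
        ∏ j ∈ Finset.univ.erase i, rename (fun a => (j, a)) (rem (Finsupp.curry s j))) := by
  induction g using MvPolynomial.induction_on' with
  | monomial d a =>
    rw [rename_monomial, monomial_mul, monomial_mul, monomialSubst_monomial, blockProduct,
      monomialSubst_monomial, ← Finset.mul_prod_erase _ _ (Finset.mem_univ i), one_mul, map_smul,
      smul_mul_assoc, smul_smul]
    congr 2
    · congr 2
      ext c
      simp [Finsupp.curry_apply, mapDomain_prodMk_apply]
    · refine Finset.prod_congr rfl fun j hj => ?_
      congr 2
      ext c
      simp [Finsupp.curry_apply, mapDomain_prodMk_apply, Finset.ne_of_mem_erase hj]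
  | add p q hp hq => simp only [map_add, mul_add, add_mul, hp, hq, smul_add]

lemma monomialSubst_blockProduct_eq_zero_of_mem {rem : (σ →₀ ℕ) → MvPolynomial σ B}
    {I : Ideal (MvPolynomial σ B)} (h : ∀ f ∈ I, monomialSubst rem f = 0)
    {f : MvPolynomial (M × σ) B} (hf : f ∈ blockSum M I) :
    monomialSubst (blockProduct rem) f = 0 := by
  classical
  let J : Ideal (MvPolynomial (M × σ) B) :=
    { carrier := {f | ∀ y, monomialSubst (blockProduct rem) (y * f) = 0}
      add_mem' := fun hf hg y => by rw [mul_add, map_add, hf, hg, add_zero]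
      zero_mem' := fun y => by rw [mul_zero, map_zero]
      smul_mem' := fun a f hf y => by rw [smul_eq_mul, ← mul_assoc, hf] }
  have hJ : blockSum M I ≤ J := blockSum_le fun i g hg y => by
    induction y using MvPolynomial.induction_on' with
    | monomial s b =>
      rw [monomialSubst_blockProduct_mul, h _ (I.mul_mem_left _ hg), map_zero, zero_mul, smul_zero]
    | add p q hp hq => rw [add_mul, map_add, hp, hq, add_zero]
  simpa only [one_mul] using hJ hf 1

end Fintype

/-- If the leading monomials of an ideal over a field are represented by elements of `I` with unit
leading coefficients, then membership in `blockSum M I` can be tested over the field. -/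
theorem mem_blockSum_of_map_mem [Finite M] {κ ι : Type*} [Field κ] {φ : B →+* κ}
    (hφ : Function.Injective φ) {m : MonomialOrder σ} {I : Ideal (MvPolynomial σ B)}
    {I' : Ideal (MvPolynomial σ κ)} (hI : I.map (map φ) ≤ I') {G : ι → MvPolynomial σ B}
    (hunit : ∀ i, IsUnit (m.leadingCoeff (G i))) (hG : ∀ i, G i ∈ I)
    (hlead : ∀ d ∈ leadingExponents m I', ∃ i, m.degree (G i) ≤ d)
    {f : MvPolynomial (M × σ) B} (hf : map φ f ∈ blockSum M I') : f ∈ blockSum M I := by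
  have := Fintype.ofFinite M
  choose rem hmem hcoeff using exists_remainder hunit hG
  have hzero (g : MvPolynomial σ κ) (hg : g ∈ I') :
      monomialSubst (fun d => map φ (rem d)) g = 0 :=
    monomialSubst_eq_zero_of_mem (m := m)
      (fun d => by simpa using hI (Ideal.mem_map_of_mem _ (hmem d)))
      (fun e he d => by
        obtain ⟨i, hi⟩ := hlead e he
        rw [coeff_map, hcoeff d i e hi, map_zero]) hg
  have hf0 : monomialSubst (blockProduct rem) f = 0 := by
    apply map_injective φ hφ
    rw [map_monomialSubst, map_zero, ← monomialSubst_blockProduct_eq_zero_of_mem hzero hf]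
    congr
    funext s
    simp only [blockProduct, map_prod, map_rename]
  simpa only [hf0, sub_zero] using sub_monomialSubst_mem (monomial_sub_blockProduct_mem hmem) f

end BlockReduction

/-! ### Adding rows to a matrix -/

section ExtendEval

lemma sumElim_factor_comp {L B S M ι : Type*} (φ : L → B) (u : S → ι → L) (v : M → ι → L) :
    (fun i a => φ (Sum.elim u v i a)) = Sum.elim (fun s a => φ (u s a)) fun i a => φ (v i a) := by
  funext i
  cases i <;> rfl

variable {K L B S M M' σ τ : Type*} [CommRing K] [CommRing L] [Algebra K L] [CommRing B]
  [Algebra K B] {r : ℕ}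

/-- Evaluation at the matrix `U * Vᵀ` whose rows indexed by `S` are given by the constants `y`, and
whose rows indexed by `M` are given by the variables `v`. -/
noncomputable def extendEval (y : S → Fin (r + r) → L) (v : M → Fin (r + r) → σ) :
    EntryRing K (S ⊕ M) →ₐ[K] MvPolynomial σ L :=
  factorEval (Sum.elim (fun s a => C (y s a)) fun i a => X (v i a))

/-- `extendEval` for independent variables in all rows indexed by `M`. -/
noncomputable abbrev blockEval (y : S → Fin (r + r) → L) :
    EntryRing K (S ⊕ M) →ₐ[K] MvPolynomial (M × Fin (r + r)) L :=
  extendEval y Prod.mk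

/-- `extendEval` for a single additional row. -/
noncomputable abbrev rowEval (y : S → Fin (r + r) → L) :
    EntryRing K (S ⊕ Unit) →ₐ[K] MvPolynomial (Fin (r + r)) L :=
  extendEval y fun _ => id

lemma aevalTower_extendEval (φ : L →ₐ[K] B) (x : σ → B) (y : S → Fin (r + r) → L)
    (v : M → Fin (r + r) → σ) (f : EntryRing K (S ⊕ M)) :
    aevalTower φ x (extendEval y v f) =
      factorEval (Sum.elim (fun s a => φ (y s a)) fun i a => x (v i a)) f := by
  rw [extendEval, map_factorEval, sumElim_factor_comp]
  simp only [aevalTower_C, aevalTower_X]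

lemma map_extendEval (φ : L →ₐ[K] B) (y : S → Fin (r + r) → L) (v : M → Fin (r + r) → σ)
    (f : EntryRing K (S ⊕ M)) :
    map (φ : L →+* B) (extendEval y v f) = extendEval (fun s a => φ (y s a)) v f := by
  change mapAlgHom φ (extendEval y v f) = _
  rw [extendEval, extendEval, map_factorEval, sumElim_factor_comp]
  simp only [mapAlgHom_apply, map_C, map_X, RingHom.coe_coe]

lemma rename_extendEval (e : σ → τ) (y : S → Fin (r + r) → L) (v : M → Fin (r + r) → σ)
    (f : EntryRing K (S ⊕ M)) :
    rename e (extendEval y v f) = extendEval y (fun i a => e (v i a)) f := by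
  change (rename (R := L) e).restrictScalars K (extendEval y v f) = _
  rw [extendEval, extendEval, map_factorEval, sumElim_factor_comp]
  simp only [AlgHom.restrictScalars_apply, rename_C, rename_X]

lemma extendEval_relabel (e : M' → M) (y : S → Fin (r + r) → L) (v : M → Fin (r + r) → σ)
    (f : EntryRing K (S ⊕ M')) :
    extendEval y v (relabel (Sum.map id e) f) = extendEval y (v ∘ e) f := by
  rw [extendEval, extendEval, factorEval_relabel, Sum.elim_comp_map]
  rfl

lemma blockEval_relabel (e : M → M') (y : S → Fin (r + r) → L) (f : EntryRing K (S ⊕ M)) :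
    blockEval y (relabel (Sum.map id e) f) = rename (Prod.map e id) (blockEval y f) := by
  rw [extendEval_relabel, rename_extendEval]
  rfl

lemma blockEval_relabel_const (i : M) (y : S → Fin (r + r) → L) (f : EntryRing K (S ⊕ Unit)) :
    blockEval y (relabel (Sum.map id fun _ => i) f) = rename (fun a => (i, a)) (rowEval y f) := by
  rw [extendEval_relabel, rename_extendEval]
  rfl

lemma extendEval_relabel_inl (y : S → Fin (r + r) → L) (v : M → Fin (r + r) → σ)
    (f : EntryRing K S) : extendEval y v (relabel Sum.inl f) = C (factorEval y f) := by
  change _ = (Algebra.ofId L (MvPolynomial σ L)).restrictScalars K (factorEval y f)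
  rw [extendEval, factorEval_relabel, map_factorEval]
  rfl

/-- The equations that the ideal `I` imposes on a single additional row, when the rows indexed by
`S` are given by `y`. -/
noncomputable def rowIdeal (I : Ideal (EntryRing K (S ⊕ Unit))) (y : S → Fin (r + r) → L) :
    Ideal (MvPolynomial (Fin (r + r)) L) :=
  I.map (rowEval y)

lemma rowEval_mem_rowIdeal {I : Ideal (EntryRing K (S ⊕ Unit))} (y : S → Fin (r + r) → L)
    {f : EntryRing K (S ⊕ Unit)} (hf : f ∈ I) : rowEval y f ∈ rowIdeal I y :=
  Ideal.mem_map_of_mem _ hf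

lemma map_rowIdeal (φ : L →ₐ[K] B) (I : Ideal (EntryRing K (S ⊕ Unit)))
    (y : S → Fin (r + r) → L) :
    (rowIdeal I y).map (map (φ : L →+* B)) = rowIdeal I fun s a => φ (y s a) := by
  rw [rowIdeal, rowIdeal]
  change Ideal.map (mapAlgHom φ) _ = _
  rw [Ideal.map_mapₐ]
  congr 1
  exact AlgHom.ext (map_extendEval φ y _)

lemma aevalTower_eq_zero_of_mem_blockSum {I : Ideal (EntryRing K (S ⊕ Unit))}
    {I' : Ideal (EntryRing K (S ⊕ M))} (hI : ∀ i, I ≤ relabelComap (Sum.map id fun _ => i) I')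
    (ψ : L →ₐ[K] B) (y : S → Fin (r + r) → L) (x : M → Fin (r + r) → B)
    (hx : ∀ f ∈ I', factorEval (Sum.elim (fun s a => ψ (y s a)) x) f = 0)
    {q : MvPolynomial (M × Fin (r + r)) L} (hq : q ∈ blockSum M (rowIdeal I y)) :
    aevalTower ψ (Function.uncurry x) q = 0 := by
  suffices h : blockSum M (rowIdeal I y) ≤ RingHom.ker (aevalTower ψ (Function.uncurry x)) from h hq
  refine blockSum_le fun i g hg => ?_
  induction hg using Submodule.span_induction with
  | mem g hg =>
    obtain ⟨f, hf, rfl⟩ := hg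
    change aevalTower ψ _ (rename _ (rowEval y f)) = 0
    rw [← blockEval_relabel_const, aevalTower_extendEval]
    exact hx _ (hI i hf)
  | zero => simp
  | add f g _ _ hf hg => simpa using add_mem hf hg
  | smul q g _ hg => simpa using Ideal.mul_mem_left _ _ hg

end ExtendEval

section ResidueField

variable {R : Type*} [CommRing R] (P : Ideal R) [P.IsPrime]

lemma exists_mul_algebraMap_residueField_eq (x : P.ResidueField) :
    ∃ a, ∃ b ∉ P, x * algebraMap R P.ResidueField b = algebraMap R P.ResidueField a := by
  obtain ⟨a, b, hb, rfl⟩ := IsFractionRing.div_surjective (R ⧸ P) x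
  obtain ⟨a, rfl⟩ := Ideal.Quotient.mk_surjective a
  obtain ⟨b, rfl⟩ := Ideal.Quotient.mk_surjective b
  have hb : b ∉ P := mt Ideal.Quotient.eq_zero_iff_mem.2 (nonZeroDivisors.ne_zero hb)
  exact ⟨a, b, hb, div_mul_cancel₀ _ (mt Ideal.algebraMap_residueField_eq_zero.1 hb)⟩

/-- The localization `(R ⧸ P)[1/h]` as a subalgebra of the residue field at `P`. -/
noncomputable def awaySubalgebra (K : Type*) [CommRing K] [Algebra K R] {h : R} (hh : h ∉ P) :
    Subalgebra K P.ResidueField :=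
  (Localization.subalgebra.ofField P.ResidueField (Submonoid.powers (Ideal.Quotient.mk P h))
    (powers_le_nonZeroDivisors_of_noZeroDivisors
      (mt Ideal.Quotient.eq_zero_iff_mem.1 hh))).restrictScalars K

variable {K : Type*} [CommRing K] [Algebra K R] {P} {h : R} (hh : h ∉ P)

lemma mem_awaySubalgebra {x : P.ResidueField} : x ∈ awaySubalgebra P K hh ↔
    ∃ a m, x * algebraMap R P.ResidueField h ^ m = algebraMap R P.ResidueField a := by
  have hne (m : ℕ) : algebraMap R P.ResidueField h ^ m ≠ 0 :=
    pow_ne_zero m (mt Ideal.algebraMap_residueField_eq_zero.1 hh)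
  constructor
  · rintro ⟨a, s, ⟨m, rfl⟩, rfl⟩
    obtain ⟨a, rfl⟩ := Ideal.Quotient.mk_surjective a
    refine ⟨a, m, ?_⟩
    rw [map_pow]
    exact inv_mul_cancel_right₀ (hne m) _
  · rintro ⟨a, m, hx⟩
    refine ⟨Ideal.Quotient.mk P a, _, ⟨m, rfl⟩, ?_⟩
    rw [map_pow]
    exact (eq_mul_inv_iff_mul_eq₀ (hne m)).2 hx

lemma exists_notMem_subset_awaySubalgebra (K : Type*) [CommRing K] [Algebra K R]
    (T : Finset P.ResidueField) :
    ∃ b ∉ P, ∀ h, ∀ hh : h ∉ P, b ∣ h → ∀ x ∈ T, x ∈ awaySubalgebra P K hh := by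
  obtain ⟨⟨b, hb⟩, hT⟩ :=
    IsLocalization.exist_integer_multiples_of_finset (nonZeroDivisors (R ⧸ P)) T
  obtain ⟨b, rfl⟩ := Ideal.Quotient.mk_surjective b
  refine ⟨b, mt Ideal.Quotient.eq_zero_iff_mem.2 (nonZeroDivisors.ne_zero hb), ?_⟩
  rintro _ hh ⟨c, rfl⟩ x hx
  obtain ⟨a, ha⟩ := hT x hx
  obtain ⟨a, rfl⟩ := Ideal.Quotient.mk_surjective a
  refine (mem_awaySubalgebra hh).2 ⟨c * a, 1, ?_⟩
  have ha : algebraMap R P.ResidueField a = algebraMap R P.ResidueField b * x :=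
    ha.trans (Algebra.smul_def _ x)
  rw [pow_one, map_mul, map_mul, ha]
  ring

lemma exists_algHom_awaySubalgebra {L : Type*} [Field L] [Algebra K L] (g : R →ₐ[K] L)
    (hP : P ≤ RingHom.ker g) (hg : g h ≠ 0) :
    ∃ ψ : awaySubalgebra P K hh →ₐ[K] L,
      ∀ f, ∀ x : awaySubalgebra P K hh, (x : P.ResidueField) = algebraMap R _ f → ψ x = g f := by
  let A := Localization.subalgebra.ofField P.ResidueField
    (Submonoid.powers (Ideal.Quotient.mk P h)) (powers_le_nonZeroDivisors_of_noZeroDivisors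
      (mt Ideal.Quotient.eq_zero_iff_mem.1 hh))
  let g' : R ⧸ P →ₐ[K] L := Ideal.Quotient.liftₐ P g hP
  have hunit (s : Submonoid.powers (Ideal.Quotient.mk P h)) : IsUnit (g' s) := by
    obtain ⟨_, m, rfl⟩ := s
    rw [map_pow]
    exact (isUnit_iff_ne_zero.2 hg).pow m
  refine ⟨(IsLocalization.liftAlgHom hunit : A →ₐ[K] L), fun f (x : A) hx => ?_⟩
  have hx : x = algebraMap (R ⧸ P) A (Ideal.Quotient.mk P f) := Subtype.ext hx
  exact (congrArg _ hx).trans (IsLocalization.lift_eq (S := A) hunit _)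

end ResidueField

section ResidueFactor

variable {K α : Type*} [Field K] {r : ℕ}

theorem exists_residueField_normalized_factor (P : Ideal (EntryRing K α)) [P.IsPrime]
    {ρ γ : Fin r → α} (hP : ∀ ρ' γ' : Fin (r + 1) → α, genericMinor ρ' γ' ∈ P)
    (hργ : genericMinor ρ γ ∉ P) :
    ∃ y : α → Fin (r + r) → P.ResidueField, IsNormalized γ y ∧
      ∀ f : EntryRing K α, factorEval y f = algebraMap _ P.ResidueField f := by
  set A : Matrix α α P.ResidueField := Matrix.of fun i j => algebraMap (EntryRing K α) _ (X (i, j))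
  have hdet {n : ℕ} (ρ γ : Fin n → α) : (A.submatrix ρ γ).det =
      algebraMap (EntryRing K α) P.ResidueField (genericMinor ρ γ) :=
    (map_genericMinor _ _ _).symm
  have hA : (A.submatrix ρ γ).det ≠ 0 := by
    rwa [hdet, Ne, Ideal.algebraMap_residueField_eq_zero]
  obtain ⟨y, hy⟩ := IsCramerFactor.exists_of_isUnit_det (isUnit_iff_ne_zero.2 hA)
  refine ⟨y, hy.isNormalized hA, fun f => ?_⟩
  have hfactor : factorProduct y = A := hy.factorProduct_eq hA fun ρ' γ' => by
    rw [hdet, Ideal.algebraMap_residueField_eq_zero]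
    exact hP ρ' γ'
  have hev : factorEval y = IsScalarTower.toAlgHom K (EntryRing K α) P.ResidueField := by
    ext p
    rw [factorEval_X, hfactor]
    rfl
  rw [hev]
  rfl

lemma IsNormalized.map_eq_of_map_factorEval {B L : Type*} [CommRing B] [Algebra K B] [Field L]
    [Algebra K L] {ρ γ : Fin r → α} {y : α → Fin (r + r) → B} {w : α → Fin (r + r) → L}
    (hy : IsNormalized γ y) (hw : IsNormalized γ w) (ψ : B →ₐ[K] L)
    (h : ∀ f, ψ (factorEval y f) = factorEval (K := K) w f)
    (hργ : factorEval (K := K) w (genericMinor ρ γ) ≠ 0) (s : α) (a : Fin (r + r)) :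
    ψ (y s a) = w s a := by
  have hfactor : (factorProduct fun s a => ψ (y s a)) = factorProduct w := by
    ext s t
    have hst : ψ (factorProduct y s t) = factorProduct w s t := by
      simpa only [factorEval_X] using h (X (s, t))
    rw [← hst]
    exact (congrFun (congrFun (map_factorProduct (ψ : B →+* L) y) s) t).symm
  refine congrFun (congrFun ((hy.map (ψ : B →+* L)).eq_of_factorProduct_eq hw hfactor (ρ := ρ) ?_)
    s) a
  change ((factorProduct fun s a => ψ (y s a)).submatrix ρ γ).det ≠ 0
  rwa [hfactor, ← factorEval_genericMinor (K := K)]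

end ResidueFactor

section Adjoin

variable {K L S M : Type*} [CommRing K] [Field L] [Algebra K L] {r : ℕ} {ρ γ : Fin r → S}
  {y : S → Fin (r + r) → L}

lemma adjoin_range_blockEval (hy : IsNormalized γ y)
    (hdet : ((factorProduct y).submatrix ρ γ).det ≠ 0) :
    Algebra.adjoin L (Set.range (blockEval (K := K) (M := M) y)) = ⊤ := by
  let V : S ⊕ M → Fin (r + r) → MvPolynomial (M × Fin (r + r)) L :=
    Sum.elim (fun s a => C (y s a)) fun i a => X (i, a)
  set D := (factorProduct y).submatrix ρ γ with hD
  have hentry (s t : S ⊕ M) : factorProduct V s t ∈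
      Algebra.adjoin L (Set.range (blockEval (K := K) (M := M) y)) :=
    Algebra.subset_adjoin ⟨X (s, t), factorEval_X V (s, t)⟩
  have hV : IsCramerFactor (Sum.inl ∘ ρ) (Sum.inl ∘ γ) (factorProduct V) V :=
    .of_isNormalized (hy.map (C (σ := M × Fin (r + r))))
  have hDV : (factorProduct V).submatrix (Sum.inl ∘ ρ) (Sum.inl ∘ γ) = D.map C := by
    rw [hD, ← Matrix.submatrix_map, map_factorProduct]
    rfl
  rw [eq_top_iff, ← adjoin_range_X, Algebra.adjoin_le_iff]
  rintro _ ⟨⟨i, c⟩, rfl⟩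
  induction c using Fin.addCases with
  | left a =>
    change V (Sum.inr i) (Fin.castAdd r a) ∈ _
    rw [hV.left]
    exact hentry _ _
  | right b =>
    have hinv : (D⁻¹.map C) * D.map C = (1 : Matrix _ _ (MvPolynomial (M × Fin (r + r)) L)) := by
      rw [← Matrix.map_mul, Matrix.nonsing_inv_mul _ (isUnit_iff_ne_zero.2 hdet)]
      exact Matrix.map_one _ C_0 C_1
    have hsolve : (fun b => V (Sum.inr i) (Fin.natAdd r b)) =
        (D⁻¹.map C).mulVec fun a => factorProduct V (Sum.inl (ρ a)) (Sum.inr i) := calc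
      _ = (D⁻¹.map C).mulVec ((D.map C).mulVec fun b => V (Sum.inr i) (Fin.natAdd r b)) := by
        rw [Matrix.mulVec_mulVec, hinv, Matrix.one_mulVec]
      _ = _ := by
        rw [← hDV, hV.right]
        rfl
    change V (Sum.inr i) (Fin.natAdd r b) ∈ _
    rw [congrFun hsolve b]
    refine Subalgebra.sum_mem (Algebra.adjoin L _) (t := Finset.univ) fun (a : Fin r) _ => ?_
    exact Subalgebra.mul_mem _ (Subalgebra.algebraMap_mem _ (D⁻¹ b a)) (hentry _ _)

end Adjoin

section Chart

variable {K : Type*} [Field K] {k r : ℕ}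

/-- A component `prime` of the variety of `F.ideal S` whose generic matrix has rank `r`, together
with an invertible `r × r` submatrix of that generic matrix. -/
structure Chart (F : BoundedRankFamily K k) (r : ℕ) where
  S : Type
  [finite : Finite S]
  ρ : Fin r → S
  γ : Fin r → S
  prime : Ideal (EntryRing K S)
  mem_components : prime ∈ F.components S
  minor_notMem : genericMinor ρ γ ∉ prime
  minor_mem : ∀ ρ' γ' : Fin (r + 1) → S, genericMinor ρ' γ' ∈ prime

attribute [instance] Chart.finite

namespace Chart

variable {F : BoundedRankFamily K k} (d : Chart F r)

instance isPrime_prime : d.prime.IsPrime := d.mem_components.1.1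

/-- The normalized factor of the generic matrix of the component `d.prime`. -/
noncomputable def factor : d.S → Fin (r + r) → d.prime.ResidueField :=
  (exists_residueField_normalized_factor d.prime d.minor_mem d.minor_notMem).choose

lemma isNormalized_factor : IsNormalized d.γ d.factor :=
  (exists_residueField_normalized_factor d.prime d.minor_mem d.minor_notMem).choose_spec.1

lemma factorEval_factor (f : EntryRing K d.S) :
    factorEval d.factor f = algebraMap _ d.prime.ResidueField f :=
  (exists_residueField_normalized_factor d.prime d.minor_mem d.minor_notMem).choose_spec.2 f

lemma factorEval_factor_eq_zero {f : EntryRing K d.S} :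
    factorEval d.factor f = 0 ↔ f ∈ d.prime := by
  rw [factorEval_factor, Ideal.algebraMap_residueField_eq_zero]

lemma exists_algHom_factor_eq {L : Type*} [Field L] [Algebra K L] {w : d.S → Fin (r + r) → L}
    (hw : IsNormalized d.γ w) (hker : ∀ f, factorEval (K := K) w f = 0 ↔ f ∈ d.prime) :
    ∃ φ : d.prime.ResidueField →ₐ[K] L, ∀ s a, φ (d.factor s a) = w s a := by
  let φ : d.prime.ResidueField →ₐ[K] L := Ideal.ResidueField.liftₐ d.prime (factorEval w)
    (fun f hf => (hker f).2 hf) fun f hf => isUnit_iff_ne_zero.2 (mt (hker f).1 hf)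
  refine ⟨φ, d.isNormalized_factor.map_eq_of_map_factorEval hw φ (fun f => ?_)
    (mt (hker _).1 d.minor_notMem)⟩
  rw [factorEval_factor]
  exact Ideal.ResidueField.liftₐ_algebraMap d.prime _ _ _ _

/-- An algebraic closure of the function field of the component `d.prime`. -/
abbrev GeomField : Type _ := AlgebraicClosure d.prime.ResidueField

/-- The geometric generic point `d.factor`, over `d.GeomField`. -/
noncomputable def geomFactor : d.S → Fin (r + r) → d.GeomField :=
  fun s a => algebraMap d.prime.ResidueField _ (d.factor s a)

lemma factorEval_geomFactor (f : EntryRing K d.S) :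
    factorEval d.geomFactor f = algebraMap _ d.GeomField (factorEval d.factor f) :=
  (map_factorEval (IsScalarTower.toAlgHom K d.prime.ResidueField d.GeomField) d.factor f).symm

lemma factorEval_geomFactor_eq_zero {f : EntryRing K d.S} :
    factorEval d.geomFactor f = 0 ↔ f ∈ d.prime := by
  rw [factorEval_geomFactor, map_eq_zero, factorEval_factor_eq_zero]

lemma map_blockEval_factor {M : Type*} (f : EntryRing K (d.S ⊕ M)) :
    map (algebraMap _ d.GeomField) (blockEval d.factor f) = blockEval d.geomFactor f :=
  map_extendEval (IsScalarTower.toAlgHom K d.prime.ResidueField d.GeomField) d.factor _ f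

/-- The ideal of the possible additional rows over the generic point of `d.prime`. -/
noncomputable abbrev fibre : Ideal (MvPolynomial (Fin (r + r)) d.prime.ResidueField) :=
  rowIdeal (F.ideal (d.S ⊕ Unit)) d.factor

/-- The ideal of the possible additional rows over the geometric generic point of `d.prime`. -/
noncomputable abbrev geomFibre : Ideal (MvPolynomial (Fin (r + r)) d.GeomField) :=
  rowIdeal (F.ideal (d.S ⊕ Unit)) d.geomFactor

lemma map_fibre : d.fibre.map (map (algebraMap _ d.GeomField)) = d.geomFibre :=
  map_rowIdeal (IsScalarTower.toAlgHom K d.prime.ResidueField d.GeomField) _ d.factor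

/-- The irreducible components of the geometric generic fibre, which serve as the colours of the
additional rows. -/
abbrev Color : Type _ := d.geomFibre.minimalPrimes

instance : Finite d.Color := (Ideal.finite_minimalPrimes_of_isNoetherianRing _ _).to_subtype

lemma isPrime_color (c : d.Color) : c.1.IsPrime := c.2.1.1

/-- The prime ideal of the variety of matrices whose rows indexed by `d.S` are as in `d.prime`, and
whose row `i` lies in the component `c i` of the fibre. -/
noncomputable def colorPrime {M : Type*} (c : M → d.Color) : Ideal (EntryRing K (d.S ⊕ M)) :=
  (productIdeal fun i => (c i).1).comap (blockEval d.geomFactor)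

lemma mem_colorPrime {M : Type*} {c : M → d.Color} {f : EntryRing K (d.S ⊕ M)} :
    f ∈ d.colorPrime c ↔ blockEval d.geomFactor f ∈ productIdeal fun i => (c i).1 :=
  Iff.rfl

instance isPrime_productIdeal_color {M : Type*} [Finite M] (c : M → d.Color) :
    (productIdeal fun i => (c i).1).IsPrime :=
  productIdeal_isPrime _ fun i => d.isPrime_color (c i)

instance isPrime_colorPrime {M : Type*} [Finite M] (c : M → d.Color) : (d.colorPrime c).IsPrime :=
  Ideal.comap_isPrime _ _

lemma relabelComap_colorPrime {M M' : Type*} [Finite M] [Finite M'] {e : M → M'}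
    (he : Function.Injective e) (c : M' → d.Color) :
    relabelComap (Sum.map id e) (d.colorPrime c) = d.colorPrime (c ∘ e) := by
  ext f
  rw [mem_relabelComap, mem_colorPrime, mem_colorPrime, blockEval_relabel,
    rename_mem_productIdeal (fun i => d.isPrime_color (c i)) he]
  rfl

lemma C_mem_productIdeal_color {M : Type*} [Finite M] (c : M → d.Color) {x : d.GeomField} :
    C x ∈ (productIdeal fun i => (c i).1) ↔ x = 0 := by
  refine ⟨fun hx => by_contra fun hx0 => ?_, fun hx => by simp [hx]⟩
  exact (d.isPrime_productIdeal_color c).ne_top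
    (Ideal.eq_top_of_isUnit_mem _ hx ((isUnit_iff_ne_zero.2 hx0).map C))

lemma relabel_inl_mem_colorPrime {M : Type*} [Finite M] (c : M → d.Color) {f : EntryRing K d.S} :
    relabel Sum.inl f ∈ d.colorPrime c ↔ f ∈ d.prime := by
  rw [mem_colorPrime, extendEval_relabel_inl, C_mem_productIdeal_color,
    factorEval_geomFactor_eq_zero]

lemma exists_blockEval_eq_C_mul {M : Type*}
    (q : MvPolynomial (M × Fin (r + r)) d.prime.ResidueField) :
    ∃ b ∉ d.prime, ∃ f : EntryRing K (d.S ⊕ M),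
      blockEval d.factor f = C (factorEval d.factor b) * q := by
  have hdet : ((factorProduct d.factor).submatrix d.ρ d.γ).det ≠ 0 := by
    rw [← factorEval_genericMinor (K := K), Ne, factorEval_factor_eq_zero]
    exact d.minor_notMem
  have hmul {b b' : EntryRing K d.S} (hb : b ∉ d.prime) (hb' : b' ∉ d.prime) : b * b' ∉ d.prime :=
    d.prime.primeCompl.mul_mem hb hb'
  have hq : q ∈ Algebra.adjoin _ (Set.range (blockEval (K := K) (M := M) d.factor)) :=
    adjoin_range_blockEval (K := K) (M := M) d.isNormalized_factor hdet ▸ Algebra.mem_top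
  induction hq using Algebra.adjoin_induction with
  | mem q hq =>
    obtain ⟨f, rfl⟩ := hq
    exact ⟨1, d.prime.primeCompl.one_mem, f, by simp⟩
  | algebraMap x =>
    obtain ⟨a, b, hb, hab⟩ := exists_mul_algebraMap_residueField_eq d.prime x
    refine ⟨b, hb, relabel Sum.inl a, ?_⟩
    rw [extendEval_relabel_inl, algebraMap_eq, ← C_mul, factorEval_factor, factorEval_factor,
      ← hab, mul_comm]
  | add q q' _ _ hq hq' =>
    obtain ⟨b, hb, f, hf⟩ := hq
    obtain ⟨b', hb', f', hf'⟩ := hq'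
    refine ⟨b * b', hmul hb hb', relabel Sum.inl b' * f + relabel Sum.inl b * f', ?_⟩
    rw [map_add, map_mul, map_mul, extendEval_relabel_inl, extendEval_relabel_inl, hf, hf', map_mul,
      C_mul]
    ring
  | mul q q' _ _ hq hq' =>
    obtain ⟨b, hb, f, hf⟩ := hq
    obtain ⟨b', hb', f', hf'⟩ := hq'
    refine ⟨b * b', hmul hb hb', f * f', ?_⟩
    rw [map_mul, hf, hf', map_mul, C_mul]
    ring

end Chart

end Chart

section SubalgebraLift

lemma exists_mem_map_val_eq {K L σ : Type*} [CommRing K] [CommRing L] [Algebra K L]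
    {s : Set (MvPolynomial σ L)} {g : MvPolynomial σ L} (hg : g ∈ Ideal.span s) :
    ∃ T : Finset L, ∀ A : Subalgebra K L, ↑T ⊆ (A : Set L) → ∀ J : Ideal (MvPolynomial σ A),
      (∀ f ∈ s, ∃ f' ∈ J, map (A.val : A →+* L) f' = f) →
        ∃ g' ∈ J, map (A.val : A →+* L) g' = g := by
  classical
  induction hg using Submodule.span_induction with
  | mem g hg => exact ⟨∅, fun A _ J hJ => hJ g hg⟩
  | zero => exact ⟨∅, fun A _ J _ => ⟨0, J.zero_mem, map_zero _⟩⟩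
  | add f g _ _ hf hg =>
    obtain ⟨T, hT⟩ := hf
    obtain ⟨T', hT'⟩ := hg
    refine ⟨T ∪ T', fun A hA J hJ => ?_⟩
    rw [Finset.coe_union, Set.union_subset_iff] at hA
    obtain ⟨f', hf', rfl⟩ := hT A hA.1 J hJ
    obtain ⟨g', hg', rfl⟩ := hT' A hA.2 J hJ
    exact ⟨f' + g', J.add_mem hf' hg', map_add _ _ _⟩
  | smul q g _ hg =>
    obtain ⟨T, hT⟩ := hg
    refine ⟨T ∪ q.coeffs, fun A hA J hJ => ?_⟩
    rw [Finset.coe_union, Set.union_subset_iff] at hA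
    obtain ⟨g', hg', rfl⟩ := hT A hA.1 J hJ
    obtain ⟨q', rfl⟩ : q ∈ Set.range (map (A.val : A →+* L)) := by
      rw [mem_range_map_iff_coeffs_subset]
      exact fun x hx => ⟨⟨x, hA.2 hx⟩, rfl⟩
    exact ⟨q' * g', J.mul_mem_left _ hg', map_mul _ _ _⟩

variable {K L S : Type*} [CommRing K] [Field L] [Algebra K L] {r : ℕ}

lemma exists_groebnerBasis_subalgebra [Finite S] (m : MonomialOrder (Fin (r + r)))
    (I : Ideal (EntryRing K (S ⊕ Unit))) (y : S → Fin (r + r) → L) :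
    ∃ T : Finset L, ∀ A : Subalgebra K L, ↑T ⊆ (A : Set L) →
      ∃ y' : S → Fin (r + r) → A, (∀ s a, (y' s a : L) = y s a) ∧
        ∃ (n : ℕ) (G : Fin n → MvPolynomial (Fin (r + r)) A),
          (∀ i, IsUnit (m.leadingCoeff (G i))) ∧ (∀ i, G i ∈ rowIdeal I y') ∧
            ∀ d ∈ leadingExponents m (rowIdeal I y), ∃ i, m.degree (G i) ≤ d := by
  classical
  have := Fintype.ofFinite S
  obtain ⟨n, G, hG, hlead⟩ := exists_finite_groebnerBasis m (rowIdeal I y)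
  choose T hT using fun i => exists_mem_map_val_eq (K := K) (hG i).1
  let entries : Finset L := Finset.univ.image fun z : S × Fin (r + r) => y z.1 z.2
  let units : Finset L := Finset.univ.image fun i => (m.leadingCoeff (G i))⁻¹
  refine ⟨entries ∪ units ∪ Finset.univ.biUnion T, fun A hA => ?_⟩
  rw [Finset.coe_union, Finset.coe_union, Set.union_subset_iff, Set.union_subset_iff] at hA
  obtain ⟨⟨hentries, hunits⟩, hT'⟩ := hA
  let y' : S → Fin (r + r) → A := fun s a =>
    ⟨y s a, hentries (Finset.mem_image_of_mem (fun z : S × Fin (r + r) => y z.1 z.2)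
      (Finset.mem_univ (s, a)))⟩
  have hlift (i) : ∃ G' ∈ rowIdeal I y', map (A.val : A →+* L) G' = G i := by
    refine hT i A ((Finset.coe_subset.2 (Finset.subset_biUnion_of_mem T
      (Finset.mem_univ i))).trans hT') _ ?_
    rintro _ ⟨f, hf, rfl⟩
    exact ⟨_, rowEval_mem_rowIdeal y' hf, map_extendEval A.val y' _ f⟩
  choose G' hG' hmap using hlift
  have hdeg (i) : m.degree (G' i) = m.degree (G i) := by
    rw [← hmap, degree_map_of_injective m Subtype.val_injective]
  refine ⟨y', fun _ _ => rfl, n, G', fun i => ?_, hG', fun d hd => ?_⟩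
  · have hcoeff : A.val (m.leadingCoeff (G' i)) = m.leadingCoeff (G i) := by
      rw [MonomialOrder.leadingCoeff, MonomialOrder.leadingCoeff, hdeg, ← hmap, coeff_map]
      rfl
    refine .of_mul_eq_one ⟨_, hunits (Finset.mem_image_of_mem _ (Finset.mem_univ i))⟩
      (Subtype.ext ?_)
    change A.val _ * _ = _
    rw [hcoeff]
    exact mul_inv_cancel₀ (m.leadingCoeff_ne_zero_iff.2 (hG i).2)
  · obtain ⟨i, hi⟩ := hlead d hd
    exact ⟨i, (hdeg i).trans_le hi⟩

end SubalgebraLift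

lemma exists_notMem_forall_isPrime_le {R : Type*} [CommRing R] [IsNoetherianRing R] {I p : Ideal R}
    (hp : p ∈ I.minimalPrimes) :
    ∃ s ∉ p, ∀ P : Ideal R, P.IsPrime → I ≤ P → s ∉ P → p ≤ P := by
  have := hp.1.1
  have hfin := I.finite_minimalPrimes_of_isNoetherianRing
  have hnotle (q) (hq : q ∈ hfin.toFinset.filter (· ≠ p)) : ∃ s ∈ q, s ∉ p := by
    rw [Finset.mem_filter, Set.Finite.mem_toFinset] at hq
    exact SetLike.not_le_iff_exists.1 fun hle => hq.2 (le_antisymm hle (hp.2 hq.1.1 hle))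
  choose! s hs hsp using hnotle
  refine ⟨∏ q ∈ hfin.toFinset.filter (· ≠ p), s q, fun h => ?_, fun P _ hIP hsP => ?_⟩
  · obtain ⟨q, hq, h⟩ := (Ideal.IsPrime.prod_mem_iff (p := p)).1 h
    exact hsp q hq h
  · obtain ⟨q, hq, hqP⟩ := Ideal.exists_minimalPrimes_le hIP
    obtain rfl | hqp := eq_or_ne q p
    · exact hqP
    · have hqmem : q ∈ hfin.toFinset.filter (· ≠ p) := by simp [hq, hqp]
      exact absurd (hqP (Ideal.mem_of_dvd _ (Finset.dvd_prod_of_mem s hqmem) (hs q hqmem))) hsP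

lemma mem_of_blockEval_mem_blockSum {K A B : Type*} {S M : Type} [Field K] {k r : ℕ}
    {F : BoundedRankFamily K k} [Finite S] [Finite M] [CommRing A] [Algebra K A] [CommRing B]
    [Algebra K B] {P : Ideal (EntryRing K (S ⊕ M))} (hFP : F.ideal (S ⊕ M) ≤ P)
    {w : S ⊕ M → Fin (r + r) → B} (hker : ∀ f : EntryRing K (S ⊕ M), factorEval w f = 0 ↔ f ∈ P)
    (ψ : A →ₐ[K] B) {y : S → Fin (r + r) → A} (hψ : ∀ s a, ψ (y s a) = w (Sum.inl s) a)
    {f : EntryRing K (S ⊕ M)}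
    (hf : blockEval y f ∈ blockSum M (rowIdeal (F.ideal (S ⊕ Unit)) y)) : f ∈ P := by
  have hw : (Sum.elim (fun s a => ψ (y s a)) fun i => w (Sum.inr i)) = w := by
    rw [funext₂ hψ]
    exact Sum.elim_comp_inl_inr w
  have hrow (i : M) : Function.Injective (Sum.map id fun _ => i : S ⊕ Unit → S ⊕ M) :=
    Function.injective_id.sumMap (Function.injective_of_subsingleton _)
  have hzero := aevalTower_eq_zero_of_mem_blockSum (fun i => F.le_relabelComap _ (hrow i)) ψ y
    (fun i => w (Sum.inr i)) (fun g hg => by rw [hw, hker]; exact hFP hg) hf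
  rwa [aevalTower_extendEval, show (Sum.elim (fun s a => ψ (y s a)) fun i a => Function.uncurry
    (fun i => w (Sum.inr i)) (i, a)) = w from hw, hker] at hzero

namespace Chart

variable {K : Type*} [Field K] {k r : ℕ} {F : BoundedRankFamily K k} (d : Chart F r)

/-- The generic point `w` of `P` is a specialization of the generic point of `d.prime` on the first
summand of the index set. -/
lemma exists_specialization {M : Type*} {P : Ideal (EntryRing K (d.S ⊕ M))} [P.IsPrime]
    (hP : d.prime ≤ relabelComap Sum.inl P)
    (hminor : ∀ ρ' γ' : Fin (r + 1) → d.S ⊕ M, genericMinor ρ' γ' ∈ P)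
    (hργ : genericMinor d.ρ d.γ ∉ relabelComap Sum.inl P) {h : EntryRing K d.S} (hh : h ∉ d.prime)
    (hhP : h ∉ relabelComap Sum.inl P)
    {y : d.S → Fin (r + r) → awaySubalgebra d.prime K hh} (hy : ∀ s a, (y s a : _) = d.factor s a) :
    ∃ (w : d.S ⊕ M → Fin (r + r) → P.ResidueField)
      (ψ : awaySubalgebra d.prime K hh →ₐ[K] P.ResidueField),
      (∀ f : EntryRing K (d.S ⊕ M), factorEval w f = 0 ↔ f ∈ P) ∧
        ∀ s a, ψ (y s a) = w (Sum.inl s) a := by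
  rw [mem_relabelComap] at hhP hργ
  obtain ⟨w, hw, hwP⟩ := exists_residueField_normalized_factor P (ρ := Sum.inl ∘ d.ρ)
    (γ := Sum.inl ∘ d.γ) hminor (by rwa [← relabel_genericMinor])
  have hker (f : EntryRing K (d.S ⊕ M)) : factorEval w f = 0 ↔ f ∈ P := by
    rw [hwP, Ideal.algebraMap_residueField_eq_zero]
  have hker' (f : EntryRing K d.S) : factorEval (w ∘ Sum.inl) f = 0 ↔ relabel Sum.inl f ∈ P := by
    rw [← factorEval_relabel, hker]
  obtain ⟨ψ, hψ⟩ := exists_algHom_awaySubalgebra hh (factorEval (w ∘ Sum.inl))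
    (fun f hf => (hker' f).2 (hP hf)) (mt (hker' h).1 hhP)
  have hynorm : IsNormalized d.γ y := fun a b => Subtype.ext <| by
    rw [hy, d.isNormalized_factor]
    split_ifs <;> rfl
  refine ⟨w, ψ, hker, hynorm.map_eq_of_map_factorEval (fun a b => hw a b) ψ (fun f => hψ f _ ?_)
    (mt (hker' _).1 hργ)⟩
  rw [← factorEval_factor, ← funext₂ hy]
  exact map_factorEval (awaySubalgebra d.prime K hh).val y f

lemma blockEval_mem_blockSum {M ι : Type*} [Finite M] {A : Subalgebra K d.prime.ResidueField}
    {y : d.S → Fin (r + r) → A} (hy : ∀ s a, (y s a : _) = d.factor s a)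
    {m : MonomialOrder (Fin (r + r))} {G : ι → MvPolynomial (Fin (r + r)) A}
    (hunit : ∀ i, IsUnit (m.leadingCoeff (G i)))
    (hG : ∀ i, G i ∈ rowIdeal (F.ideal (d.S ⊕ Unit)) y)
    (hlead : ∀ e ∈ leadingExponents m d.fibre, ∃ i, m.degree (G i) ≤ e)
    {f : EntryRing K (d.S ⊕ M)} (hf : blockEval d.geomFactor f ∈ blockSum M d.geomFibre) :
    blockEval y f ∈ blockSum M (rowIdeal (F.ideal (d.S ⊕ Unit)) y) := by
  let φ : A →ₐ[K] d.GeomField :=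
    (IsScalarTower.toAlgHom K d.prime.ResidueField d.GeomField).comp A.val
  have hφ : Function.Injective φ :=
    (algebraMap d.prime.ResidueField d.GeomField).injective.comp Subtype.val_injective
  have hφy : (fun s a => φ (y s a)) = d.geomFactor :=
    funext₂ fun s a => congrArg (algebraMap _ d.GeomField) (hy s a)
  refine mem_blockSum_of_map_mem (φ := (φ : A →+* d.GeomField)) hφ (I' := d.geomFibre) ?_ hunit hG
    ?_ ?_
  · rw [map_rowIdeal, hφy]
  · rwa [← map_fibre, leadingExponents_map]
  · rwa [map_extendEval, hφy]

lemma exists_pow_mem_blockSum {M : Type*} [Finite M] {f : EntryRing K (d.S ⊕ M)}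
    (hf : ∀ c : M → d.Color, f ∈ d.colorPrime c) :
    ∃ n, blockEval d.geomFactor (f ^ n) ∈ blockSum M d.geomFibre := by
  obtain ⟨n, hn⟩ := mem_radical_of_forall_mem_productIdeal d.geomFibre (blockEval d.geomFactor f)
    fun c hc => hf fun i => ⟨c i, hc i⟩
  exact ⟨n, by rwa [map_pow]⟩

/-- Over a dense open subset of the component `d.prime`, the varieties of `d.colorPrime c` cover the
variety of `F`. -/
def IsCovering (h : EntryRing K d.S) : Prop :=
  ∀ (M : Type) [Finite M] (P : Ideal (EntryRing K (d.S ⊕ M))), P.IsPrime →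
    F.ideal (d.S ⊕ M) ≤ P → relabel Sum.inl h ∉ P → ∃ c : M → d.Color, d.colorPrime c ≤ P

theorem exists_isCovering
    (hminor : ∀ (α : Type) [Finite α] (ρ γ : Fin (r + 1) → α), genericMinor ρ γ ∈ F.ideal α) :
    ∃ h ∉ d.prime, d.IsCovering h := by
  obtain ⟨s, hs, hsep⟩ := exists_notMem_forall_isPrime_le d.mem_components
  obtain ⟨T, hT⟩ := exists_groebnerBasis_subalgebra MonomialOrder.lex (F.ideal (d.S ⊕ Unit))
    d.factor
  obtain ⟨b, hb, hbT⟩ := exists_notMem_subset_awaySubalgebra K (P := d.prime) T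
  have hh : genericMinor d.ρ d.γ * s * b ∉ d.prime :=
    d.prime.primeCompl.mul_mem (d.prime.primeCompl.mul_mem d.minor_notMem hs) hb
  obtain ⟨y, hy, n, G, hunit, hG, hlead⟩ := hT (awaySubalgebra d.prime K hh)
    fun x hx => hbT _ hh (dvd_mul_left _ _) x hx
  refine ⟨_, hh, fun M _ P _ hFP hhP => ?_⟩
  have hdvd {a} (ha : a ∣ genericMinor d.ρ d.γ * s * b) : a ∉ relabelComap Sum.inl P :=
    fun h => hhP (Ideal.mem_of_dvd _ (map_dvd (relabel Sum.inl) ha) h)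
  have := relabelComap_isPrime (Sum.inl : d.S → d.S ⊕ M) P
  have hp : d.prime ≤ relabelComap Sum.inl P := hsep _ inferInstance
    ((F.le_relabelComap Sum.inl Sum.inl_injective).trans (relabelComap_mono _ hFP))
    (hdvd ((dvd_mul_left _ _).mul_right b))
  obtain ⟨w, ψ, hker, hψ⟩ := d.exists_specialization hp (fun ρ' γ' => hFP (hminor _ ρ' γ'))
    (hdvd ((dvd_mul_right _ _).mul_right b)) hh (hdvd dvd_rfl) hy
  have := Fintype.ofFinite (M → d.Color)
  suffices hinf : (Finset.univ : Finset (M → d.Color)).inf d.colorPrime ≤ P by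
    obtain ⟨c, -, hc⟩ := (Ideal.IsPrime.inf_le' ‹_›).1 hinf
    exact ⟨c, hc⟩
  intro f hf
  obtain ⟨m, hm⟩ := d.exists_pow_mem_blockSum fun c =>
    Finset.inf_le (f := d.colorPrime) (Finset.mem_univ c) hf
  exact ‹P.IsPrime›.mem_of_pow_mem m
    (mem_of_blockEval_mem_blockSum hFP hker ψ hψ (d.blockEval_mem_blockSum hy hunit hG hlead hm))

end Chart

section Recoloring

lemma aeval_mapEquiv {F σ : Type*} [CommRing F] (s : F ≃+* F) (x : σ → F) (g : MvPolynomial σ F) :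
    aeval x (mapEquiv σ s g) = s (aeval (fun a => s.symm (x a)) g) := by
  rw [mapEquiv_apply, aeval_def, aeval_def, eval₂_map]
  refine Eq.trans ?_ (map_aeval _ (s : F →+* F) g).symm
  simp only [RingHom.coe_coe, RingEquiv.apply_symm_apply]
  rfl

lemma map_mem_productIdeal {F M σ : Type*} [Field F] (s : F ≃+* F)
    {c c' : M → Ideal (MvPolynomial σ F)}
    (hc : ∀ i, ∀ p ∈ c i, mapEquiv σ s p ∈ c' i) {f : MvPolynomial (M × σ) F}
    (hf : f ∈ productIdeal c) : mapEquiv (M × σ) s f ∈ productIdeal c' := by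
  refine mem_productIdeal.2 fun x hx => ?_
  rw [aeval_mapEquiv, map_eq_zero]
  refine mem_productIdeal.1 hf (fun i a => s.symm (x i a)) fun i p hp => ?_
  rw [← map_eq_zero s, ← aeval_mapEquiv]
  exact hx i _ (hc i p hp)

namespace Chart

variable {K : Type*} [Field K] {k r : ℕ} {F : BoundedRankFamily K k} (d : Chart F r)

lemma mapEquiv_blockEval_geomFactor {M : Type*}
    (s : d.GeomField ≃ₐ[d.prime.ResidueField] d.GeomField) (f : EntryRing K (d.S ⊕ M)) :
    mapEquiv _ (s : d.GeomField ≃+* d.GeomField) (blockEval d.geomFactor f) =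
      blockEval d.geomFactor f := by
  refine (map_extendEval (s.toAlgHom.restrictScalars K) d.geomFactor _ f).trans ?_
  exact congrArg (blockEval · f) (funext₂ fun _ _ => s.commutes _)

lemma comap_mapEquiv_geomFibre (s : d.GeomField ≃ₐ[d.prime.ResidueField] d.GeomField) :
    d.geomFibre.comap (mapEquiv _ (s : d.GeomField ≃+* d.GeomField)) = d.geomFibre := by
  rw [← Ideal.map_symm]
  refine (map_rowIdeal (s.symm.toAlgHom.restrictScalars K) _ d.geomFactor).trans ?_
  exact congrArg (rowIdeal _) (funext₂ fun _ _ => s.symm.commutes _)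

/-- The action of a Galois automorphism of `d.GeomField` on the components of the fibre. -/
noncomputable def galoisAct (s : d.GeomField ≃ₐ[d.prime.ResidueField] d.GeomField) (c : d.Color) :
    d.Color :=
  ⟨c.1.comap (mapEquiv _ (s : d.GeomField ≃+* d.GeomField)), by
    have hmem := Ideal.minimalPrimes_comap_of_surjective
      (f := RingHomClass.toRingHom (mapEquiv (Fin (r + r)) (s : d.GeomField ≃+* d.GeomField)))
      (mapEquiv (Fin (r + r)) (s : d.GeomField ≃+* d.GeomField)).surjective c.2
    exact (congrArg Ideal.minimalPrimes (d.comap_mapEquiv_geomFibre s)).subset hmem⟩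

lemma colorPrime_galoisAct_comp (s : d.GeomField ≃ₐ[d.prime.ResidueField] d.GeomField) {M : Type*}
    (c : M → d.Color) : d.colorPrime (d.galoisAct s ∘ c) = d.colorPrime c := by
  ext f
  rw [mem_colorPrime, mem_colorPrime]
  have hfix := d.mapEquiv_blockEval_geomFactor s f
  refine ⟨fun hf => hfix ▸ map_mem_productIdeal (s : d.GeomField ≃+* d.GeomField)
    (fun i p hp => hp) hf, fun hf => ?_⟩
  rw [← (mapEquiv _ (s : d.GeomField ≃+* d.GeomField)).eq_symm_apply] at hfix
  rw [hfix]
  refine map_mem_productIdeal (s : d.GeomField ≃+* d.GeomField).symm (fun i p hp => ?_) hf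
  change mapEquiv _ (s : d.GeomField ≃+* d.GeomField) ((mapEquiv _ _).symm p) ∈ (c i).1
  rwa [RingEquiv.apply_symm_apply]

/-- Nested `colorPrime`s have the same trace over the function field of `d.prime`, hence are
conjugate by the Galois group. -/
theorem exists_recoloring_of_colorPrime_le {M : Type*} [Finite M] {c' c : M → d.Color}
    (h : d.colorPrime c' ≤ d.colorPrime c) :
    ∃ g : d.Color → d.Color, c' = g ∘ c ∧
      ∀ {M' : Type _} (b : M' → d.Color), d.colorPrime (g ∘ b) = d.colorPrime b := by
  obtain ⟨s, hs⟩ := exists_algEquiv_map_mem_of_forall_map_mem (κ := d.prime.ResidueField)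
    (productIdeal fun i => (c' i).1) (productIdeal fun i => (c i).1) fun q hq => by
      obtain ⟨b, hb, f, hf⟩ := d.exists_blockEval_eq_C_mul (M := M) q
      have hfq : blockEval d.geomFactor f =
          C (algebraMap _ d.GeomField (factorEval d.factor b)) * map (algebraMap _ _) q := by
        rw [← d.map_blockEval_factor, hf, map_mul, map_C]
      have hmem : f ∈ d.colorPrime c := h (by
        rw [mem_colorPrime, hfq]
        exact Ideal.mul_mem_left _ _ hq)
      rw [mem_colorPrime, hfq] at hmem
      refine ((d.isPrime_productIdeal_color c).mem_or_mem hmem).resolve_left ?_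
      rwa [d.C_mem_productIdeal_color, map_eq_zero, factorEval_factor_eq_zero]
  refine ⟨d.galoisAct s, funext fun i => Subtype.ext ?_, fun b => d.colorPrime_galoisAct_comp s b⟩
  have hle : (c' i).1 ≤ (d.galoisAct s (c i)).1 := fun g hg => by
    have hmap := hs _ ((rename_mk_mem_productIdeal (fun i => d.isPrime_color (c' i)) (i := i)).2 hg)
    rw [map_rename] at hmap
    exact (rename_mk_mem_productIdeal fun i => d.isPrime_color (c i)).1 hmap
  exact le_antisymm hle ((d.galoisAct s (c i)).2.2 (c' i).2.1 hle)

lemma colorPrime_mem_components {h : EntryRing K d.S} (hh : h ∉ d.prime) (hcov : d.IsCovering h)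
    {M : Type} [Finite M] {c : M → d.Color} (hle : F.ideal (d.S ⊕ M) ≤ d.colorPrime c) :
    d.colorPrime c ∈ F.components (d.S ⊕ M) := by
  refine ⟨⟨d.isPrime_colorPrime c, hle⟩, fun Q ⟨hQ, hFQ⟩ hQle => ?_⟩
  obtain ⟨c', hc'⟩ := hcov M Q hQ hFQ fun h' => hh ((d.relabel_inl_mem_colorPrime c).1 (hQle h'))
  obtain ⟨g, rfl, hg⟩ := d.exists_recoloring_of_colorPrime_le (hc'.trans hQle)
  exact (hg c).ge.trans hc'

end Chart

end Recoloring

section MaximalChart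

universe u

lemma rowIdeal_comp_le {K L : Type*} [Field K] [CommRing L] [Algebra K L] {k r : ℕ}
    (F : BoundedRankFamily K k) {S S' : Type} {e : S → S'} (he : Function.Injective e)
    (y : S' → Fin (r + r) → L) :
    rowIdeal (F.ideal (S ⊕ Unit)) (y ∘ e) ≤ rowIdeal (F.ideal (S' ⊕ Unit)) y := by
  refine Ideal.map_le_iff_le_comap.2 fun f hf => ?_
  have hrel : rowEval (y ∘ e) f = rowEval y (relabel (Sum.map e id) f) := by
    simp only [extendEval, factorEval_relabel, Sum.elim_comp_map]
    rfl
  rw [Ideal.mem_comap, hrel]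
  exact rowEval_mem_rowIdeal y (F.le_relabelComap _ (he.sumMap Function.injective_id) hf)

namespace Chart

variable {K : Type u} [Field K] {k r : ℕ} {F : BoundedRankFamily K k} (d : Chart F r) {M : Type}

lemma aevalTower_eq_zero_of_mem_map_fibre {L B : Type*} [CommRing L] [Algebra K L] [CommRing B]
    [Algebra K B] (φ : d.prime.ResidueField →ₐ[K] L) (ψ : L →ₐ[K] B)
    {w : d.S ⊕ M → Fin (r + r) → B} (hψ : ∀ s a, ψ (φ (d.factor s a)) = w (Sum.inl s) a) (i : M)
    (hw : ∀ f ∈ F.ideal (d.S ⊕ Unit), factorEval w (relabel (Sum.map id fun _ => i) f) = 0)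
    {q : MvPolynomial (Fin (r + r)) L} (hq : q ∈ d.fibre.map (map (φ : _ →+* L))) :
    aevalTower ψ (w (Sum.inr i)) q = 0 := by
  suffices h : d.fibre.map (map (φ : _ →+* L)) ≤ RingHom.ker (aevalTower ψ (w (Sum.inr i))) from
    h hq
  rw [map_rowIdeal, rowIdeal, Ideal.map_le_iff_le_comap]
  intro f hf
  rw [Ideal.mem_comap, RingHom.mem_ker, aevalTower_extendEval, ← hw f hf, factorEval_relabel]
  congr 2
  funext z
  cases z with
  | inl s => exact funext (hψ s)
  | inr _ => rfl

variable [Finite M]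

/-- A generic point of the variety of `d.colorPrime c`, extending the generic point of `d.prime`. -/
lemma exists_factor_colorPrime (c : M → d.Color) :
    ∃ (L : Type u) (_ : Field L) (_ : Algebra K L) (w : d.S ⊕ M → Fin (r + r) → L),
      IsNormalized d.γ (w ∘ Sum.inl) ∧
        ∀ f : EntryRing K (d.S ⊕ M), factorEval w f = 0 ↔ f ∈ d.colorPrime c := by
  let η := IsScalarTower.toAlgHom K (MvPolynomial (M × Fin (r + r)) d.GeomField)
    (productIdeal fun i => (c i).1).ResidueField
  refine ⟨_, inferInstance, inferInstance, fun z a => η ((Sum.elim (fun s a => C (d.geomFactor s a))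
    fun i a => X (i, a) : d.S ⊕ M → Fin (r + r) → _) z a), ?_, fun f => ?_⟩
  · exact d.isNormalized_factor.map ((η.toRingHom.comp C).comp (algebraMap _ d.GeomField))
  · rw [← map_factorEval, mem_colorPrime, ← Ideal.algebraMap_residueField_eq_zero]
    rfl

/-- The chart at the component `d.colorPrime c`. -/
noncomputable def extend {c : M → d.Color} (hc : d.colorPrime c ∈ F.components (d.S ⊕ M))
    (hminor : ∀ (α : Type) [Finite α] (ρ γ : Fin (r + 1) → α), genericMinor ρ γ ∈ F.ideal α) :
    Chart F r where
  S := d.S ⊕ M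
  ρ := Sum.inl ∘ d.ρ
  γ := Sum.inl ∘ d.γ
  prime := d.colorPrime c
  mem_components := hc
  minor_notMem := by
    rw [← relabel_genericMinor, relabel_inl_mem_colorPrime]
    exact d.minor_notMem
  minor_mem ρ' γ' := hc.1.2 (hminor _ ρ' γ')

section Extend

variable {c : M → d.Color} (hc : d.colorPrime c ∈ F.components (d.S ⊕ M))
  (hminor : ∀ (α : Type) [Finite α] (ρ γ : Fin (r + 1) → α), genericMinor ρ γ ∈ F.ideal α)

lemma exists_algHom_extend :
    ∃ φ : d.prime.ResidueField →ₐ[K] (d.extend hc hminor).prime.ResidueField,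
      ∀ s a, φ (d.factor s a) = (d.extend hc hminor).factor (Sum.inl s) a :=
  d.exists_algHom_factor_eq (d.extend hc hminor).isNormalized_factor fun f => by
    rw [← d.relabel_inl_mem_colorPrime c]
    refine Iff.trans ?_ (d.extend hc hminor).factorEval_factor_eq_zero
    exact (congrArg (· = 0) (factorEval_relabel _ _ _).symm).to_iff

variable {φ : d.prime.ResidueField →ₐ[K] (d.extend hc hminor).prime.ResidueField}
  (hφ : ∀ s a, φ (d.factor s a) = (d.extend hc hminor).factor (Sum.inl s) a)

include hφ in
lemma map_fibre_le_fibre_extend :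
    d.fibre.map (map (φ : _ →+* (d.extend hc hminor).prime.ResidueField)) ≤
      (d.extend hc hminor).fibre := by
  rw [map_rowIdeal, funext₂ hφ]
  exact rowIdeal_comp_le F Sum.inl_injective (d.extend hc hminor).factor

include hφ in
lemma fibre_extend_le_map_fibre {m : MonomialOrder (Fin (r + r))}
    (hmax : ∀ d' : Chart F r, leadingExponents m d.fibre ⊆ leadingExponents m d'.fibre →
      leadingExponents m d'.fibre ⊆ leadingExponents m d.fibre) :
    (d.extend hc hminor).fibre ≤
      d.fibre.map (map (φ : _ →+* (d.extend hc hminor).prime.ResidueField)) := by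
  let φ' : d.prime.ResidueField →+* (d.extend hc hminor).prime.ResidueField := φ
  have hmap {f} (hf : f ∈ d.fibre) := Ideal.mem_map_of_mem (map φ') hf
  have hmap0 {f : MvPolynomial (Fin (r + r)) d.prime.ResidueField} (hf : f ≠ 0) : map φ' f ≠ 0 :=
    (map_ne_zero_iff _ (map_injective _ φ'.injective)).2 hf
  have hdeg (f : MvPolynomial (Fin (r + r)) d.prime.ResidueField) :
      m.degree (map φ' f) = m.degree f := degree_map_of_injective m φ'.injective f
  have hle := d.map_fibre_le_fibre_extend hc hminor hφ
  have hlead := hmax (d.extend hc hminor) fun _ ⟨f, hf, hf0, hfdeg⟩ =>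
    ⟨_, hle (hmap hf), hmap0 hf0, (hdeg f).trans hfdeg⟩
  refine ideal_le_of_forall_exists_degree_le m fun f hf hf0 => ?_
  obtain ⟨g, hg, hg0, hgdeg⟩ := hlead ⟨f, hf, hf0, rfl⟩
  exact ⟨_, hle (hmap hg), hmap hg, hmap0 hg0, ((hdeg g).trans hgdeg).le⟩

end Extend

/-- By maximality the fibre does not shrink when a row is added, so a further row of any colour can
be adjoined to a matrix in the variety of `F`. -/
lemma ideal_le_colorPrime_option {m : MonomialOrder (Fin (r + r))} {c : Option M → d.Color}
    (hc : d.colorPrime (c ∘ some) ∈ F.components (d.S ⊕ M))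
    (hminor : ∀ (α : Type) [Finite α] (ρ γ : Fin (r + 1) → α), genericMinor ρ γ ∈ F.ideal α)
    (hmax : ∀ d' : Chart F r, leadingExponents m d.fibre ⊆ leadingExponents m d'.fibre →
      leadingExponents m d'.fibre ⊆ leadingExponents m d.fibre) :
    F.ideal (d.S ⊕ Option M) ≤ d.colorPrime c := by
  intro f hf
  obtain ⟨φ, hφ⟩ := d.exists_algHom_extend hc hminor
  obtain ⟨L, _, _, w, hw, hker⟩ := d.exists_factor_colorPrime c
  have hker' (f : EntryRing K (d.S ⊕ M)) :
      factorEval (w ∘ Sum.map id some) f = 0 ↔ f ∈ d.colorPrime (c ∘ some) := by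
    rw [← factorEval_relabel, hker, ← mem_relabelComap,
      d.relabelComap_colorPrime (Option.some_injective M)]
  obtain ⟨ψ, hψ⟩ := (d.extend hc hminor).exists_algHom_factor_eq (w := w ∘ Sum.map id some) hw
    hker'
  let e : d.S ⊕ Option M ≃ (d.S ⊕ M) ⊕ Unit :=
    ((Equiv.refl _).sumCongr (Equiv.optionEquivSumPUnit M)).trans (Equiv.sumAssoc _ _ _).symm
  have hfibre : rowEval (d.extend hc hminor).factor (relabel e f) ∈ d.fibre.map (map _) :=
    d.fibre_extend_le_map_fibre hc hminor hφ hmax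
      (rowEval_mem_rowIdeal _ (F.le_relabelComap e e.injective hf))
  have hzero := d.aevalTower_eq_zero_of_mem_map_fibre φ ψ (w := w)
    (fun s a => by rw [hφ]; exact hψ _ a) none (fun g hg => ?_) hfibre
  · rw [← hker]
    refine Eq.trans ?_ ((factorEval_relabel _ _ _).symm.trans
      ((aevalTower_extendEval ψ _ _ _ _).symm.trans hzero))
    congr 2
    funext z
    rcases z with s | _ | i
    · exact (funext (hψ (Sum.inl s))).symm
    · rfl
    · exact (funext (hψ (Sum.inr i))).symm
  · rw [hker, mem_colorPrime, blockEval_relabel_const,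
      rename_mk_mem_productIdeal fun i => d.isPrime_color (c i)]
    exact (c none).2.1.2 (rowEval_mem_rowIdeal _ hg)

lemma ideal_le_colorPrime_of_isEmpty [IsEmpty M] (c : M → d.Color) :
    F.ideal (d.S ⊕ M) ≤ d.colorPrime c := by
  intro f hf
  have hinv : (Sum.inl : d.S → d.S ⊕ M) ∘ (Equiv.sumEmpty d.S M) = id := by
    funext z
    exact (Equiv.sumEmpty d.S M).symm_apply_apply z
  rw [← relabel_id f, ← hinv, ← relabel_relabel, d.relabel_inl_mem_colorPrime]
  exact d.mem_components.1.2 (F.le_relabelComap _ (Equiv.injective _) hf)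

lemma ideal_le_colorPrime_of_equiv {M' : Type} [Finite M'] (e : M ≃ M')
    (h : ∀ c : M → d.Color, F.ideal (d.S ⊕ M) ≤ d.colorPrime c) (c : M' → d.Color) :
    F.ideal (d.S ⊕ M') ≤ d.colorPrime c := by
  have hle := (F.le_relabelComap (Sum.map id e.symm)
    (Function.injective_id.sumMap e.symm.injective)).trans (relabelComap_mono _ (h (c ∘ e)))
  rwa [d.relabelComap_colorPrime e.symm.injective, Function.comp_assoc, Equiv.self_comp_symm,
    Function.comp_id] at hle

theorem ideal_le_colorPrime {m : MonomialOrder (Fin (r + r))} {h : EntryRing K d.S}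
    (hh : h ∉ d.prime) (hcov : d.IsCovering h)
    (hminor : ∀ (α : Type) [Finite α] (ρ γ : Fin (r + 1) → α), genericMinor ρ γ ∈ F.ideal α)
    (hmax : ∀ d' : Chart F r, leadingExponents m d.fibre ⊆ leadingExponents m d'.fibre →
      leadingExponents m d'.fibre ⊆ leadingExponents m d.fibre) (c : M → d.Color) :
    F.ideal (d.S ⊕ M) ≤ d.colorPrime c := by
  suffices H : ∀ (_ : Finite M) (c : M → d.Color), F.ideal (d.S ⊕ M) ≤ d.colorPrime c from H ‹_› c
  clear c
  induction M using Finite.induction_empty_option with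
  | of_equiv e ih =>
    intro hfin c
    have := Finite.of_equiv _ e.symm
    exact d.ideal_le_colorPrime_of_equiv e (ih this) c
  | h_empty => exact fun _ c => d.ideal_le_colorPrime_of_isEmpty c
  | h_option ih =>
    exact fun _ c => d.ideal_le_colorPrime_option
      (d.colorPrime_mem_components hh hcov (ih inferInstance _)) hminor hmax

end Chart

end MaximalChart

/-! ### Interchangeable indices and colourings -/

section Interchangeable

variable {K : Type*} [CommRing K] {α β : Type*}

lemma relabelComap_equiv_symm (e : α ≃ β) {P : Ideal (EntryRing K α)} {Q : Ideal (EntryRing K β)} :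
    relabelComap e.symm P = Q ↔ P = relabelComap e Q := by
  constructor <;> rintro rfl <;> simp [relabelComap_relabelComap]

open scoped Classical in
/-- Two indices are interchangeable for an ideal `P` of the coordinate ring of `α × α` matrices if
`P` is stable under the transposition swapping them. -/
def interchangeable (P : Ideal (EntryRing K α)) : Setoid α where
  r i j := relabelComap (Equiv.swap i j) P = P
  iseqv :=
    { refl i := by simp
      symm {i j} h := by rwa [Equiv.swap_comm]
      trans {i j l} hij hjl := by
        obtain rfl | hne := eq_or_ne l i
        · simp
        obtain rfl | hne' := eq_or_ne l j
        · exact hij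
        rw [← Equiv.swap_mul_swap_mul_swap hne' hne, Equiv.swap_comm j i]
        simp only [Equiv.Perm.coe_mul, ← relabelComap_relabelComap, hij, Equiv.swap_comm l j, hjl] }

lemma interchangeable_iff [inst : DecidableEq α] {P : Ideal (EntryRing K α)} {i j : α} :
    interchangeable P i j ↔ relabelComap (Equiv.swap i j) P = P := by
  rw [Subsingleton.elim inst fun a b => Classical.propDecidable (a = b)]
  rfl

lemma relabelComap_swap_relabelComap [DecidableEq α] [DecidableEq β] {e : α → β}
    (he : Function.Injective e) (Q : Ideal (EntryRing K β)) (i j : α) :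
    relabelComap (Equiv.swap i j) (relabelComap e Q) =
      relabelComap e (relabelComap (Equiv.swap (e i) (e j)) Q) := by
  rw [relabelComap_relabelComap, relabelComap_relabelComap]
  exact congrArg (relabelComap · Q) (funext fun x => he.map_swap i j x)

lemma interchangeable_relabelComap {e : α → β} (he : Function.Injective e)
    {Q : Ideal (EntryRing K β)} {i j : α} (h : interchangeable Q (e i) (e j)) :
    interchangeable (relabelComap e Q) i j := by
  classical
  rw [interchangeable_iff] at h ⊢
  rw [relabelComap_swap_relabelComap he, h]

lemma interchangeable_relabelComap_equiv (e : α ≃ β) {Q : Ideal (EntryRing K β)} {i j : α} :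
    interchangeable (relabelComap e Q) i j ↔ interchangeable Q (e i) (e j) := by
  refine ⟨fun h => ?_, interchangeable_relabelComap e.injective⟩
  have h' : interchangeable (relabelComap e Q) (e.symm (e i)) (e.symm (e j)) := by simpa using h
  have h'' := interchangeable_relabelComap e.symm.injective h'
  rwa [relabelComap_relabelComap, Equiv.self_comp_symm, relabelComap_id] at h''

lemma relabelComap_mem_components {K : Type*} [Field K] {k : ℕ} {F : BoundedRankFamily K k}
    {α β : Type} (e : α ≃ β) {P : Ideal (EntryRing K β)} (hP : P ∈ F.components β) :
    relabelComap e P ∈ F.components α := by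
  have := hP.1.1
  refine ⟨⟨relabelComap_isPrime e P,
    (F.le_relabelComap e e.injective).trans (relabelComap_mono _ hP.1.2)⟩, fun q ⟨_, hq⟩ hle => ?_⟩
  have hle' : relabelComap e.symm q ≤ P := by
    simpa [relabelComap_relabelComap] using relabelComap_mono e.symm hle
  have hge := hP.2 ⟨relabelComap_isPrime e.symm q,
    (F.le_relabelComap e.symm e.symm.injective).trans (relabelComap_mono _ hq)⟩ hle'
  simpa [relabelComap_relabelComap] using relabelComap_mono e hge

end Interchangeable

section ColorModel

universe u

variable {K : Type u} [Field K] {k : ℕ}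

/-- A description of the components of `F` that meet an open subset `h ≠ 0` of the variety of
`F.ideal S`: once rows and columns `ι : S ↪ α` with `h ≠ 0` are chosen, the components are given by
colourings of the remaining indices with finitely many colours, naturally in `α`. The colours of the
indices in the range of `ι` are ignored. -/
structure ColorModel (F : BoundedRankFamily K k) where
  S : Type
  Color : Type u
  [finite_S : Finite S]
  [finite_color : Finite Color]
  h : EntryRing K S
  h_notMem : h ∉ F.ideal S
  prime : ∀ {α : Type}, (S ↪ α) → (α → Color) → Ideal (EntryRing K α)
  prime_congr : ∀ {α : Type} (ι : S ↪ α) {w w' : α → Color},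
    (∀ x ∉ Set.range ι, w x = w' x) → prime ι w = prime ι w'
  prime_mem_components : ∀ {α : Type} [Finite α] (ι : S ↪ α) w, prime ι w ∈ F.components α
  relabel_h_notMem : ∀ {α : Type} [Finite α] (ι : S ↪ α) w, relabel ι h ∉ prime ι w
  relabelComap_prime : ∀ {α β : Type} [Finite α] [Finite β] (f : α ↪ β) (ι : S ↪ α) w,
    relabelComap f (prime (ι.trans f) w) = prime ι (w ∘ f)
  exists_eq_prime : ∀ {α : Type} [Finite α] (ι : S ↪ α) {P}, P ∈ F.components α →
    relabel ι h ∉ P → (∃ x, x ∉ Set.range ι) → ∃ w, P = prime ι w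
  exists_recoloring : ∀ {α : Type} [Finite α] (ι : S ↪ α) {w w' : α → Color},
    prime ι w = prime ι w' → ∃ g : Color → Color, (∀ x ∉ Set.range ι, w' x = g (w x)) ∧
      ∀ {β : Type} (ι' : S ↪ β) (v : β → Color), prime ι' (g ∘ v) = prime ι' v

attribute [instance] ColorModel.finite_S ColorModel.finite_color

/-- The type `α` as the disjoint union of the range of `ι` and its complement. -/
noncomputable def sumComplRangeEquiv {S α : Type*} (ι : S ↪ α) : S ⊕ {x // x ∉ Set.range ι} ≃ α :=
  Equiv.ofBijective (Sum.elim ι (↑))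
    ⟨ι.injective.sumElim Subtype.val_injective fun s x h => x.2 ⟨s, h⟩, fun x => by
      by_cases hx : x ∈ Set.range ι
      · obtain ⟨s, hs⟩ := hx
        exact ⟨Sum.inl s, hs⟩
      · exact ⟨Sum.inr ⟨x, hx⟩, rfl⟩⟩

lemma sumComplRangeEquiv_symm_comp {S α : Type*} (ι : S ↪ α) :
    (sumComplRangeEquiv ι).symm ∘ ι = Sum.inl :=
  funext fun _ => (Equiv.symm_apply_eq _).2 rfl

lemma sumComplRangeEquiv_trans_symm_comp {S α β : Type*} (ι : S ↪ α) (f : α ↪ β) :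
    (sumComplRangeEquiv (ι.trans f)).symm ∘ f =
      Sum.map id (fun x => ⟨f x.1, fun ⟨s, hs⟩ => x.2 ⟨s, f.injective hs⟩⟩) ∘
        (sumComplRangeEquiv ι).symm := by
  funext x
  obtain ⟨z, rfl⟩ := (sumComplRangeEquiv ι).surjective x
  rw [Function.comp_apply, Equiv.symm_apply_eq, Function.comp_apply, Equiv.symm_apply_apply]
  cases z <;> rfl

namespace Chart

variable {F : BoundedRankFamily K k} {r : ℕ} (d : Chart F r)

/-- The prime `d.colorPrime` transported to a type into which `d.S` is embedded. -/
noncomputable def embeddedColorPrime {α : Type} (ι : d.S ↪ α) (w : α → d.Color) :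
    Ideal (EntryRing K α) :=
  relabelComap (sumComplRangeEquiv ι).symm (d.colorPrime fun x : {x // x ∉ Set.range ι} => w x)

variable {α β : Type} [Finite α]

lemma relabelComap_embeddedColorPrime [Finite β] (f : α ↪ β) (ι : d.S ↪ α) (w : β → d.Color) :
    relabelComap f (d.embeddedColorPrime (ι.trans f) w) = d.embeddedColorPrime ι (w ∘ f) := by
  rw [embeddedColorPrime, relabelComap_relabelComap, sumComplRangeEquiv_trans_symm_comp,
    ← relabelComap_relabelComap, d.relabelComap_colorPrime fun x y hxy =>
      Subtype.ext (f.injective (congrArg Subtype.val hxy))]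
  rfl

lemma relabel_notMem_embeddedColorPrime {h : EntryRing K d.S} (hh : h ∉ d.prime) (ι : d.S ↪ α)
    (w : α → d.Color) : relabel ι h ∉ d.embeddedColorPrime ι w := by
  rwa [embeddedColorPrime, mem_relabelComap, relabel_relabel, sumComplRangeEquiv_symm_comp,
    relabel_inl_mem_colorPrime]

lemma exists_eq_embeddedColorPrime {h : EntryRing K d.S} (hcov : d.IsCovering h)
    (hle : ∀ {M : Type} [Finite M] (c : M → d.Color), F.ideal (d.S ⊕ M) ≤ d.colorPrime c)
    (ι : d.S ↪ α) {P : Ideal (EntryRing K α)} (hP : P ∈ F.components α) (hhP : relabel ι h ∉ P)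
    (hι : ∃ x, x ∉ Set.range ι) : ∃ w, P = d.embeddedColorPrime ι w := by
  classical
  obtain ⟨x, hx⟩ := hι
  have hP' := relabelComap_mem_components (sumComplRangeEquiv ι) hP
  obtain ⟨c, hc⟩ := hcov _ _ hP'.1.1 hP'.1.2 (by rwa [mem_relabelComap, relabel_relabel])
  refine ⟨fun y => if hy : y ∉ Set.range ι then c ⟨y, hy⟩ else c ⟨x, hx⟩, Eq.symm ?_⟩
  rw [embeddedColorPrime, relabelComap_equiv_symm,
    ← le_antisymm hc (hP'.2 ⟨d.isPrime_colorPrime c, hle c⟩ hc)]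
  exact congrArg d.colorPrime (funext fun y => dif_pos y.2)

lemma exists_recoloring_of_embeddedColorPrime_eq (ι : d.S ↪ α) {w w' : α → d.Color}
    (h : d.embeddedColorPrime ι w = d.embeddedColorPrime ι w') :
    ∃ g : d.Color → d.Color, (∀ x ∉ Set.range ι, w' x = g (w x)) ∧
      ∀ {β : Type} (ι' : d.S ↪ β) (v : β → d.Color),
        d.embeddedColorPrime ι' (g ∘ v) = d.embeddedColorPrime ι' v := by
  rw [embeddedColorPrime, embeddedColorPrime, relabelComap_equiv_symm, relabelComap_relabelComap,
    Equiv.symm_comp_self, relabelComap_id] at h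
  obtain ⟨g, hgw, hg⟩ := d.exists_recoloring_of_colorPrime_le h.ge
  exact ⟨g, fun x hx => congrFun hgw ⟨x, hx⟩, fun _ _ => congrArg (relabelComap _) (hg _)⟩

end Chart

variable {F : BoundedRankFamily K k}

lemma exists_minor_rank (hF : F.ideal Empty ≠ ⊤) :
    ∃ r, (∃ (S : Type) (_ : Finite S) (ρ γ : Fin r → S), genericMinor ρ γ ∉ F.ideal S) ∧
      ∀ (α : Type) [Finite α] (ρ γ : Fin (r + 1) → α), genericMinor ρ γ ∈ F.ideal α := by
  by_contra! hsucc
  have hall (r : ℕ) :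
      ∃ (S : Type) (_ : Finite S) (ρ γ : Fin r → S), genericMinor ρ γ ∉ F.ideal S := by
    induction r with
    | zero =>
      refine ⟨Empty, inferInstance, Fin.elim0, Fin.elim0, fun h => hF ?_⟩
      simpa only [Ideal.eq_top_iff_one, genericMinor, Matrix.det_isEmpty] using h
    | succ r ih =>
      obtain ⟨α, hα, ρ, γ, h⟩ := hsucc r ih
      exact ⟨α, hα, ρ, γ, h⟩
  obtain ⟨S, _, ρ, γ, h⟩ := hall (k + 1)
  exact h (F.genericMinor_mem S ρ γ)

lemma exists_chart (hF : F.ideal Empty ≠ ⊤) :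
    ∃ r, Nonempty (Chart F r) ∧
      ∀ (α : Type) [Finite α] (ρ γ : Fin (r + 1) → α), genericMinor ρ γ ∈ F.ideal α := by
  obtain ⟨r, ⟨S, _, ρ, γ, h⟩, hr⟩ := exists_minor_rank hF
  rw [← (F.isRadical S).radical, ← Ideal.sInf_minimalPrimes, Ideal.mem_sInf] at h
  push Not at h
  obtain ⟨p, hp, hmem⟩ := h
  exact ⟨r, ⟨⟨S, ρ, γ, p, hp, hmem, fun ρ' γ' => hp.1.2 (hr S ρ' γ')⟩⟩, hr⟩

theorem exists_colorModel (hF : F.ideal Empty ≠ ⊤) : Nonempty (ColorModel F) := by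
  obtain ⟨r, _, hr⟩ := exists_chart hF
  obtain ⟨d, hmax⟩ := exists_maximal_of_isUpperSet
    (fun d : Chart F r => leadingExponents MonomialOrder.lex d.fibre)
    fun d => isUpperSet_leadingExponents _ _
  obtain ⟨h, hh, hcov⟩ := d.exists_isCovering hr
  have hle {M : Type} [Finite M] (c : M → d.Color) : F.ideal (d.S ⊕ M) ≤ d.colorPrime c :=
    d.ideal_le_colorPrime hh hcov hr hmax c
  exact ⟨{
    S := d.S
    Color := d.Color
    h := h
    h_notMem := fun hmem => hh (d.mem_components.1.2 hmem)
    prime := d.embeddedColorPrime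
    prime_congr := fun ι w w' hw => congrArg (relabelComap (sumComplRangeEquiv ι).symm)
      (congrArg d.colorPrime (funext fun x => hw x x.2))
    prime_mem_components := fun ι w =>
      relabelComap_mem_components _ (d.colorPrime_mem_components hh hcov (hle _))
    relabel_h_notMem := d.relabel_notMem_embeddedColorPrime hh
    relabelComap_prime := d.relabelComap_embeddedColorPrime
    exists_eq_prime := d.exists_eq_embeddedColorPrime hcov hle
    exists_recoloring := d.exists_recoloring_of_embeddedColorPrime_eq }⟩

end ColorModel

section MarkedPrime

variable {S α β : Type} [Finite S]

lemma exists_mem_notMem_range (ι : S → β) (f : α ↪ β) {U : Finset α}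
    (hU : Nat.card S + 1 ≤ U.card) : ∃ u ∈ U, f u ∉ Set.range ι := by
  classical
  have := Fintype.ofFinite S
  have hcard : (Finset.univ.image ι).card < (U.map f).card := by
    rw [Finset.card_map]
    exact Finset.card_image_le.trans_lt (by rwa [Finset.card_univ, ← Nat.card_eq_fintype_card])
  obtain ⟨_, hu, hι⟩ := Finset.exists_mem_notMem_of_card_lt_card hcard
  obtain ⟨u, huU, rfl⟩ := Finset.mem_map.1 hu
  exact ⟨u, huU, fun ⟨s, hs⟩ => hι (Finset.mem_image.2 ⟨s, Finset.mem_univ s, hs⟩)⟩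

lemma exists_monochromatic_subset {C : Type*} [Finite C] (ι : S → α) (w : α → C) (m : ℕ)
    {U : Finset α} (hU : Nat.card S + Nat.card C * m + 1 ≤ U.card) :
    ∃ γ, ∃ V ⊆ U, m ≤ V.card ∧ ∀ v ∈ V, v ∉ Set.range ι ∧ w v = γ := by
  classical
  have := Fintype.ofFinite S
  have := Fintype.ofFinite C
  rw [Nat.card_eq_fintype_card, Nat.card_eq_fintype_card] at hU
  have hle : (Finset.univ.image ι).card ≤ Fintype.card S := Finset.card_image_le
  have hsdiff := Finset.le_card_sdiff (Finset.univ.image ι) U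
  obtain ⟨x, -⟩ := Finset.card_pos.1 (by omega : 0 < (U \ Finset.univ.image ι).card)
  obtain ⟨γ, -, hγ⟩ := Finset.exists_le_card_fiber_of_mul_le_card_of_maps_to (f := w) (n := m)
    (fun a _ => Finset.mem_univ (w a)) ⟨w x, Finset.mem_univ _⟩
    (by rw [Finset.card_univ]; omega : _ ≤ (U \ Finset.univ.image ι).card)
  refine ⟨γ, _, (Finset.filter_subset _ _).trans Finset.sdiff_subset, hγ, fun v hv => ?_⟩
  obtain ⟨hv, hvγ⟩ := Finset.mem_filter.1 hv
  exact ⟨fun ⟨s, hs⟩ => (Finset.mem_sdiff.1 hv).2 (Finset.mem_image.2 ⟨s, Finset.mem_univ s, hs⟩),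
    hvγ⟩

omit [Finite S] in
lemma exists_eq_swap_comp_some [DecidableEq α] (ι : S ↪ Option α) {u : α}
    (hu : some u ∉ Set.range ι) :
    ∃ ι₀ : S ↪ α, ⇑ι = Equiv.swap none (some u) ∘ some ∘ ι₀ := by
  have hsome (s : S) : ∃ a, some a = Equiv.swap none (some u) (ι s) :=
    Option.ne_none_iff_exists.1 fun h =>
      hu ⟨s, (Equiv.swap_apply_eq_iff.1 h).trans (Equiv.swap_apply_left _ _)⟩
  choose ι₀ hι₀ using hsome
  have hι : ⇑ι = Equiv.swap none (some u) ∘ some ∘ ι₀ := by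
    funext s
    simp only [Function.comp_apply, hι₀, Equiv.swap_apply_self]
  exact ⟨⟨ι₀, (hι ▸ ι.injective).of_comp.of_comp⟩, hι⟩

namespace ColorModel

universe u

variable {K : Type u} [Field K] {k : ℕ} {F : BoundedRankFamily K k} (d : ColorModel F)

section Swap

variable [Finite α] (ι : d.S ↪ α) (w : α → d.Color) {i j x : α}

lemma relabelComap_swap_prime [DecidableEq α] (hi : i ∉ Set.range ι) (hj : j ∉ Set.range ι) :
    relabelComap (Equiv.swap i j) (d.prime ι w) = d.prime ι (w ∘ Equiv.swap i j) := by
  have hι : ι.trans (Equiv.swap i j).toEmbedding = ι := by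
    ext s
    exact Equiv.swap_apply_of_ne_of_ne (fun h => hi ⟨s, h⟩) fun h => hj ⟨s, h⟩
  have h := d.relabelComap_prime (Equiv.swap i j).toEmbedding ι w
  rwa [hι] at h

lemma interchangeable_prime (hi : i ∉ Set.range ι) (hj : j ∉ Set.range ι) (hw : w i = w j) :
    interchangeable (d.prime ι w) i j := by
  classical
  rw [interchangeable_iff, d.relabelComap_swap_prime ι w hi hj]
  congr 1
  funext x
  rw [Function.comp_apply, Equiv.swap_apply_def]
  split_ifs with h h <;> simp only [h, hw]

lemma color_eq_of_interchangeable (hx : x ∉ Set.range ι) (hi : i ∉ Set.range ι)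
    (hj : j ∉ Set.range ι) (hij : i ≠ j) (hxj : x ≠ j) (hw : w i = w j)
    (h : interchangeable (d.prime ι w) x i) : w x = w i := by
  classical
  rw [interchangeable_iff, d.relabelComap_swap_prime ι w hx hi] at h
  obtain ⟨g, hg, -⟩ := d.exists_recoloring ι h
  have hgi := hg x hx
  have hgj := hg j hj
  rw [Function.comp_apply, Equiv.swap_apply_left] at hgi
  rw [Function.comp_apply, Equiv.swap_apply_of_ne_of_ne hxj.symm hij.symm] at hgj
  rw [hgi, hw, ← hgj]

end Swap

section Bound

variable [Nonempty d.Color]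

/-- The colouring of `d.S ⊕ α` used to read a map `c : α → d.S ⊕ d.Color`, which describes at each
index either an element of `d.S` or a colour, as a colouring; the remaining colours are
arbitrary. -/
noncomputable def markedColoring (c : α → d.S ⊕ d.Color) : d.S ⊕ α → d.Color :=
  Sum.elim (fun _ => Classical.arbitrary _) fun x => (c x).elim (fun _ => Classical.arbitrary _) id

/-- The map that sends each index marked by an element of `d.S` to that element. -/
def placeMarked (c : α → d.S ⊕ d.Color) (x : α) : d.S ⊕ α :=
  (c x).elim Sum.inl fun _ => Sum.inr x

/-- The ideal `d.prime ι w`, encoded by a single map `c` that records both `ι` and `w`. -/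
noncomputable def markedPrime (c : α → d.S ⊕ d.Color) : Ideal (EntryRing K α) :=
  relabelComap (d.placeMarked c) (d.prime .inl (d.markedColoring c))

lemma relabelComap_markedPrime [Finite α] [Finite β] (e : α ↪ β) (c : β → d.S ⊕ d.Color) :
    relabelComap e (d.markedPrime c) = d.markedPrime (c ∘ e) := by
  have hplace : d.placeMarked c ∘ e = Sum.map id e ∘ d.placeMarked (c ∘ e) := by
    funext x
    simp only [placeMarked, Function.comp_apply]
    cases c (e x) <;> rfl
  have hcolor : d.markedColoring (c ∘ e) = d.markedColoring c ∘ Sum.map id e := by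
    funext z
    cases z <;> rfl
  rw [markedPrime, markedPrime, relabelComap_relabelComap, hplace, ← relabelComap_relabelComap,
    hcolor]
  exact congrArg _ (d.relabelComap_prime ((Function.Embedding.refl d.S).sumMap e) .inl _)

/-- The map recording an embedding and a colouring of the complement of its range. -/
noncomputable def mark (ι : d.S ↪ α) (w : α → d.Color) : α → d.S ⊕ d.Color :=
  Sum.map id (fun x : {x // x ∉ Set.range ι} => w x) ∘ (sumComplRangeEquiv ι).symm

omit [Nonempty d.Color] in
lemma placeMarked_mark (ι : d.S ↪ α) (w : α → d.Color) :
    d.placeMarked (d.mark ι w) = Sum.map id (↑) ∘ (sumComplRangeEquiv ι).symm := by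
  funext x
  obtain ⟨z, rfl⟩ := (sumComplRangeEquiv ι).surjective x
  simp only [placeMarked, mark, Function.comp_apply, Equiv.symm_apply_apply]
  cases z <;> rfl

lemma markedPrime_mark [Finite α] (ι : d.S ↪ α) (w : α → d.Color) :
    d.markedPrime (d.mark ι w) = d.prime ι w := by
  let f : α ↪ d.S ⊕ α := (sumComplRangeEquiv ι).symm.toEmbedding.trans
    ((Function.Embedding.refl d.S).sumMap (.subtype _))
  have hf : d.placeMarked (d.mark ι w) = f := d.placeMarked_mark ι w
  have hι : ι.trans f = .inl :=
    DFunLike.ext _ _ fun s =>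
      congrArg (Sum.map id Subtype.val) (congrFun (sumComplRangeEquiv_symm_comp ι) s)
  rw [markedPrime, hf, ← hι, d.relabelComap_prime]
  refine d.prime_congr ι fun x hx => ?_
  have hsymm : (sumComplRangeEquiv ι).symm x = Sum.inr ⟨x, hx⟩ := (Equiv.symm_apply_eq _).2 rfl
  have hfx : f x = Sum.inr x := congrArg (Sum.map id Subtype.val) hsymm
  have hmark : d.mark ι w x = Sum.inr (w x) := congrArg (Sum.map id _) hsymm
  rw [Function.comp_apply, hfx, markedColoring, Sum.elim_inr, hmark]
  rfl

end Bound

lemma exists_bound_prime_le : ∃ N, ∀ {α : Type} [Finite α] [Nonempty α] (ι : d.S ↪ α)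
    (w : α → d.Color) (Q : Ideal (EntryRing K α)), Q.IsPrime → F.ideal α ≤ Q →
    (∀ m ≤ N, ∀ e : Fin m ↪ α, relabelComap e (d.prime ι w) ≤ relabelComap e Q) →
    d.prime ι w ≤ Q := by
  cases isEmpty_or_nonempty d.Color
  · exact ⟨0, fun {α} _ _ ι w => isEmptyElim (w (Classical.arbitrary α))⟩
  obtain ⟨N, hN⟩ := exists_bound_ideal_le_of_bounded_rank (K := K) k
    (fun n c => d.markedPrime (α := Fin n) c)
    fun m n c e he => (d.relabelComap_markedPrime ⟨e, he.injective⟩ c).ge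
  refine ⟨N, fun {α} _ _ ι w Q _ hFQ hle => ?_⟩
  obtain ⟨n, ⟨E⟩⟩ := Finite.exists_equiv_fin α
  have hmark : d.markedPrime (d.mark ι w ∘ E.symm) = relabelComap E.symm (d.prime ι w) := by
    rw [← d.markedPrime_mark ι w]
    exact (d.relabelComap_markedPrime E.symm.toEmbedding _).symm
  have hEQ := hN n (d.mark ι w ∘ E.symm) (relabelComap E.symm Q) (relabelComap_isPrime _ Q)
    (fun ρ γ => by
      rw [mem_relabelComap, relabel_genericMinor]
      exact hFQ (F.genericMinor_mem _ _ _))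
    fun m hm e he => by
      rw [Function.comp_assoc, relabelComap_relabelComap]
      refine le_trans (Eq.le ?_) (hle m hm ⟨E.symm ∘ e, E.symm.injective.comp he.injective⟩)
      rw [← d.markedPrime_mark ι w, d.relabelComap_markedPrime]
      rfl
  rw [hmark] at hEQ
  simpa [relabelComap_relabelComap] using relabelComap_mono E hEQ

end ColorModel

end MarkedPrime

section Stability

universe u

variable {K : Type u} [Field K] {k : ℕ} {F : BoundedRankFamily K k}

lemma interchangeable_some_iff {α : Type} [DecidableEq α] {Q : Ideal (EntryRing K (Option α))}
    (hQ : Q ∈ F.components (Option α)) {V : Finset α}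
    (hV : ∀ v ∈ V, interchangeable Q none (some v)) {x y : α}
    (huniq : ∀ Q' ∈ F.components (Option α), relabelComap some Q' = relabelComap some Q →
      (∀ v ∈ V \ {x, y}, interchangeable Q' none (some v)) → Q' = Q) :
    interchangeable Q (some x) (some y) ↔ interchangeable (relabelComap some Q) x y := by
  refine ⟨interchangeable_relabelComap (Option.some_injective α), fun h => ?_⟩
  rw [interchangeable_iff]
  refine huniq _ (relabelComap_mem_components _ hQ) ?_ fun v hv => ?_
  · rw [← relabelComap_swap_relabelComap (Option.some_injective α)]
    exact interchangeable_iff.1 h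
  · simp only [Finset.mem_sdiff, Finset.mem_insert, Finset.mem_singleton, not_or] at hv
    obtain ⟨hv, hvx, hvy⟩ := hv
    rw [interchangeable_relabelComap_equiv, Equiv.swap_apply_of_ne_of_ne (by simp) (by simp),
      Equiv.swap_apply_of_ne_of_ne (by simpa) (by simpa)]
    exact hV v hv

namespace ColorModel

variable (d : ColorModel F) {α : Type} [Finite α]

lemma interchangeable_of_mark_eq (ι : d.S ↪ α) (w : α → d.Color) {x y : α}
    (h : d.mark ι w x = d.mark ι w y) : interchangeable (d.prime ι w) x y := by
  obtain ⟨a, rfl⟩ := (sumComplRangeEquiv ι).surjective x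
  obtain ⟨b, rfl⟩ := (sumComplRangeEquiv ι).surjective y
  simp only [mark, Function.comp_apply, Equiv.symm_apply_apply] at h
  rcases a with s | a <;> rcases b with t | b
  · obtain rfl : s = t := Sum.inl_injective h
    exact (interchangeable _).refl _
  · cases h
  · cases h
  · exact d.interchangeable_prime ι w a.2 b.2 (Sum.inr_injective h)

lemma card_quotient_interchangeable_le (ι : d.S ↪ α) {P : Ideal (EntryRing K α)}
    (hP : P ∈ F.components α) (hh : relabel ι d.h ∉ P) :
    Nat.card (Quotient (interchangeable P)) ≤ Nat.card d.S + Nat.card d.Color := by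
  by_cases hι : ∃ x, x ∉ Set.range ι
  · obtain ⟨w, rfl⟩ := d.exists_eq_prime ι hP hh hι
    rw [← Nat.card_sum]
    refine Nat.card_le_card_of_injective (fun q => d.mark ι w q.out) fun q q' h => ?_
    rw [← q.out_eq, ← q'.out_eq]
    exact Quotient.sound (d.interchangeable_of_mark_eq ι w h)
  · push Not at hι
    exact ((Nat.card_le_card_of_surjective _ Quotient.mk_surjective).trans
      (Nat.card_le_card_of_surjective ι hι)).trans (Nat.le_add_right _ _)

lemma exists_extend_prime (ι : d.S ↪ α) (w : α → d.Color) (γ : d.Color) :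
    ∃ w' : Option α → d.Color, relabelComap some (d.prime (ι.trans .some) w') = d.prime ι w ∧
      ∀ v ∉ Set.range ι, w v = γ →
        interchangeable (d.prime (ι.trans .some) w') none (some v) :=
  ⟨fun o => o.elim γ w, d.relabelComap_prime .some ι _, fun v hv hγ =>
    d.interchangeable_prime _ _ (by simp) (by simpa using hv) hγ.symm⟩

omit [Finite α] in
lemma exists_relabel_some_h_notMem {Q : Ideal (EntryRing K (Option α))} {U : Finset α}
    (hU : Nat.card d.S + 1 ≤ U.card) (hQU : ∀ u ∈ U, interchangeable Q none (some u))
    {ι : d.S ↪ Option α} (hh : relabel ι d.h ∉ Q) :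
    ∃ ι₀ : d.S ↪ α, relabel (ι₀.trans .some) d.h ∉ Q := by
  classical
  obtain ⟨u, hu, hι⟩ := exists_mem_notMem_range ι .some hU
  obtain ⟨ι₀, hι₀⟩ := exists_eq_swap_comp_some ι hι
  refine ⟨ι₀, fun hmem => hh ?_⟩
  rw [← interchangeable_iff.1 (hQU u hu), mem_relabelComap, relabel_relabel] at hmem
  rwa [hι₀]

lemma eq_of_relabelComap_some_eq {Q Q' : Ideal (EntryRing K (Option α))}
    (hQ : Q ∈ F.components (Option α)) (hQ' : Q' ∈ F.components (Option α))
    (hQQ' : relabelComap some Q = relabelComap some Q') {U : Finset α}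
    (hU : Nat.card d.S + Nat.card d.Color * 2 + 1 ≤ U.card)
    (hQU : ∀ u ∈ U, interchangeable Q none (some u))
    (hQU' : ∀ u ∈ U, interchangeable Q' none (some u)) {ι : d.S ↪ α}
    (hh : relabel (ι.trans .some) d.h ∉ Q) : Q = Q' := by
  have hh' : relabel (ι.trans .some) d.h ∉ Q' := by
    rw [Function.Embedding.coe_trans, ← relabel_relabel, ← mem_relabelComap] at hh ⊢
    exact hQQ' ▸ hh
  have hnone : none ∉ Set.range (ι.trans .some) := by simp
  have hsome {x : α} : some x ∉ Set.range (ι.trans .some) ↔ x ∉ Set.range ι := by simp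
  obtain ⟨w, rfl⟩ := d.exists_eq_prime _ hQ hh ⟨none, hnone⟩
  obtain ⟨w', rfl⟩ := d.exists_eq_prime _ hQ' hh' ⟨none, hnone⟩
  obtain ⟨g, hgw, hg⟩ := d.exists_recoloring ι
    ((d.relabelComap_prime .some ι w).symm.trans (hQQ'.trans (d.relabelComap_prime .some ι w')))
  obtain ⟨γ, V, hVU, hV, hγ⟩ := exists_monochromatic_subset ι (w ∘ some) 2 hU
  obtain ⟨i, hi, j, hj, hij⟩ := Finset.one_lt_card.1 (by omega : 1 < V.card)
  obtain ⟨hiι, hwi⟩ := hγ i hi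
  obtain ⟨hjι, hwj⟩ := hγ j hj
  have hgi : w' (some i) = g (w (some i)) := hgw i hiι
  have hgj : w' (some j) = g (w (some j)) := hgw j hjι
  have hw : w (some i) = w (some j) := hwi.trans hwj.symm
  have hij' : some i ≠ some j := fun h => hij (Option.some_injective α h)
  have hwnone : w none = w (some i) := d.color_eq_of_interchangeable _ w hnone (hsome.2 hiι)
    (hsome.2 hjι) hij' (by simp) hw (hQU i (hVU hi))
  have hwnone' : w' none = w' (some i) := d.color_eq_of_interchangeable _ w' hnone (hsome.2 hiι)
    (hsome.2 hjι) hij' (by simp) (by rw [hgi, hgj, hw]) (hQU' i (hVU hi))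
  rw [← hg (ι.trans .some) w]
  refine d.prime_congr _ ?_
  rintro (_ | x) hx
  · rw [hwnone', Function.comp_apply, hwnone, hgi]
  · exact (hgw x (hsome.1 hx)).symm

lemma exists_extension_of_relabel_h_notMem {P : Ideal (EntryRing K α)} (hP : P ∈ F.components α)
    {U : Finset α}
    (hU : Nat.card d.S + Nat.card d.Color * (Nat.card d.S + Nat.card d.Color * 2 + 3) + 1 ≤ U.card)
    (hPU : ∀ u ∈ U, ∀ v ∈ U, interchangeable P u v) {ι : d.S ↪ α} (hh : relabel ι d.h ∉ P) :
    ∃ Q ∈ F.components (Option α), relabelComap some Q = P ∧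
      ∀ u ∈ U, interchangeable Q none (some u) := by
  classical
  obtain ⟨x, -, hx⟩ := exists_mem_notMem_range ι (.refl α) (U := U) (by omega)
  obtain ⟨w, rfl⟩ := d.exists_eq_prime ι hP hh ⟨_, hx⟩
  obtain ⟨γ, V, hVU, hV, hγ⟩ := exists_monochromatic_subset ι w _ hU
  obtain ⟨w', hres, hw'⟩ := d.exists_extend_prime ι w γ
  set Q := d.prime (ι.trans .some) w'
  have hQV : ∀ v ∈ V, interchangeable Q none (some v) := fun v hv => hw' v (hγ v hv).1 (hγ v hv).2
  refine ⟨Q, d.prime_mem_components _ w', hres, fun u hu => ?_⟩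
  obtain ⟨i, hi, -⟩ := Finset.exists_mem_ne (by omega : 1 < V.card) u
  refine (interchangeable Q).trans (hQV i hi)
    ((interchangeable_some_iff (d.prime_mem_components _ w') hQV fun Q' hQ' hQQ' hQV' => ?_).2
      (hres ▸ hPU i (hVU hi) u hu))
  have hcard := Finset.le_card_sdiff {i, u} V
  have hpair : ({i, u} : Finset α).card ≤ 2 := Finset.card_le_two
  exact (d.eq_of_relabelComap_some_eq (d.prime_mem_components _ w') hQ' hQQ'.symm (by omega)
    (fun v hv => hQV v (Finset.sdiff_subset hv)) hQV' (d.relabel_h_notMem _ w')).symm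

end ColorModel

end Stability

section StableComponents

universe u

variable {K : Type u} [Field K] {k : ℕ}

/-- The components of the varieties of `F` are eventually determined by finite data: each component
has at most `B` classes of interchangeable indices, and enlarging a class with at least `N`
elements by one more index is a bijection between components. -/
structure HasStableComponents (F : BoundedRankFamily K k) (B N : ℕ) : Prop where
  card_quotient_le : ∀ {α : Type} [Finite α] {P : Ideal (EntryRing K α)}, P ∈ F.components α →
    Nat.card (Quotient (interchangeable P)) ≤ B
  exists_extension : ∀ {α : Type} [Finite α] {P : Ideal (EntryRing K α)}, P ∈ F.components α →
    ∀ {U : Finset α}, N ≤ U.card → (∀ u ∈ U, ∀ v ∈ U, interchangeable P u v) →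
      ∃ Q ∈ F.components (Option α), relabelComap some Q = P ∧
        ∀ u ∈ U, interchangeable Q none (some u)
  extension_unique : ∀ {α : Type} [Finite α] {Q Q' : Ideal (EntryRing K (Option α))},
    Q ∈ F.components (Option α) → Q' ∈ F.components (Option α) →
      relabelComap some Q = relabelComap some Q' → ∀ {U : Finset α}, N ≤ U.card →
        (∀ u ∈ U, interchangeable Q none (some u)) →
          (∀ u ∈ U, interchangeable Q' none (some u)) → Q = Q'
  restrict_mem : ∀ {α : Type} [Finite α] {Q : Ideal (EntryRing K (Option α))},
    Q ∈ F.components (Option α) → ∀ {U : Finset α}, N ≤ U.card →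
      (∀ u ∈ U, interchangeable Q none (some u)) → relabelComap some Q ∈ F.components α

namespace BoundedRankFamily

variable {F : BoundedRankFamily K k} {S α : Type} {h : EntryRing K S} {P : Ideal (EntryRing K α)}

/-- The largest family contained in `F` on which all the relabellings of `h` vanish. -/
noncomputable def adjoin (F : BoundedRankFamily K k) (h : EntryRing K S) :
    BoundedRankFamily K k where
  ideal α := (F.ideal α ⊔ Ideal.span (Set.range fun ι : S ↪ α => relabel ι h)).radical
  isRadical _ := Ideal.radical_isRadical _
  genericMinor_mem α ρ γ := Ideal.le_radical (Ideal.mem_sup_left (F.genericMinor_mem α ρ γ))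
  le_relabelComap {α β} e he := by
    refine (Ideal.IsRadical.radical_le_iff ((Ideal.radical_isRadical _).comap _)).2 (sup_le
      ((F.le_relabelComap e he).trans (relabelComap_mono _ (le_sup_left.trans Ideal.le_radical)))
      (Ideal.span_le.2 (Set.range_subset_iff.2 fun ι => ?_)))
    rw [SetLike.mem_coe, Ideal.mem_comap, relabel_relabel]
    exact Ideal.le_radical (Ideal.mem_sup_right (Ideal.subset_span ⟨ι.trans ⟨e, he⟩, rfl⟩))

lemma le_adjoin : F.ideal α ≤ (F.adjoin h).ideal α :=
  le_sup_left.trans Ideal.le_radical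

lemma relabel_mem_adjoin (ι : S ↪ α) : relabel ι h ∈ (F.adjoin h).ideal α :=
  Ideal.le_radical (Ideal.mem_sup_right (Ideal.subset_span ⟨ι, rfl⟩))

lemma adjoin_le [hP : P.IsPrime] (hF : F.ideal α ≤ P) (hh : ∀ ι : S ↪ α, relabel ι h ∈ P) :
    (F.adjoin h).ideal α ≤ P :=
  hP.isRadical.radical_le_iff.2
    (sup_le hF (Ideal.span_le.2 (Set.range_subset_iff.2 hh)))

lemma mem_components_adjoin (hP : P ∈ F.components α) (hh : ∀ ι : S ↪ α, relabel ι h ∈ P) :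
    P ∈ (F.adjoin h).components α :=
  have := hP.1.1
  ⟨⟨hP.1.1, adjoin_le hP.1.2 hh⟩, fun _ hQ hle => hP.2 ⟨hQ.1, le_adjoin.trans hQ.2⟩ hle⟩

lemma mem_components_of_adjoin (hP : P ∈ (F.adjoin h).components α)
    (hh : ∀ Q ∈ F.components α, Q ≤ P → ∀ ι : S ↪ α, relabel ι h ∈ Q) : P ∈ F.components α := by
  have := hP.1.1
  obtain ⟨Q, hQ, hle⟩ := Ideal.exists_minimalPrimes_le (le_adjoin.trans hP.1.2)
  have := hQ.1.1
  rwa [le_antisymm (hP.2 ⟨hQ.1.1, adjoin_le hQ.1.2 (hh Q hQ hle)⟩ hle) hle]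

lemma adjoin_lt [Finite S] (hh : h ∉ F.ideal S) : (F.adjoin h).Lt F := by
  refine ⟨fun n => le_adjoin, ?_⟩
  obtain ⟨n, ⟨e⟩⟩ := Finite.exists_equiv_fin S
  refine ⟨n, fun heq => hh ?_⟩
  have hmem : relabel e h ∈ F.ideal (Fin n) := heq ▸ relabel_mem_adjoin e.toEmbedding
  simpa only [mem_relabelComap, relabel_relabel, Equiv.symm_comp_self, relabel_id] using
    F.le_relabelComap e.symm e.symm.injective hmem

lemma ideal_empty_ne_top (hP : P ∈ F.components α) : F.ideal Empty ≠ ⊤ := fun htop => by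
  have := hP.1.1
  refine (relabelComap_isPrime Empty.elim P).ne_top (top_le_iff.1 ?_)
  exact htop ▸ (F.le_relabelComap _ (fun x => x.elim)).trans (relabelComap_mono _ hP.1.2)

end BoundedRankFamily

namespace ColorModel

open BoundedRankFamily

variable {F : BoundedRankFamily K k} (d : ColorModel F) {α : Type} [Finite α] {B N : ℕ}
  (hd : HasStableComponents (F.adjoin d.h) B N)

include hd

lemma card_quotient_interchangeable_le_of_adjoin {P : Ideal (EntryRing K α)}
    (hP : P ∈ F.components α) :
    Nat.card (Quotient (interchangeable P)) ≤ B + (Nat.card d.S + Nat.card d.Color) := by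
  by_cases hh : ∀ ι : d.S ↪ α, relabel ι d.h ∈ P
  · exact (hd.card_quotient_le (mem_components_adjoin hP hh)).trans (Nat.le_add_right _ _)
  · push Not at hh
    obtain ⟨ι, hh⟩ := hh
    exact (d.card_quotient_interchangeable_le ι hP hh).trans (Nat.le_add_left _ _)

lemma exists_extension_of_relabel_h_mem {P : Ideal (EntryRing K α)} (hP : P ∈ F.components α)
    {U : Finset α} (hN : N ≤ U.card) (hU : Nat.card d.S + 1 ≤ U.card)
    (hPU : ∀ u ∈ U, ∀ v ∈ U, interchangeable P u v) (hh : ∀ ι : d.S ↪ α, relabel ι d.h ∈ P) :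
    ∃ Q ∈ F.components (Option α), relabelComap some Q = P ∧
      ∀ u ∈ U, interchangeable Q none (some u) := by
  classical
  obtain ⟨Q, hQ, hQP, hQU⟩ := hd.exists_extension (mem_components_adjoin hP hh) hN hPU
  refine ⟨Q, mem_components_of_adjoin hQ fun Q₁ hQ₁ hle ι => ?_, hQP, hQU⟩
  have := hQ₁.1.1
  obtain ⟨u, hu, hι⟩ := exists_mem_notMem_range ι .some hU
  obtain ⟨ι₀, hι₀⟩ := exists_eq_swap_comp_some ι hι
  have he : Function.Injective (Equiv.swap none (some u) ∘ some) :=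
    (Equiv.injective _).comp (Option.some_injective α)
  have hres : relabelComap (Equiv.swap none (some u) ∘ some) Q₁ ≤ P := by
    refine (relabelComap_mono _ hle).trans ?_
    rw [← relabelComap_relabelComap, interchangeable_iff.1 (hQU u hu), hQP]
  have hmem := hP.2 ⟨relabelComap_isPrime _ _,
    (F.le_relabelComap _ he).trans (relabelComap_mono _ hQ₁.1.2)⟩ hres (hh ι₀)
  rw [mem_relabelComap, relabel_relabel] at hmem
  rwa [hι₀]

lemma restrict_mem_of_relabel_h_mem : ∃ M, ∀ {α : Type} [Finite α]
    {Q : Ideal (EntryRing K (Option α))}, Q ∈ F.components (Option α) → ∀ {U : Finset α},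
      N ≤ U.card → Nat.card d.S + Nat.card d.Color * (M + 1) + 1 ≤ U.card →
        (∀ u ∈ U, interchangeable Q none (some u)) →
          (∀ ι : d.S ↪ Option α, relabel ι d.h ∈ Q) → relabelComap some Q ∈ F.components α := by
  classical
  obtain ⟨M, hM⟩ := d.exists_bound_prime_le
  refine ⟨M, fun {α _ Q} hQ {U} hN hU hQU hh => ?_⟩
  refine mem_components_of_adjoin (hd.restrict_mem (mem_components_adjoin hQ hh) hN hQU)
    fun P hP hle ι => by_contra fun hι => ?_
  obtain ⟨x, -, hx⟩ := exists_mem_notMem_range ι (.refl α) (U := U) (by omega)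
  obtain ⟨w, rfl⟩ := d.exists_eq_prime ι hP hι ⟨x, hx⟩
  obtain ⟨γ, V, hVU, hV, hγ⟩ := exists_monochromatic_subset ι w _ hU
  obtain ⟨w', hres, hw'⟩ := d.exists_extend_prime ι w γ
  suffices hleQ : d.prime (ι.trans .some) w' ≤ Q from
    d.relabel_h_notMem _ w' (hQ.2 (d.prime_mem_components _ w').1 hleQ (hh _))
  refine hM _ _ _ hQ.1.1 hQ.1.2 fun m hm e => ?_
  obtain ⟨v, hv, he⟩ := exists_mem_notMem_range e .some (U := V)
    (by rw [Nat.card_eq_fintype_card, Fintype.card_fin]; omega)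
  obtain ⟨e₀, he₀⟩ := exists_eq_swap_comp_some e he
  have hrestrict {R : Ideal (EntryRing K (Option α))} (hR : interchangeable R none (some v)) :
      relabelComap e R = relabelComap e₀ (relabelComap some R) := by
    rw [he₀, ← relabelComap_relabelComap, interchangeable_iff.1 hR, relabelComap_relabelComap]
  rw [hrestrict (hw' v (hγ v hv).1 (hγ v hv).2), hrestrict (hQU v (hVU hv)), hres]
  exact relabelComap_mono _ hle

lemma extension_unique_of_adjoin {Q Q' : Ideal (EntryRing K (Option α))}
    (hQ : Q ∈ F.components (Option α)) (hQ' : Q' ∈ F.components (Option α))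
    (hQQ' : relabelComap some Q = relabelComap some Q') {U : Finset α} (hN : N ≤ U.card)
    (hU : Nat.card d.S + Nat.card d.Color * 2 + 1 ≤ U.card)
    (hQU : ∀ u ∈ U, interchangeable Q none (some u))
    (hQU' : ∀ u ∈ U, interchangeable Q' none (some u)) : Q = Q' := by
  by_cases hh : ∀ ι : d.S ↪ Option α, relabel ι d.h ∈ Q
  · by_cases hh' : ∀ ι : d.S ↪ Option α, relabel ι d.h ∈ Q'
    · exact hd.extension_unique (mem_components_adjoin hQ hh) (mem_components_adjoin hQ' hh') hQQ'
        hN hQU hQU'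
    · push Not at hh'
      obtain ⟨ι, hι⟩ := hh'
      obtain ⟨ι₀, hι₀⟩ := d.exists_relabel_some_h_notMem (by omega) hQU' hι
      exact (d.eq_of_relabelComap_some_eq hQ' hQ hQQ'.symm hU hQU' hQU hι₀).symm
  · push Not at hh
    obtain ⟨ι, hι⟩ := hh
    obtain ⟨ι₀, hι₀⟩ := d.exists_relabel_some_h_notMem (by omega) hQU hι
    exact d.eq_of_relabelComap_some_eq hQ hQ' hQQ' hU hQU hQU' hι₀

omit hd in
lemma restrict_mem_of_relabel_h_notMem {Q : Ideal (EntryRing K (Option α))}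
    (hQ : Q ∈ F.components (Option α)) {U : Finset α} (hU : Nat.card d.S + 1 ≤ U.card)
    (hQU : ∀ u ∈ U, interchangeable Q none (some u)) {ι : d.S ↪ Option α}
    (hh : relabel ι d.h ∉ Q) : relabelComap some Q ∈ F.components α := by
  obtain ⟨ι₀, hι₀⟩ := d.exists_relabel_some_h_notMem hU hQU hh
  obtain ⟨w, rfl⟩ := d.exists_eq_prime _ hQ hι₀ ⟨none, by simp⟩
  have hres := d.relabelComap_prime .some ι₀ w
  exact hres ▸ d.prime_mem_components _ _

omit [Finite α] in
lemma exists_hasStableComponents_of_adjoin : ∃ B' N', HasStableComponents F B' N' := by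
  obtain ⟨M, hM⟩ := d.restrict_mem_of_relabel_h_mem hd
  set m := Nat.card d.S + Nat.card d.Color * 2 + 3 + M + 1
  have hm (j : ℕ) (hj : j ≤ m) : Nat.card d.Color * j ≤ Nat.card d.Color * m :=
    Nat.mul_le_mul_left _ hj
  have hm₁ := hm 2 (by omega)
  have hm₂ := hm (M + 1) (by omega)
  have hm₃ := hm (Nat.card d.S + Nat.card d.Color * 2 + 3) (by omega)
  refine ⟨B + (Nat.card d.S + Nat.card d.Color),
    N + Nat.card d.S + Nat.card d.Color * m + 1, ?_, ?_, ?_, ?_⟩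
  · exact fun hP => d.card_quotient_interchangeable_le_of_adjoin hd hP
  · intro α _ P hP U hU hPU
    by_cases hh : ∀ ι : d.S ↪ α, relabel ι d.h ∈ P
    · exact d.exists_extension_of_relabel_h_mem hd hP (by omega) (by omega) hPU hh
    · push Not at hh
      obtain ⟨ι, hι⟩ := hh
      exact d.exists_extension_of_relabel_h_notMem hP (by omega) hPU hι
  · intro α _ Q Q' hQ hQ' hQQ' U hU hQU hQU'
    exact d.extension_unique_of_adjoin hd hQ hQ' hQQ' (by omega) (by omega) hQU hQU'
  · intro α _ Q hQ U hU hQU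
    by_cases hh : ∀ ι : d.S ↪ Option α, relabel ι d.h ∈ Q
    · exact hM hQ (by omega) (by omega) hQU hh
    · push Not at hh
      obtain ⟨ι, hι⟩ := hh
      exact d.restrict_mem_of_relabel_h_notMem hQ (by omega) hQU hι

end ColorModel

theorem exists_hasStableComponents (F : BoundedRankFamily K k) :
    ∃ B N, HasStableComponents F B N := by
  induction F using BoundedRankFamily.wellFounded_lt.induction with
  | _ F ih =>
  by_cases hF : F.ideal Empty = ⊤
  · exact ⟨0, 0, fun hP => absurd hF (BoundedRankFamily.ideal_empty_ne_top hP),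
      fun hP => absurd hF (BoundedRankFamily.ideal_empty_ne_top hP),
      fun hP => absurd hF (BoundedRankFamily.ideal_empty_ne_top hP),
      fun hP => absurd hF (BoundedRankFamily.ideal_empty_ne_top hP)⟩
  · obtain ⟨d⟩ := exists_colorModel hF
    obtain ⟨B, N, hd⟩ := ih (F.adjoin d.h) (BoundedRankFamily.adjoin_lt d.h_notMem)
    exact d.exists_hasStableComponents_of_adjoin hd

end StableComponents

/-! ### Components with blocks of interchangeable indices -/

section Labelling

universe u

variable {K : Type u} [Field K] {k : ℕ} {F : BoundedRankFamily K k} {α β L : Type}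

/-- `Q` is a component whose classes of interchangeable indices with at least `M` elements are the
nonempty fibres of `f` over `some i`; the indices in smaller classes are sent to `none`. -/
structure IsLabelling (F : BoundedRankFamily K k) (M : ℕ) (f : α → Option L)
    (Q : Ideal (EntryRing K α)) : Prop where
  mem_components : Q ∈ F.components α
  interchangeable_iff_eq_some : ∀ {x y i}, f x = some i → (interchangeable Q x y ↔ f y = some i)
  card_lt_of_eq_none : ∀ {x}, f x = none → Nat.card {y // interchangeable Q x y} < M

namespace IsLabelling

variable {M : ℕ} {f : β → Option L} {Q : Ideal (EntryRing K β)}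

lemma comp_equiv (hQ : IsLabelling F M f Q) (e : α ≃ β) :
    IsLabelling F M (f ∘ e) (relabelComap e Q) where
  mem_components := relabelComap_mem_components e hQ.mem_components
  interchangeable_iff_eq_some hx :=
    (interchangeable_relabelComap_equiv e).trans (hQ.interchangeable_iff_eq_some hx)
  card_lt_of_eq_none hx := by
    rw [Nat.card_congr (e.subtypeEquiv fun _ => interchangeable_relabelComap_equiv e)]
    exact hQ.card_lt_of_eq_none hx

lemma bijOn_relabelComap_equiv (e : α ≃ β) (f : β → Option L) :
    Set.BijOn (relabelComap e) {Q | IsLabelling F M f Q} {P | IsLabelling F M (f ∘ e) P} := by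
  refine ⟨fun Q hQ => hQ.comp_equiv e, fun Q _ Q' _ h => ?_, fun P hP =>
    ⟨relabelComap e.symm P, ?_, ((relabelComap_equiv_symm e).1 rfl).symm⟩⟩
  · exact ((relabelComap_equiv_symm e).2 h.symm).symm.trans ((relabelComap_equiv_symm e).2 rfl)
  · have hP' := hP.comp_equiv e.symm
    rwa [Function.comp_assoc, Equiv.self_comp_symm, Function.comp_id] at hP'

end IsLabelling

namespace HasStableComponents

variable {B N : ℕ} (hF : HasStableComponents F B N)

include hF

section Some

variable [Finite α] {Q : Ideal (EntryRing K (Option α))}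

lemma interchangeable_some_iff (hQ : Q ∈ F.components (Option α)) {U : Finset α}
    (hU : N + 2 ≤ U.card) (hQU : ∀ u ∈ U, interchangeable Q none (some u)) {x y : α} :
    interchangeable Q (some x) (some y) ↔ interchangeable (relabelComap some Q) x y := by
  classical
  have hcard := Finset.le_card_sdiff {x, y} U
  have hpair : ({x, y} : Finset α).card ≤ 2 := Finset.card_le_two
  exact _root_.interchangeable_some_iff hQ hQU fun Q' hQ' hQQ' hQU' =>
    hF.extension_unique hQ' hQ hQQ' (by omega) hQU' fun u hu => hQU u (Finset.sdiff_subset hu)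

variable {f : Option α → Option L} {i : L} {U : Finset α}

lemma isLabelling_relabelComap_some (hQ : IsLabelling F (N + 2) f Q) (hi : f none = some i)
    (hU : N + 2 ≤ U.card) (hUf : ∀ u ∈ U, f (some u) = some i) :
    IsLabelling F (N + 2) (f ∘ some) (relabelComap some Q) := by
  have hQU (u : α) (hu : u ∈ U) : interchangeable Q none (some u) :=
    (hQ.interchangeable_iff_eq_some hi).2 (hUf u hu)
  have hiff {x y : α} := hF.interchangeable_some_iff hQ.mem_components hU hQU (x := x) (y := y)
  refine ⟨hF.restrict_mem hQ.mem_components (by omega) hQU,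
    fun hx => hiff.symm.trans (hQ.interchangeable_iff_eq_some hx), fun {x} hx => ?_⟩
  exact (Nat.card_le_card_of_injective (Subtype.map some fun _ => hiff.2)
    (Subtype.map_injective _ (Option.some_injective α))).trans_lt (hQ.card_lt_of_eq_none hx)

lemma isLabelling_of_relabelComap_some (hQ : Q ∈ F.components (Option α))
    (hP : IsLabelling F (N + 2) (f ∘ some) (relabelComap some Q)) (hi : f none = some i)
    (hU : N + 2 ≤ U.card) (hUf : ∀ u ∈ U, f (some u) = some i)
    (hQU : ∀ u ∈ U, interchangeable Q none (some u)) : IsLabelling F (N + 2) f Q := by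
  have hiff {x y : α} := hF.interchangeable_some_iff hQ hU hQU (x := x) (y := y)
  obtain ⟨u, hu⟩ := Finset.card_pos.1 (by omega : 0 < U.card)
  have hrep (x : Option α) : ∃ a, interchangeable Q x (some a) ∧ f x = f (some a) := by
    cases x with
    | none => exact ⟨u, hQU u hu, hi.trans (hUf u hu).symm⟩
    | some a => exact ⟨a, (interchangeable Q).refl _, rfl⟩
  have hlabel {x y : Option α} {j : L} (hx : f x = some j) :
      interchangeable Q x y ↔ f y = some j := by
    obtain ⟨a, hxa, ha⟩ := hrep x
    obtain ⟨b, hyb, hb⟩ := hrep y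
    rw [hb, ← Function.comp_apply (f := f), ← hP.interchangeable_iff_eq_some (ha ▸ hx), ← hiff]
    exact ⟨fun h => (interchangeable Q).trans ((interchangeable Q).symm hxa)
      ((interchangeable Q).trans h hyb), fun h => (interchangeable Q).trans hxa
      ((interchangeable Q).trans h ((interchangeable Q).symm hyb))⟩
  refine ⟨hQ, hlabel, ?_⟩
  rintro (_ | x) hx
  · rw [hi] at hx
    cases hx
  · refine (Nat.card_le_card_of_surjective (Subtype.map some fun y => hiff.2) ?_).trans_lt
      (hP.card_lt_of_eq_none hx)
    rintro ⟨_ | y, hy⟩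
    · rw [(hlabel hi).1 ((interchangeable Q).symm hy)] at hx
      cases hx
    · exact ⟨⟨y, hiff.1 hy⟩, rfl⟩

lemma bijOn_relabelComap_some (hi : f none = some i)
    (hcard : N + 2 ≤ Nat.card {x // f (some x) = some i}) :
    Set.BijOn (relabelComap some) {Q | IsLabelling F (N + 2) f Q}
      {P | IsLabelling F (N + 2) (f ∘ some) P} := by
  classical
  have := Fintype.ofFinite α
  set U : Finset α := {x | f (some x) = some i}
  have hU : N + 2 ≤ U.card := by
    rwa [Nat.card_eq_fintype_card, Fintype.card_subtype] at hcard
  have hUf (u : α) (hu : u ∈ U) : f (some u) = some i := (Finset.mem_filter.1 hu).2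
  have hQU {Q : Ideal (EntryRing K (Option α))} (hQ : IsLabelling F (N + 2) f Q) (u : α)
      (hu : u ∈ U) : interchangeable Q none (some u) :=
    (hQ.interchangeable_iff_eq_some hi).2 (hUf u hu)
  refine ⟨fun Q hQ => hF.isLabelling_relabelComap_some hQ hi hU hUf, fun Q hQ Q' hQ' h =>
    hF.extension_unique hQ.mem_components hQ'.mem_components h (by omega : N ≤ U.card) (hQU hQ)
      (hQU hQ'), fun P hP => ?_⟩
  obtain ⟨Q, hQ, rfl, hQU⟩ := hF.exists_extension hP.mem_components (by omega : N ≤ U.card)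
    fun u hu v hv => (hP.interchangeable_iff_eq_some (hUf u hu)).2 (hUf v hv)
  exact ⟨Q, hF.isLabelling_of_relabelComap_some hQ hP hi hU hUf hQU, rfl⟩

end Some

theorem bijOn_relabelComap [Finite α] [Finite β] (e : α ↪ β) (f : β → Option L)
    (hf : ∀ x ∉ Set.range e, f x ≠ none)
    (hcard : ∀ i, N + 2 ≤ Nat.card {x // f (e x) = some i}) :
    Set.BijOn (relabelComap e) {Q | IsLabelling F (N + 2) f Q}
      {P | IsLabelling F (N + 2) (f ∘ e) P} := by
  obtain ⟨n, hn⟩ := Nat.exists_eq_add_of_le (Nat.card_le_card_of_injective e e.injective)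
  induction n generalizing α with
  | zero =>
    exact IsLabelling.bijOn_relabelComap_equiv (Equiv.ofBijective e
      ((Nat.bijective_iff_injective_and_card e).2 ⟨e.injective, hn.symm⟩)) f
  | succ n ih =>
    obtain ⟨b, hb⟩ : ∃ b, b ∉ Set.range e := by
      by_contra! hsurj
      have := Nat.card_le_card_of_surjective e hsurj
      omega
    let e' : Option α ↪ β := e.optionElim b hb
    have hbij := ih e' (fun x hx => hf x fun ⟨y, hy⟩ => hx ⟨some y, hy⟩) (fun i =>
      (hcard i).trans (Nat.card_le_card_of_injective
        (Subtype.map (q := fun x => f (e' x) = some i) some fun _ => id)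
        (Subtype.map_injective _ (Option.some_injective α)))) (by rw [Finite.card_option]; omega)
    obtain ⟨i, hi⟩ := Option.ne_none_iff_exists'.1 (hf b hb)
    have hcomp := (hF.bijOn_relabelComap_some (f := f ∘ e') hi (hcard i)).comp hbij
    rwa [show relabelComap (K := K) some ∘ relabelComap e' = relabelComap e from
      funext fun Q => relabelComap_relabelComap _ _ Q] at hcomp

end HasStableComponents

lemma relabelComap_perm_eq [Finite α] {Q : Ideal (EntryRing K α)} (π : Equiv.Perm α)
    (hπ : ∀ x, interchangeable Q x (π x)) : relabelComap π Q = Q := by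
  classical
  set swaps : Set (Equiv.Perm α) :=
    {τ | ∃ i j, i ≠ j ∧ interchangeable Q i j ∧ τ = Equiv.swap i j}
  have hswaps : ∀ τ ∈ swaps, τ.IsSwap := fun τ ⟨i, j, hij, _, hτ⟩ => ⟨i, j, hij, hτ⟩
  have hmem : π ∈ Subgroup.closure swaps := by
    refine (mem_closure_isSwap hswaps).2 ⟨Set.toFinite _, fun x => ?_⟩
    by_cases hx : x = π x
    · rw [← hx]
      exact MulAction.mem_orbit_self _
    · exact ⟨⟨Equiv.swap x (π x), Subgroup.subset_closure ⟨x, π x, hx, hπ x, rfl⟩⟩,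
        Equiv.swap_apply_left _ _⟩
  clear hπ
  induction hmem using Subgroup.closure_induction with
  | mem τ hτ =>
    obtain ⟨i, j, -, hij, rfl⟩ := hτ
    exact interchangeable_iff.1 hij
  | one => exact relabelComap_id Q
  | mul a b _ _ ha hb => rw [Equiv.Perm.coe_mul, ← relabelComap_relabelComap, ha, hb]
  | inv a _ ha => exact (relabelComap_equiv_symm a).2 ha.symm

end Labelling

section BlockIndex

/-- The index sets of components with large classes of interchangeable indices: `T` collects the
indices in small classes, and the large classes are blocks of sizes `m i`. -/
abbrev BlockIndex (T : Type) {L : Type} (m : L → ℕ) : Type := T ⊕ Σ i, Fin (m i)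

namespace BlockIndex

variable {T T' L L' : Type} {m n : L → ℕ} {m' n' : L' → ℕ}

/-- The block that contains an index, and `none` for the indices in `T`. -/
def label : BlockIndex T m → Option L :=
  Sum.elim (fun _ => none) fun p => some p.1

/-- The inclusion of the initial segments of larger blocks. -/
def inclusion (h : ∀ i, m i ≤ n i) : BlockIndex T m ↪ BlockIndex T n :=
  (Function.Embedding.refl T).sumMap
    (Function.Embedding.sigmaMap (.refl L) fun i => Fin.castLEEmb (h i))

/-- The bijection that matches `T` with `T'` by `ρ` and the blocks with the blocks by `σ`, keeping
the order of the indices in each block. -/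
def equiv (ρ : T ≃ T') (σ : L ≃ L') (h : ∀ i, m i = m' (σ i)) : BlockIndex T m ≃ BlockIndex T' m' :=
  Equiv.sumCongr ρ (Equiv.sigmaCongr σ fun i => finCongr (h i))

lemma card_label_eq_some (i : L) : Nat.card {x : BlockIndex T m // label x = some i} = m i := by
  let enum (a : Fin (m i)) : {x : BlockIndex T m // label x = some i} := ⟨Sum.inr ⟨i, a⟩, rfl⟩
  have henum : Function.Bijective enum := by
    refine ⟨fun a b h => by cases h; rfl, ?_⟩
    rintro ⟨_ | ⟨j, a⟩, h⟩ <;> cases h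
    exact ⟨a, rfl⟩
  rw [← Nat.card_congr (Equiv.ofBijective enum henum), Nat.card_fin]

lemma label_comp_inclusion (h : ∀ i, m i ≤ n i) :
    label ∘ inclusion h = (label : BlockIndex T m → Option L) :=
  funext fun x => by cases x <;> rfl

lemma label_equiv (ρ : T ≃ T') (σ : L ≃ L') (h : ∀ i, m i = m' (σ i)) (x : BlockIndex T m) :
    label (equiv ρ σ h x) = (label x).map σ := by
  cases x <;> rfl

lemma equiv_inclusion (ρ : T ≃ T') (σ : L ≃ L') (h : ∀ i, m i = m' (σ i))
    (h' : ∀ i, n i = n' (σ i)) (hle : ∀ i, m i ≤ n i) (hle' : ∀ i, m' i ≤ n' i)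
    (x : BlockIndex T m) :
    equiv ρ σ h' (inclusion hle x) = inclusion hle' (equiv ρ σ h x) := by
  cases x <;> rfl

lemma exists_equiv_of_label_eq (σ : L ≃ L') (E : BlockIndex T m ≃ BlockIndex T' m')
    (hE : ∀ x, label (E x) = (label x).map σ) :
    ∃ (ρ : T ≃ T') (h : ∀ i, m i = m' (σ i)), ∀ t, E (Sum.inl t) = equiv ρ σ h (Sum.inl t) := by
  have hT (t : T) : ∃ t', E (Sum.inl t) = Sum.inl t' := by
    have h := hE (Sum.inl t)
    cases hx : E (Sum.inl t) with
    | inl t' => exact ⟨t', rfl⟩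
    | inr p => simp [label, hx] at h
  have hT' (t' : T') : ∃ t, E (Sum.inl t) = Sum.inl t' := by
    obtain ⟨x, hx⟩ := E.surjective (Sum.inl t')
    have h := hE x
    cases x with
    | inl t => exact ⟨t, hx⟩
    | inr p => simp [label, hx] at h
  choose ρ hρ using hT
  have hbij : Function.Bijective ρ := by
    refine ⟨fun t t' h => Sum.inl_injective (E.injective ?_), fun t' => ?_⟩
    · rw [hρ, hρ, h]
    · obtain ⟨t, ht⟩ := hT' t'
      exact ⟨t, Sum.inl_injective ((hρ t).symm.trans ht)⟩
  refine ⟨Equiv.ofBijective ρ hbij, fun i => ?_, hρ⟩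
  rw [← card_label_eq_some (T := T) (m := m), ← card_label_eq_some (T := T') (m := m')]
  refine Nat.card_congr (E.subtypeEquiv fun x => ?_)
  rw [hE, Option.map_eq_some_iff]
  simp

lemma card_mem_small_class_le {α : Type*} [Finite α] (r : Setoid α) (M : ℕ) :
    Nat.card {x // ¬M ≤ Nat.card {y // Quotient.mk r y = Quotient.mk r x}} ≤
      Nat.card (Quotient r) * M := by
  let Small (c : Quotient r) : Prop := ¬M ≤ Nat.card {y // Quotient.mk r y = c}
  have := Fintype.ofFinite {c // Small c}
  rw [← Nat.card_congr (Equiv.sigmaSubtypeFiberEquivSubtype (Quotient.mk r) (q := Small)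
    fun _ => Iff.rfl), Nat.card_sigma]
  refine (Finset.sum_le_card_nsmul _ _ M fun c _ => (not_le.1 c.2).le).trans ?_
  rw [smul_eq_mul, Finset.card_univ, ← Nat.card_eq_fintype_card]
  exact Nat.mul_le_mul_right M (Finite.card_subtype_le _)

open scoped Classical in
/-- The blocks are the classes with at least `M` elements. -/
lemma exists_equiv_of_setoid {α : Type} [Finite α] (r : Setoid α) (M : ℕ) :
    ∃ ℓ ≤ Nat.card (Quotient r), ∃ s ≤ Nat.card (Quotient r) * M, ∃ m : Fin ℓ → ℕ,
      (∀ i, M ≤ m i) ∧ ∃ E : BlockIndex (Fin s) m ≃ α,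
        (∀ {x y i}, label (E.symm x) = some i → (r x y ↔ label (E.symm y) = some i)) ∧
          ∀ {x}, label (E.symm x) = none → Nat.card {y // r x y} < M := by
  let fiber (c : Quotient r) : Type := {x // Quotient.mk r x = c}
  let Large (c : Quotient r) : Prop := M ≤ Nat.card (fiber c)
  let T := {x // ¬Large (Quotient.mk r x)}
  let σ := (Finite.equivFin {c // Large c}).symm
  let E : BlockIndex (Fin (Nat.card T)) (fun i => Nat.card (fiber (σ i))) ≃ α :=
    (Equiv.sumCongr (Finite.equivFin T).symm ((Equiv.sigmaCongr σ fun i =>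
      (Finite.equivFin (fiber (σ i))).symm).trans
        (Equiv.sigmaSubtypeFiberEquivSubtype (Quotient.mk r) fun _ => Iff.rfl))).trans
          ((Equiv.sumComm _ _).trans (Equiv.sumCompl fun x => Large (Quotient.mk r x)))
  have hsome {i} : ∀ x, Quotient.mk r (E x) = σ i ↔ label x = some i := by
    rintro (t | ⟨j, a⟩)
    · refine iff_of_false (fun h => ((Finite.equivFin T).symm t).2 ?_) (by simp [label])
      exact h ▸ (σ i).2
    · rw [show Quotient.mk r (E (Sum.inr ⟨j, a⟩)) = σ j from
        ((Finite.equivFin (fiber (σ j))).symm a).2, Subtype.coe_inj, σ.apply_eq_iff_eq]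
      simp [label]
  refine ⟨_, Finite.card_subtype_le Large, _, card_mem_small_class_le r M, _, fun i => (σ i).2, E,
    fun {x y i} hx => ?_, fun {x} hx => ?_⟩
  · rw [← hsome, E.apply_symm_apply] at hx ⊢
    rw [← hx, Quotient.eq, r.comm']
  · obtain ⟨t | p, rfl⟩ := E.surjective x
    · rw [Nat.card_congr (Equiv.subtypeEquivRight fun y => r.comm'.trans Quotient.eq.symm)]
      exact not_le.1 ((Finite.equivFin T).symm t).2
    · rw [E.symm_apply_apply] at hx
      cases hx

end BlockIndex

end BlockIndex

section Skeleton

universe u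

variable {K : Type u} [Field K] {k : ℕ} {F : BoundedRankFamily K k} {M : ℕ}

namespace IsLabelling

variable {α L L' : Type} {Q : Ideal (EntryRing K α)} {f : α → Option L} {f' : α → Option L'}

lemma of_map (σ : L ≃ L') (hQ : IsLabelling F M (fun x => (f x).map σ) Q) :
    IsLabelling F M f Q := by
  refine ⟨hQ.mem_components, fun {x y i} hx => ?_,
    fun {x} hx => hQ.card_lt_of_eq_none (by simp [hx])⟩
  rw [hQ.interchangeable_iff_eq_some (i := σ i) (by simp [hx]), Option.map_eq_some_iff]
  simp

lemma exists_eq_some_iff (hQ : IsLabelling F M f Q) (hQ' : IsLabelling F M f' Q) (hM : 0 < M)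
    (hf : ∀ i, M ≤ Nat.card {x // f x = some i}) (i : L) :
    ∃ j, ∀ x, f x = some i ↔ f' x = some j := by
  obtain ⟨⟨x, hx⟩⟩ := (Nat.card_pos_iff.1 (hM.trans_le (hf i))).1
  have hlarge : f' x ≠ none := fun h => (hQ'.card_lt_of_eq_none h).not_ge <| by
    simpa only [hQ.interchangeable_iff_eq_some hx] using hf i
  obtain ⟨j, hj⟩ := Option.ne_none_iff_exists'.1 hlarge
  exact ⟨j, fun y => (hQ.interchangeable_iff_eq_some hx).symm.trans
    (hQ'.interchangeable_iff_eq_some hj)⟩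

lemma exists_eq_map (hQ : IsLabelling F M f Q) (hQ' : IsLabelling F M f' Q) (hM : 0 < M)
    (hf : ∀ i, M ≤ Nat.card {x // f x = some i}) (hf' : ∀ i, M ≤ Nat.card {x // f' x = some i}) :
    ∃ σ : L ≃ L', ∀ x, f' x = (f x).map σ := by
  choose σ hσ using hQ.exists_eq_some_iff hQ' hM hf
  choose τ hτ using hQ'.exists_eq_some_iff hQ hM hf'
  have hτσ (i : L) : τ (σ i) = i := by
    obtain ⟨⟨x, hx⟩⟩ := (Nat.card_pos_iff.1 (hM.trans_le (hf i))).1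
    exact Option.some_injective L (((hτ _ x).1 ((hσ i x).1 hx)).symm.trans hx)
  have hστ (j : L') : σ (τ j) = j := by
    obtain ⟨⟨x, hx⟩⟩ := (Nat.card_pos_iff.1 (hM.trans_le (hf' j))).1
    exact Option.some_injective L' (((hσ _ x).1 ((hτ j x).1 hx)).symm.trans hx)
  refine ⟨⟨σ, τ, hτσ, hστ⟩, fun x => ?_⟩
  cases hx : f x with
  | some i => exact (hσ i x).1 hx
  | none =>
    refine Option.eq_none_iff_forall_ne_some.2 fun j hj => ?_
    rw [(hτ j x).1 hj] at hx
    cases hx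

open BlockIndex

variable {T T' : Type} [Finite T'] [Finite L'] {m : L → ℕ} {m' : L' → ℕ}

/-- A bijection compatible with the labels differs from one of the form `equiv ρ σ h` by a
permutation that preserves the classes of interchangeable indices. -/
lemma exists_relabelComap_equiv_eq {Q' : Ideal (EntryRing K (BlockIndex T' m'))}
    (hQ' : IsLabelling F M label Q') (E : BlockIndex T m ≃ BlockIndex T' m')
    (hQ : IsLabelling F M label (relabelComap E Q')) (hM : 0 < M) (hm : ∀ i, M ≤ m i)
    (hm' : ∀ i, M ≤ m' i) :
    ∃ (ρ : T ≃ T') (σ : L ≃ L') (h : ∀ i, m i = m' (σ i)),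
      relabelComap (equiv ρ σ h) Q' = relabelComap E Q' := by
  obtain ⟨σ, hσ⟩ := hQ.exists_eq_map (hQ'.comp_equiv E) hM
    (fun i => (hm i).trans_eq (card_label_eq_some i).symm) fun i => (hm' i).trans_eq <|
      (card_label_eq_some i).symm.trans (Nat.card_congr (E.subtypeEquiv fun _ => Iff.rfl)).symm
  obtain ⟨ρ, h, hρ⟩ := exists_equiv_of_label_eq σ E hσ
  refine ⟨ρ, σ, h, ?_⟩
  have hperm : relabelComap ((equiv ρ σ h).symm.trans E) Q' = Q' := by
    refine relabelComap_perm_eq _ fun x => ?_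
    obtain ⟨t | p, rfl⟩ := (equiv ρ σ h).surjective x
    · rw [Equiv.trans_apply, Equiv.symm_apply_apply, hρ]
    · rw [hQ'.interchangeable_iff_eq_some (label_equiv ρ σ h (Sum.inr p)), Equiv.trans_apply,
        Equiv.symm_apply_apply]
      exact hσ _
  calc relabelComap (equiv ρ σ h) Q'
      = relabelComap (equiv ρ σ h) (relabelComap ((equiv ρ σ h).symm.trans E) Q') := by rw [hperm]
    _ = relabelComap E Q' := by
      rw [relabelComap_relabelComap]
      exact congrArg (relabelComap · Q') (funext fun x => by simp)

end IsLabelling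

open BlockIndex

namespace HasStableComponents

variable {B N : ℕ} (hF : HasStableComponents F B N)

include hF

lemma exists_isLabelling_label {α : Type} [Finite α] {Q : Ideal (EntryRing K α)}
    (hQ : Q ∈ F.components α) (M : ℕ) :
    ∃ ℓ ≤ B, ∃ s ≤ B * M, ∃ m : Fin ℓ → ℕ, (∀ i, M ≤ m i) ∧ ∃ E : BlockIndex (Fin s) m ≃ α,
      IsLabelling F M label (relabelComap E Q) := by
  obtain ⟨ℓ, hℓ, s, hs, m, hm, E, hsome, hnone⟩ := exists_equiv_of_setoid (interchangeable Q) M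
  have hcard := hF.card_quotient_le hQ
  refine ⟨ℓ, hℓ.trans hcard, s, hs.trans (Nat.mul_le_mul_right M hcard), m, hm, E, ?_⟩
  have hlabel := (IsLabelling.mk (f := label ∘ E.symm) hQ hsome hnone).comp_equiv E
  rwa [Function.comp_assoc, E.symm_comp_self, Function.comp_id] at hlabel

variable {T T' L L' : Type} [Finite T] [Finite L] [Finite T'] [Finite L'] {m : L → ℕ} {m' : L' → ℕ}

lemma bijOn_relabelComap_inclusion (hm : ∀ i, N + 2 ≤ m i) :
    Set.BijOn (relabelComap (inclusion (T := T) hm))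
      {Q : Ideal (EntryRing K (BlockIndex T m)) | IsLabelling F (N + 2) label Q}
      {P | IsLabelling F (N + 2) label P} := by
  have h := hF.bijOn_relabelComap (inclusion (T := T) hm) label ?_ fun i => ?_
  · rwa [label_comp_inclusion] at h
  · rintro (t | p) hx
    · exact absurd ⟨Sum.inl t, rfl⟩ hx
    · simp [label]
  · simp_rw [← Function.comp_apply (f := label), label_comp_inclusion]
    exact (card_label_eq_some (m := fun _ => N + 2) i).ge

variable {Q : Ideal (EntryRing K (BlockIndex T m))} {Q' : Ideal (EntryRing K (BlockIndex T' m'))}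

theorem exists_relabelComap_eq_iff (hQ : IsLabelling F (N + 2) label Q)
    (hQ' : IsLabelling F (N + 2) label Q') (hm : ∀ i, N + 2 ≤ m i) (hm' : ∀ i, N + 2 ≤ m' i) :
    (∃ E : BlockIndex T m ≃ BlockIndex T' m', relabelComap E Q' = Q) ↔
      ∃ (ρ : T ≃ T') (σ : L ≃ L'), (∀ i, m i = m' (σ i)) ∧
        relabelComap (equiv ρ σ fun _ => rfl) (relabelComap (inclusion hm') Q') =
          relabelComap (inclusion hm) Q := by
  have hsquare (ρ : T ≃ T') (σ : L ≃ L') (h : ∀ i, m i = m' (σ i)) :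
      relabelComap (equiv ρ σ fun _ => rfl) (relabelComap (inclusion hm') Q') =
        relabelComap (inclusion hm) (relabelComap (equiv ρ σ h) Q') := by
    rw [relabelComap_relabelComap, relabelComap_relabelComap]
    exact congrArg (relabelComap · Q') (funext fun x => (equiv_inclusion ρ σ _ h hm hm' x).symm)
  constructor
  · rintro ⟨E, rfl⟩
    obtain ⟨ρ, σ, h, heq⟩ := hQ'.exists_relabelComap_equiv_eq E hQ (by omega) hm hm'
    exact ⟨ρ, σ, h, by rw [hsquare ρ σ h, heq]⟩
  · rintro ⟨ρ, σ, h, heq⟩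
    refine ⟨equiv ρ σ h, (hF.bijOn_relabelComap_inclusion hm).injOn ?_ hQ
      ((hsquare ρ σ h).symm.trans heq)⟩
    refine .of_map σ ?_
    simpa only [Function.comp_def, label_equiv] using hQ'.comp_equiv (equiv ρ σ h)

end HasStableComponents

end Skeleton

/-! ### Quasipolynomials -/

section QuasiPolynomial

open Filter

lemma exists_polynomial_eval_add_sub_eval (p : Polynomial ℚ) {e : ℚ} (he : e ≠ 0) :
    ∃ P : Polynomial ℚ, ∀ x, P.eval (x + e) - P.eval x = p.eval x := by
  induction p using Polynomial.induction_on' with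
  | add p q hp hq =>
    obtain ⟨P, hP⟩ := hp
    obtain ⟨Q, hQ⟩ := hq
    refine ⟨P + Q, fun x => ?_⟩
    simp only [Polynomial.eval_add, ← hP, ← hQ]
    ring
  | monomial n c =>
    refine ⟨.C (c * e ^ n / (n + 1)) * (Polynomial.bernoulli (n + 1)).comp (.C e⁻¹ * .X),
      fun x => ?_⟩
    have hx : e⁻¹ * (x + e) = 1 + e⁻¹ * x := by
      rw [mul_add, inv_mul_cancel₀ he, add_comm]
    simp only [Polynomial.eval_mul, Polynomial.eval_C, Polynomial.eval_comp, Polynomial.eval_X,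
      Polynomial.eval_monomial, hx, Polynomial.bernoulli_eval_one_add, Nat.add_sub_cancel,
      Nat.cast_succ, mul_pow, inv_pow]
    field_simp
    ring

namespace IsQuasiPolynomial

variable {f g : ℤ → ℚ}

lemma const (c : ℚ) : IsQuasiPolynomial fun _ => c :=
  ⟨1, one_pos, fun _ => .C c, fun _ => Polynomial.eval_C.symm⟩

lemma add (hf : IsQuasiPolynomial f) (hg : IsQuasiPolynomial g) : IsQuasiPolynomial (f + g) := by
  obtain ⟨N, hN, p, hp⟩ := hf
  obtain ⟨M, hM, q, hq⟩ := hg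
  refine ⟨N * M, Nat.mul_pos hN hM, fun r => p (ZMod.castHom (Nat.dvd_mul_right N M) _ r) +
    q (ZMod.castHom (Nat.dvd_mul_left M N) _ r), fun n => ?_⟩
  simp only [Pi.add_apply, hp, hq, map_intCast, Polynomial.eval_add]

lemma const_smul (c : ℚ) (hf : IsQuasiPolynomial f) : IsQuasiPolynomial (c • f) := by
  obtain ⟨N, hN, p, hp⟩ := hf
  exact ⟨N, hN, fun r => c • p r, fun n => by simp [hp]⟩

lemma translate (hf : IsQuasiPolynomial f) (c : ℤ) : IsQuasiPolynomial fun n => f (n + c) := by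
  obtain ⟨N, hN, p, hp⟩ := hf
  exact ⟨N, hN, fun r => (p (r + c)).comp (.X + .C (c : ℚ)), fun n => by simp [hp]⟩

lemma sum {ι : Type*} (s : Finset ι) {f : ι → ℤ → ℚ} (hf : ∀ i ∈ s, IsQuasiPolynomial (f i)) :
    IsQuasiPolynomial (∑ i ∈ s, f i) :=
  Finset.sum_induction f _ (fun _ _ => add) (const 0) hf

lemma exists_sub_eq (hf : IsQuasiPolynomial f) {d : ℕ} (hd : 0 < d) :
    ∃ g, IsQuasiPolynomial g ∧ ∀ n, g (n + d) - g n = f n := by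
  obtain ⟨N, hN, p, hp⟩ := hf
  choose P hP using fun r =>
    exists_polynomial_eval_add_sub_eval (p r) (e := (N * d : ℕ)) (by positivity)
  let h : ℤ → ℚ := fun n => (P n).eval (n : ℚ)
  have hh (n : ℤ) : h (n + (N * d : ℕ)) - h n = f n := by
    rw [hp, ← hP n n]
    simp [h]
  refine ⟨∑ i ∈ Finset.range N, fun n => h (n + (i * d : ℕ)),
    sum _ fun i _ => translate ⟨N, hN, P, fun _ => rfl⟩ _, fun n => ?_⟩
  have hshift (i : ℕ) : n + d + (i * d : ℕ) = n + ((i + 1) * d : ℕ) := by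
    push_cast
    ring
  simp only [Finset.sum_apply, hshift]
  rw [← Finset.sum_sub_distrib, Finset.sum_range_sub (fun i => h (n + (i * d : ℕ))) N, ← hh n]
  simp

end IsQuasiPolynomial

/-- The space of sequences that eventually agree with a quasipolynomial. -/
def eventuallyQuasiPolynomial : Submodule ℚ (ℕ → ℚ) where
  carrier := {a | ∃ f, IsQuasiPolynomial f ∧ ∀ᶠ n : ℕ in atTop, a n = f n}
  add_mem' := fun ⟨f, hf, ha⟩ ⟨g, hg, hb⟩ => ⟨f + g, hf.add hg, by
    filter_upwards [ha, hb] with n ha hb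
    rw [Pi.add_apply, Pi.add_apply, ha, hb]⟩
  zero_mem' := ⟨0, .const 0, by simp⟩
  smul_mem' := fun c a ⟨f, hf, ha⟩ => ⟨c • f, hf.const_smul c, by
    filter_upwards [ha] with n ha
    rw [Pi.smul_apply, Pi.smul_apply, ha]⟩

lemma quasiPolynomialCount_iff {a : ℕ → ℕ} :
    QuasiPolynomialCount a ↔ (fun n => (a n : ℚ)) ∈ eventuallyQuasiPolynomial := by
  simp only [QuasiPolynomialCount, ← eventually_atTop]
  rfl

namespace eventuallyQuasiPolynomial

variable {a b : ℕ → ℚ}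

lemma congr (ha : a ∈ eventuallyQuasiPolynomial) (h : b =ᶠ[atTop] a) :
    b ∈ eventuallyQuasiPolynomial := by
  obtain ⟨f, hf, ha⟩ := ha
  exact ⟨f, hf, h.trans ha⟩

lemma comp_add (ha : a ∈ eventuallyQuasiPolynomial) (c : ℕ) :
    (fun n => a (n + c)) ∈ eventuallyQuasiPolynomial := by
  obtain ⟨f, hf, ha⟩ := ha
  refine ⟨_, hf.translate c, ?_⟩
  filter_upwards [(tendsto_add_atTop_nat c).eventually ha] with n hn
  rw [hn, Nat.cast_add]

lemma of_comp_add (c : ℕ) (ha : (fun n => a (n + c)) ∈ eventuallyQuasiPolynomial) :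
    a ∈ eventuallyQuasiPolynomial := by
  obtain ⟨f, hf, ha⟩ := ha
  refine ⟨_, hf.translate (-c), ?_⟩
  filter_upwards [(tendsto_sub_atTop_nat c).eventually ha, eventually_ge_atTop c] with n hn hc
  rw [Nat.sub_add_cancel hc] at hn
  rw [hn, Nat.cast_sub hc, sub_eq_add_neg]

lemma of_eventually_periodic {d : ℕ} (hd : 0 < d) (h : ∀ᶠ n in atTop, a (n + d) = a n) :
    a ∈ eventuallyQuasiPolynomial := by
  obtain ⟨n₀, hn₀⟩ := eventually_atTop.1 h
  refine of_comp_add n₀ ⟨fun n => a ((n : ZMod d).val + n₀),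
    ⟨d, hd, fun r => .C (a (r.val + n₀)), by simp⟩, .of_forall fun n => ?_⟩
  have hperiodic : Function.Periodic (fun n => a (n + n₀)) d := fun n => by
    dsimp only
    rw [add_right_comm]
    exact hn₀ _ (Nat.le_add_left _ _)
  simpa using (hperiodic.map_mod_nat n).symm

lemma of_sub_mem {d : ℕ} (hd : 0 < d)
    (h : (fun n => a (n + d) - a n) ∈ eventuallyQuasiPolynomial) :
    a ∈ eventuallyQuasiPolynomial := by
  obtain ⟨f, hf, hfa⟩ := h
  obtain ⟨g, hg, hgf⟩ := hf.exists_sub_eq hd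
  have hg' : (fun n : ℕ => g n) ∈ eventuallyQuasiPolynomial := ⟨g, hg, .of_forall fun _ => rfl⟩
  refine (Submodule.sub_mem_iff_left _ hg').1 (of_eventually_periodic hd ?_)
  filter_upwards [hfa] with n hn
  simp only [Pi.sub_apply, Nat.cast_add]
  linarith [hgf n]

end eventuallyQuasiPolynomial

end QuasiPolynomial

section Denumerant

lemma finite_sum_mul_eq {J : Type*} [Fintype J] {d : J → ℕ} (hd : ∀ j, 0 < d j) (t : ℕ) :
    Finite {m : J → ℕ // ∑ j, d j * m j = t} := by
  classical
  have hbound : {m : J → ℕ | ∑ j, d j * m j = t} ⊆ Set.Iic fun _ => t := fun m hm j =>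
    calc m j ≤ d j * m j := Nat.le_mul_of_pos_left _ (hd j)
      _ ≤ ∑ j, d j * m j :=
        Finset.single_le_sum (f := fun j => d j * m j) (fun _ _ => Nat.zero_le _)
          (Finset.mem_univ j)
      _ = t := hm
  exact ((Set.finite_Iic _).subset hbound).to_subtype

/-- The first summand is either zero or can be decreased by `d`. -/
def sumMulEquiv {M : Type*} (w : M → ℕ) (d t : ℕ) :
    {x : ℕ × M // d * x.1 + w x.2 = t + d} ≃
      {x : ℕ × M // d * x.1 + w x.2 = t} ⊕ {y // w y = t + d} where
  toFun
    | ⟨(0, y), h⟩ => .inr ⟨y, by simpa using h⟩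
    | ⟨(c + 1, y), h⟩ => .inl ⟨(c, y), by dsimp only at h ⊢; linarith⟩
  invFun := Sum.elim (fun x => ⟨(x.1.1 + 1, x.1.2), by linarith [x.2]⟩)
    fun y => ⟨(0, y.1), by simpa using y.2⟩
  left_inv := by rintro ⟨⟨_ | c, y⟩, h⟩ <;> rfl
  right_inv := by rintro (x | y) <;> rfl

lemma card_sum_mul_eq_mem_fin (n : ℕ) {d : Fin n → ℕ} (hd : ∀ j, 0 < d j) :
    (fun t => (Nat.card {m : Fin n → ℕ // ∑ j, d j * m j = t} : ℚ)) ∈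
      eventuallyQuasiPolynomial := by
  induction n with
  | zero =>
    refine eventuallyQuasiPolynomial.congr (zero_mem _) ?_
    filter_upwards [Filter.eventually_gt_atTop 0] with t ht
    simp [ht.ne]
  | succ n ih =>
    have hd' (j : Fin n) : 0 < d j.succ := hd j.succ
    let cons (t : ℕ) : {x : ℕ × (Fin n → ℕ) // d 0 * x.1 + ∑ j, d j.succ * x.2 j = t} ≃
        {m : Fin (n + 1) → ℕ // ∑ j, d j * m j = t} :=
      (Fin.consEquiv fun _ => ℕ).subtypeEquiv fun x => by simp [Fin.consEquiv, Fin.sum_univ_succ]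
    refine eventuallyQuasiPolynomial.of_sub_mem (hd 0)
      (eventuallyQuasiPolynomial.congr (eventuallyQuasiPolynomial.comp_add (ih hd') (d 0))
        (.of_forall fun t => ?_))
    have := finite_sum_mul_eq hd t
    have := Finite.of_equiv _ (cons t).symm
    have := finite_sum_mul_eq hd' (t + d 0)
    have hsplit := Nat.card_congr (sumMulEquiv (fun m : Fin n → ℕ => ∑ j, d j.succ * m j) (d 0) t)
    rw [Nat.card_sum] at hsplit
    dsimp only
    rw [← Nat.card_congr (cons _), ← Nat.card_congr (cons _), hsplit, Nat.cast_add,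
      add_sub_cancel_left]

theorem card_sum_mul_eq_mem {J : Type*} [Fintype J] {d : J → ℕ} (hd : ∀ j, 0 < d j) :
    (fun t => (Nat.card {m : J → ℕ // ∑ j, d j * m j = t} : ℚ)) ∈
      eventuallyQuasiPolynomial := by
  have h := card_sum_mul_eq_mem_fin _ fun j => hd ((Fintype.equivFin J).symm j)
  refine eventuallyQuasiPolynomial.congr h (.of_forall fun t => ?_)
  refine congrArg Nat.cast (Nat.card_congr
    (((Fintype.equivFin J).arrowCongr (Equiv.refl ℕ)).subtypeEquiv fun m => ?_))
  rw [← (Fintype.equivFin J).symm.sum_comp]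
  rfl

/-- A solution is fixed by `σ` if and only if it is constant on the cycles of `σ`. -/
def fixedFunctionEquiv {L A : Type*} [Finite L] (σ : Equiv.Perm L) :
    (Quotient (Equiv.Perm.SameCycle.setoid σ) → A) ≃ {m : L → A // ∀ i, m (σ i) = m i} where
  toFun m := ⟨fun i => m (Quotient.mk _ i), fun i =>
    congrArg m (Quotient.sound (Equiv.Perm.sameCycle_apply_left.2 (.refl σ i)))⟩
  invFun m := Quotient.lift m.1 fun i j h => by
    obtain ⟨n, rfl⟩ := Equiv.Perm.SameCycle.exists_nat_pow_eq h
    induction n with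
    | zero => rfl
    | succ n ih => rw [pow_succ', Equiv.Perm.mul_apply, m.2, ← ih ⟨n, rfl⟩]
  left_inv m := funext fun c => Quotient.inductionOn c fun _ => rfl
  right_inv _ := rfl

theorem card_fixed_sum_eq_mem {L : Type*} [Fintype L] (σ : Equiv.Perm L) :
    (fun t => (Nat.card {m : L → ℕ // (∀ i, m (σ i) = m i) ∧ ∑ i, m i = t} : ℚ)) ∈
      eventuallyQuasiPolynomial := by
  classical
  let S := Equiv.Perm.SameCycle.setoid σ
  have := Fintype.ofFinite (Quotient S)
  have hpos (c : Quotient S) : 0 < Fintype.card {i // Quotient.mk S i = c} :=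
    Quotient.inductionOn c fun i => Fintype.card_pos_iff.2 ⟨i, rfl⟩
  have hsum (m : Quotient S → ℕ) :
      ∑ c, Fintype.card {i // Quotient.mk S i = c} * m c = ∑ i, m (Quotient.mk S i) := by
    rw [← Fintype.sum_fiberwise' (Quotient.mk S) m]
    simp
  refine eventuallyQuasiPolynomial.congr (card_sum_mul_eq_mem hpos) (.of_forall fun t => ?_)
  refine congrArg Nat.cast (Nat.card_congr ((Equiv.subtypeSubtypeEquivSubtypeInter _ _).symm.trans
    ((fixedFunctionEquiv σ).subtypeEquiv fun m => ?_).symm))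
  rw [hsum]
  rfl

end Denumerant

section Orbits

lemma card_quot_eq_of_rel {A X : Type*} {r : A → A → Prop} (R : A → X → Prop)
    (hleft : ∀ a, ∃ x, R a x) (hright : ∀ x, ∃ a, R a x)
    (hr : ∀ {a a' x x'}, R a x → R a' x' → (r a a' ↔ x = x')) :
    Nat.card (Quot r) = Nat.card X := by
  choose φ hφ using hleft
  refine Nat.card_eq_of_bijective
    (Quot.lift φ fun a a' h => (hr (hφ a) (hφ a')).1 h) ⟨?_, fun x => ?_⟩
  · rintro ⟨a⟩ ⟨a'⟩ h
    exact Quot.sound ((hr (hφ a) (hφ a')).2 h)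
  · obtain ⟨a, ha⟩ := hright x
    exact ⟨Quot.mk _ a, (hr (hφ a) ha).1 ((hr ha ha).2 rfl)⟩

variable {G X : Type*} [Group G] [MulAction G X]

lemma fixedBy_prod {Y : Type*} [MulAction G Y] (g : G) :
    MulAction.fixedBy (X × Y) g = MulAction.fixedBy X g ×ˢ MulAction.fixedBy Y g :=
  Set.ext fun _ => Prod.ext_iff

lemma card_orbits_eq [Fintype G] [Finite X] :
    (Nat.card (MulAction.orbitRel.Quotient G X) : ℚ) =
      (Nat.card G : ℚ)⁻¹ * ∑ g : G, (Nat.card (MulAction.fixedBy X g) : ℚ) := by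
  classical
  have (g : G) := Fintype.ofFinite (MulAction.fixedBy X g)
  have := Fintype.ofFinite (MulAction.orbitRel.Quotient G X)
  have hburnside := MulAction.sum_card_fixedBy_eq_card_orbits_mul_card_group G X
  simp only [← Nat.card_eq_fintype_card] at hburnside
  have hG : (Nat.card G : ℚ) ≠ 0 := Nat.cast_ne_zero.2 Nat.card_pos.ne'
  rw [← Nat.cast_sum, hburnside, Nat.cast_mul]
  field_simp

lemma card_orbits_prod_mem [Finite G] [Finite X] {Y : ℕ → Type*} [∀ n, MulAction G (Y n)]
    [∀ n, Finite (Y n)]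
    (hY : ∀ g : G, (fun n => (Nat.card (MulAction.fixedBy (Y n) g) : ℚ)) ∈
      eventuallyQuasiPolynomial) :
    (fun n => (Nat.card (MulAction.orbitRel.Quotient G (X × Y n)) : ℚ)) ∈
      eventuallyQuasiPolynomial := by
  have := Fintype.ofFinite G
  have hsum := sum_mem (t := Finset.univ) fun g _ =>
    eventuallyQuasiPolynomial.smul_mem (Nat.card (MulAction.fixedBy X g) : ℚ) (hY g)
  convert eventuallyQuasiPolynomial.smul_mem (Nat.card G : ℚ)⁻¹ hsum using 1
  ext n
  simp [card_orbits_eq, fixedBy_prod, Finset.sum_apply, Set.ncard_prod]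

end Orbits

section BlockSizes

/-- The block sizes, all at least `M`, for which `T` and the blocks have `n` elements together. -/
abbrev BlockSizes (M : ℕ) (T L : Type) [Fintype L] (n : ℕ) : Type :=
  {m : L → ℕ // (∀ i, M ≤ m i) ∧ Nat.card T + ∑ i, m i = n}

variable (M : ℕ) (T L : Type) [Fintype L] (n : ℕ)

namespace BlockSizes

instance : MulAction (Equiv.Perm T × Equiv.Perm L) (BlockSizes M T L n) where
  smul g m := ⟨m.1 ∘ ⇑g.2⁻¹, fun i => m.2.1 _, by
    exact (congrArg (Nat.card T + ·) (Equiv.sum_comp g.2⁻¹ m.1)).trans m.2.2⟩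
  one_smul _ := rfl
  mul_smul _ _ _ := rfl

/-- Block sizes are determined by their excess over the minimal size. -/
def excessEquiv (t : ℕ) :
    BlockSizes M T L (t + (Nat.card T + Fintype.card L * M)) ≃ {m : L → ℕ // ∑ i, m i = t} where
  toFun m := ⟨fun i => m.1 i - M, by
    have := m.2.2
    rw [Finset.sum_tsub_distrib _ fun i _ => m.2.1 i, Finset.sum_const, Finset.card_univ,
      smul_eq_mul]
    omega⟩
  invFun m := ⟨fun i => m.1 i + M, fun i => Nat.le_add_left _ _, by
    rw [Finset.sum_add_distrib, m.2, Finset.sum_const, Finset.card_univ, smul_eq_mul]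
    ring⟩
  left_inv m := Subtype.ext <| funext fun i => Nat.sub_add_cancel (m.2.1 i)
  right_inv m := Subtype.ext <| funext fun i => Nat.add_sub_cancel _ _

instance : Finite (BlockSizes M T L n) := by
  have := finite_sum_mul_eq (fun _ : L => one_pos) (n - Nat.card T)
  refine Finite.of_injective (Subtype.map (q := fun m => ∑ i, 1 * m i = n - Nat.card T) id
    fun m hm => ?_) (Subtype.map_injective _ Function.injective_id)
  simp only [id, one_mul]
  omega

lemma card_fixedBy_mem (g : Equiv.Perm T × Equiv.Perm L) :
    (fun n => (Nat.card (MulAction.fixedBy (BlockSizes M T L n) g) : ℚ)) ∈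
      eventuallyQuasiPolynomial := by
  refine eventuallyQuasiPolynomial.of_comp_add (Nat.card T + Fintype.card L * M)
    (eventuallyQuasiPolynomial.congr (card_fixed_sum_eq_mem g.2⁻¹) (.of_forall fun t => ?_))
  let Fixed (m : L → ℕ) : Prop := ∀ i, m (g.2⁻¹ i) = m i
  refine congrArg Nat.cast (Nat.card_congr <| ((excessEquiv M T L t).subtypeEquiv
    (q := fun m => Fixed m.1) fun m => ?_).trans
      ((Equiv.subtypeSubtypeEquivSubtypeInter _ Fixed).trans
        (Equiv.subtypeEquivRight fun _ => and_comm)))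
  rw [MulAction.mem_fixedBy, Subtype.ext_iff, funext_iff]
  refine forall_congr' fun i => ?_
  have h := m.2.1 i
  have h' := m.2.1 (g.2⁻¹ i)
  change m.1 (g.2⁻¹ i) = m.1 i ↔ m.1 (g.2⁻¹ i) - M = m.1 i - M
  omega

end BlockSizes

end BlockSizes

/-! ### Orbits of components -/

section SkeletonPrimes

universe u

variable {K : Type u} [Field K] {k : ℕ}

open BlockIndex

/-- The components on the index set with blocks of minimal size `M` whose large classes of
interchangeable indices are the blocks. -/
abbrev SkeletonPrime (F : BoundedRankFamily K k) (M : ℕ) (T L : Type) : Type u :=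
  {P : Ideal (EntryRing K (BlockIndex T fun _ : L => M)) // IsLabelling F M label P}

variable {F : BoundedRankFamily K k} {M : ℕ} {T T' L L' : Type}

instance [Finite T] [Finite L] : Finite (SkeletonPrime F M T L) :=
  ((Ideal.finite_minimalPrimes_of_isNoetherianRing _ _).subset
    fun _ hP => IsLabelling.mem_components hP).to_subtype

/-- The bijection of the index sets with blocks of minimal size induced by `ρ` and `σ`. -/
abbrev skeletonEquiv (ρ : T ≃ T') (σ : L ≃ L') :
    (BlockIndex T fun _ : L => M) ≃ BlockIndex T' fun _ : L' => M :=
  equiv ρ σ fun _ => rfl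

noncomputable instance : MulAction (Equiv.Perm T × Equiv.Perm L) (SkeletonPrime F M T L) where
  smul g P := ⟨relabelComap (skeletonEquiv g.1⁻¹ g.2⁻¹) P.1, .of_map g.2⁻¹ (by
    simpa only [Function.comp_def, label_equiv] using
      P.2.comp_equiv (skeletonEquiv g.1⁻¹ g.2⁻¹))⟩
  one_smul P := Subtype.ext <| by
    refine Eq.trans (congrArg (relabelComap · P.1) (funext fun x => ?_)) (relabelComap_id P.1)
    cases x <;> rfl
  mul_smul g h P := Subtype.ext <| by
    change relabelComap (skeletonEquiv _ _) P.1 =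
      relabelComap (skeletonEquiv _ _) (relabelComap (skeletonEquiv _ _) P.1)
    rw [relabelComap_relabelComap]
    refine congrArg (relabelComap · P.1) (funext fun x => ?_)
    cases x <;> rfl

lemma smul_skeletonPrime_eq_iff {g : Equiv.Perm T × Equiv.Perm L} {P P' : SkeletonPrime F M T L} :
    g • P' = P ↔ relabelComap (skeletonEquiv g.1⁻¹ g.2⁻¹) P'.1 = P.1 :=
  Subtype.ext_iff

variable [Fintype L] [Fintype L'] {α : Type} {n : ℕ}

lemma smul_blockSizes_eq_iff {g : Equiv.Perm T × Equiv.Perm L} {m m' : BlockSizes M T L n} :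
    g • m' = m ↔ ∀ i, m.1 i = m'.1 (g.2⁻¹ i) := by
  rw [eq_comm, Subtype.ext_iff, funext_iff]
  rfl

/-- The prime `Q` is obtained, after a bijection of the index sets, by enlarging the blocks of the
skeleton `x.1` to the sizes `x.2`. -/
def IsRealization (Q : Ideal (EntryRing K α))
    (x : SkeletonPrime F M T L × BlockSizes M T L n) : Prop :=
  ∃ E : BlockIndex T x.2.1 ≃ α, IsLabelling F M label (relabelComap E Q) ∧
    relabelComap (inclusion x.2.2.1) (relabelComap E Q) = x.1.1

namespace HasStableComponents

variable {B N : ℕ} (hF : HasStableComponents F B N)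

include hF

lemma exists_isRealization_of_mem_components {Q : Ideal (EntryRing K (Fin n))}
    (hQ : Q ∈ F.components (Fin n)) :
    ∃ ℓ ≤ B, ∃ s ≤ B * (N + 2), ∃ x : SkeletonPrime F (N + 2) (Fin s) (Fin ℓ) ×
      BlockSizes (N + 2) (Fin s) (Fin ℓ) n, IsRealization Q x := by
  obtain ⟨ℓ, hℓ, s, hs, m, hm, E, hE⟩ := hF.exists_isLabelling_label hQ (N + 2)
  have hn : Nat.card (Fin s) + ∑ i, m i = n := by
    simpa [Nat.card_sum, Nat.card_sigma] using Nat.card_congr E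
  exact ⟨ℓ, hℓ, s, hs, (⟨_, (hF.bijOn_relabelComap_inclusion hm).mapsTo hE⟩, ⟨m, hm, hn⟩),
    E, hE, rfl⟩

lemma exists_isRealization [Finite T] (x : SkeletonPrime F (N + 2) T L × BlockSizes (N + 2) T L n) :
    ∃ Q ∈ F.components (Fin n), IsRealization Q x := by
  obtain ⟨P, m⟩ := x
  obtain ⟨Q, hQ, hQP⟩ := (hF.bijOn_relabelComap_inclusion m.2.1).surjOn P.2
  have hcard : Nat.card (BlockIndex T m.1) = Nat.card (Fin n) := by
    simpa [Nat.card_sum, Nat.card_sigma] using m.2.2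
  obtain ⟨E⟩ := Finite.card_eq.1 hcard
  have hEQ : relabelComap E (relabelComap E.symm Q) = Q :=
    ((relabelComap_equiv_symm E).1 rfl).symm
  exact ⟨_, relabelComap_mem_components E.symm hQ.mem_components, E, hEQ.symm ▸ hQ, hEQ.symm ▸ hQP⟩

lemma exists_perm_relabelComap_eq_iff [Finite T] [Finite T'] {Q Q' : Ideal (EntryRing K α)}
    {x : SkeletonPrime F (N + 2) T L × BlockSizes (N + 2) T L n}
    {x' : SkeletonPrime F (N + 2) T' L' × BlockSizes (N + 2) T' L' n}
    (hx : IsRealization Q x) (hx' : IsRealization Q' x') :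
    (∃ π : Equiv.Perm α, relabelComap π Q' = Q) ↔
      ∃ (ρ : T ≃ T') (σ : L ≃ L'), (∀ i, x.2.1 i = x'.2.1 (σ i)) ∧
        relabelComap (skeletonEquiv ρ σ) x'.1.1 = x.1.1 := by
  obtain ⟨E, hE, hEx⟩ := hx
  obtain ⟨E', hE', hEx'⟩ := hx'
  rw [← hEx, ← hEx', ← hF.exists_relabelComap_eq_iff hE hE' x.2.2.1 x'.2.2.1]
  refine (E.symm.equivCongr E'.symm).exists_congr fun π => ?_
  have hπ : relabelComap (E.symm.equivCongr E'.symm π) (relabelComap E' Q') =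
      relabelComap E (relabelComap π Q') := by
    rw [relabelComap_relabelComap, relabelComap_relabelComap]
    exact congrArg (relabelComap · Q') (funext fun x => by simp)
  rw [hπ]
  exact ⟨congrArg _, fun h =>
    ((relabelComap_equiv_symm E).2 rfl).symm.trans ((relabelComap_equiv_symm E).2 h)⟩

/-- The orbits of components on `Fin n`, described by a skeleton and its block sizes up to the
permutations of small indices and of blocks. -/
abbrev ComponentOrbitData (F : BoundedRankFamily K k) (B N n : ℕ) : Type u :=
  Σ p : Fin (B + 1) × Fin (B * (N + 2) + 1),
    MulAction.orbitRel.Quotient (Equiv.Perm (Fin p.2) × Equiv.Perm (Fin p.1))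
      (SkeletonPrime F (N + 2) (Fin p.2) (Fin p.1) × BlockSizes (N + 2) (Fin p.2) (Fin p.1) n)

lemma exists_perm_relabelComap_eq_iff_mk_eq
    {p p' : Fin (B + 1) × Fin (B * (N + 2) + 1)} {Q Q' : Ideal (EntryRing K α)}
    {x : SkeletonPrime F (N + 2) (Fin p.2) (Fin p.1) × BlockSizes (N + 2) (Fin p.2) (Fin p.1) n}
    {x' : SkeletonPrime F (N + 2) (Fin p'.2) (Fin p'.1) ×
      BlockSizes (N + 2) (Fin p'.2) (Fin p'.1) n}
    (hx : IsRealization Q x) (hx' : IsRealization Q' x') :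
    (∃ π : Equiv.Perm α, relabelComap π Q' = Q) ↔
      (⟨p, Quotient.mk _ x⟩ : ComponentOrbitData F B N n) = ⟨p', Quotient.mk _ x'⟩ := by
  rw [hF.exists_perm_relabelComap_eq_iff hx hx']
  constructor
  · rintro ⟨ρ, σ, hm, hP⟩
    obtain rfl : p = p' := by
      refine Prod.ext (Fin.ext ?_) (Fin.ext ?_)
      · simpa using Fintype.card_congr σ
      · simpa using Fintype.card_congr ρ
    refine congrArg (Sigma.mk p) (Quotient.sound ⟨(ρ⁻¹, σ⁻¹), Prod.ext ?_ ?_⟩)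
    · exact smul_skeletonPrime_eq_iff.2 (by simpa only [inv_inv] using hP)
    · exact smul_blockSizes_eq_iff.2 (by simpa only [inv_inv] using hm)
  · intro h
    obtain rfl : p = p' := congrArg Sigma.fst h
    obtain ⟨g, hg⟩ := Quotient.exact (eq_of_heq (Sigma.mk.inj h).2)
    exact ⟨g.1⁻¹, g.2⁻¹, smul_blockSizes_eq_iff.1 (congrArg Prod.snd hg),
      smul_skeletonPrime_eq_iff.1 (congrArg Prod.fst hg)⟩

lemma card_quot_components_eq (n : ℕ) :
    Nat.card (Quot fun P Q : F.components (Fin n) =>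
      ∃ π : Equiv.Perm (Fin n), relabelComap π Q.1 = P.1) =
      Nat.card (ComponentOrbitData F B N n) := by
  refine card_quot_eq_of_rel (fun Q ω => ∃ p x, ω = ⟨p, Quotient.mk _ x⟩ ∧ IsRealization Q.1 x)
    ?_ ?_ ?_
  · rintro ⟨Q, hQ⟩
    obtain ⟨ℓ, hℓ, s, hs, x, hx⟩ := hF.exists_isRealization_of_mem_components hQ
    exact ⟨_, (⟨ℓ, by omega⟩, ⟨s, by omega⟩), x, rfl, hx⟩
  · rintro ⟨p, ω⟩
    obtain ⟨x, rfl⟩ := Quotient.exists_rep ω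
    obtain ⟨Q, hQ, hx⟩ := hF.exists_isRealization x
    exact ⟨⟨Q, hQ⟩, p, x, rfl, hx⟩
  · rintro Q Q' _ _ ⟨p, x, rfl, hx⟩ ⟨p', x', rfl, hx'⟩
    exact hF.exists_perm_relabelComap_eq_iff_mk_eq hx hx'

end HasStableComponents

theorem card_quot_components_mem (F : BoundedRankFamily K k) :
    (fun n => (Nat.card (Quot fun P Q : F.components (Fin n) =>
      ∃ π : Equiv.Perm (Fin n), relabelComap π Q.1 = P.1) : ℚ)) ∈ eventuallyQuasiPolynomial := by
  obtain ⟨B, N, hF⟩ := exists_hasStableComponents F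
  have hsum := sum_mem (t := Finset.univ) fun (p : Fin (B + 1) × Fin (B * (N + 2) + 1)) _ =>
    card_orbits_prod_mem (X := SkeletonPrime F (N + 2) (Fin p.2) (Fin p.1))
      (BlockSizes.card_fixedBy_mem (N + 2) (Fin p.2) (Fin p.1))
  convert hsum using 1
  ext n
  simp [hF.card_quot_components_eq, Nat.card_sigma, Finset.sum_apply]

end SkeletonPrimes

section SymmetricChain

universe u

variable {K : Type u} [Field K] {k : ℕ} {J : ∀ n : ℕ, Ideal (EntryRing K (Fin n))}

lemma map_relabel_perm_eq_iff {α : Type*} (π : Equiv.Perm α) {P Q : Ideal (EntryRing K α)} :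
    Ideal.map (relabel π) P = Q ↔ relabelComap π Q = P := by
  have hbij : Function.Bijective (relabel (K := K) π) :=
    ⟨relabel_injective π.injective, fun f => ⟨relabel π.symm f, by simp [relabel_relabel]⟩⟩
  constructor
  · rintro rfl
    exact Ideal.comap_map_of_bijective _ hbij
  · rintro rfl
    exact Ideal.map_comap_of_surjective _ hbij.surjective _

lemma le_relabelComap_castLE
    (hincl : ∀ n, Ideal.map (relabel (Fin.castSucc : Fin n → Fin (n + 1))) (J n) ≤ J (n + 1))
    {m n : ℕ} (h : m ≤ n) : J m ≤ relabelComap (Fin.castLE h) (J n) := by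
  induction n, h using Nat.le_induction with
  | base => exact (relabelComap_id (J m)).ge
  | succ n hmn ih =>
    refine (ih.trans (relabelComap_mono _ (Ideal.map_le_iff_le_comap.1 (hincl n)))).trans_eq ?_
    exact relabelComap_relabelComap _ _ _

lemma le_relabelComap_of_injective
    (hsym : ∀ n (π : Equiv.Perm (Fin n)), Ideal.map (relabel π) (J n) = J n)
    (hincl : ∀ n, Ideal.map (relabel (Fin.castSucc : Fin n → Fin (n + 1))) (J n) ≤ J (n + 1))
    {m n : ℕ} {e : Fin m → Fin n} (he : Function.Injective e) : J m ≤ relabelComap e (J n) := by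
  have h : m ≤ n := by simpa using Fintype.card_le_of_injective e he
  obtain ⟨π, hπ⟩ := Equiv.Perm.exists_extending_pair _ e (Fin.castLE_injective h) he
  obtain rfl : π ∘ Fin.castLE h = e := funext hπ
  rw [← relabelComap_relabelComap, (map_relabel_perm_eq_iff π).1 (hsym n π)]
  exact le_relabelComap_castLE hincl h

lemma genericMinor_mem_of_fin {α : Type*} {I : Ideal (EntryRing K α)}
    (hminors : ∀ n (ρ γ : Fin (k + 1) → Fin n), genericMinor ρ γ ∈ J n)
    (hJ : ∀ n (e : Fin n ↪ α), J n ≤ relabelComap e I) (ρ γ : Fin (k + 1) → α) :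
    genericMinor ρ γ ∈ I := by
  have ε := Finite.equivFin ↥(Set.range ρ ∪ Set.range γ)
  have hmem := hJ _ ⟨fun a => (ε.symm a).1, Subtype.val_injective.comp ε.symm.injective⟩
    (hminors _ (fun a => ε ⟨ρ a, .inl ⟨a, rfl⟩⟩) fun a => ε ⟨γ a, .inr ⟨a, rfl⟩⟩)
  rw [mem_relabelComap, relabel_genericMinor] at hmem
  simpa only [Function.comp_def, Function.Embedding.coeFn_mk, Equiv.symm_apply_apply] using hmem

/-- The family of radical ideals generated on each index set by all copies of the ideals `J n`. -/
noncomputable def BoundedRankFamily.ofChain (J : ∀ n : ℕ, Ideal (EntryRing K (Fin n)))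
    (hminors : ∀ n (ρ γ : Fin (k + 1) → Fin n), genericMinor ρ γ ∈ J n) :
    BoundedRankFamily K k where
  ideal α := (⨆ (n : ℕ) (e : Fin n ↪ α), Ideal.map (relabel e) (J n)).radical
  isRadical _ := Ideal.radical_isRadical _
  genericMinor_mem {α} := genericMinor_mem_of_fin hminors fun n e => Ideal.map_le_iff_le_comap.1 <|
    (le_iSup₂ (f := fun n (e : Fin n ↪ α) => Ideal.map (relabel e) (J n)) n e).trans
      Ideal.le_radical
  le_relabelComap {α β} g hg := by
    rw [relabelComap, Ideal.comap_radical]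
    refine Ideal.radical_mono (iSup₂_le fun n e => Ideal.map_le_iff_le_comap.2 ?_)
    have hle := le_iSup₂ (f := fun n (e : Fin n ↪ β) => Ideal.map (relabel e) (J n)) n
      (e.trans ⟨g, hg⟩)
    refine (Ideal.map_le_iff_le_comap.1 hle).trans_eq ?_
    exact (relabelComap_relabelComap e g _).symm

lemma components_ofChain (hminors : ∀ n (ρ γ : Fin (k + 1) → Fin n), genericMinor ρ γ ∈ J n)
    (hsym : ∀ n (π : Equiv.Perm (Fin n)), Ideal.map (relabel π) (J n) = J n)
    (hincl : ∀ n, Ideal.map (relabel (Fin.castSucc : Fin n → Fin (n + 1))) (J n) ≤ J (n + 1))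
    (n : ℕ) : (BoundedRankFamily.ofChain J hminors).components (Fin n) = (J n).minimalPrimes := by
  have hsup : ⨆ (m : ℕ) (e : Fin m ↪ Fin n), Ideal.map (relabel e) (J m) = J n := by
    refine le_antisymm (iSup₂_le fun m e => Ideal.map_le_iff_le_comap.2 <|
      le_relabelComap_of_injective hsym hincl e.injective) ?_
    exact (hsym n (Equiv.refl _)).ge.trans <|
      le_iSup₂ (f := fun m (e : Fin m ↪ Fin n) => Ideal.map (relabel e) (J m)) n
        (Equiv.refl _).toEmbedding
  rw [BoundedRankFamily.components, BoundedRankFamily.ofChain, Ideal.radical_minimalPrimes, hsup]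

lemma card_quot_minimalPrimes
    (hminors : ∀ n (ρ γ : Fin (k + 1) → Fin n), genericMinor ρ γ ∈ J n)
    (hsym : ∀ n (π : Equiv.Perm (Fin n)), Ideal.map (relabel π) (J n) = J n)
    (hincl : ∀ n, Ideal.map (relabel (Fin.castSucc : Fin n → Fin (n + 1))) (J n) ≤ J (n + 1))
    (n : ℕ) :
    Nat.card (Quot fun P Q : {P : Ideal (EntryRing K (Fin n)) // P ∈ (J n).minimalPrimes} =>
      ∃ π : Equiv.Perm (Fin n), Ideal.map (relabel π) P.1 = Q.1) =
    Nat.card (Quot fun P Q : (BoundedRankFamily.ofChain J hminors).components (Fin n) =>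
      ∃ π : Equiv.Perm (Fin n), relabelComap π Q.1 = P.1) := by
  rw [components_ofChain hminors hsym hincl n]
  simp only [map_relabel_perm_eq_iff]

end SymmetricChain

/-- For a symmetric chain of ideals `J n ⊆ K[x_{i,j} : i,j ∈ [n]]` containing all
`(k+1) × (k+1)` minors of the matrix of variables, the number of `Sym([n])`-orbits on
minimal primes over `J n` is a quasipolynomial in `n` for `n ≫ 0`. -/
theorem orbit_count_components_subvarieties_of_bounded_rank
    (K : Type) [Field K] (k : ℕ)
    (J : ∀ n : ℕ, Ideal (MvPolynomial (Fin n × Fin n) K))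
    (hminors : ∀ (n : ℕ) (r c : Fin (k + 1) → Fin n),
      (Matrix.det (Matrix.of fun a b : Fin (k + 1) =>
        (X (r a, c b) : MvPolynomial (Fin n × Fin n) K))) ∈ J n)
    (hsym : ∀ (n : ℕ) (π : Equiv.Perm (Fin n)),
      Ideal.map (rename (Prod.map (⇑π) (⇑π))) (J n) = J n)
    (hincl : ∀ n : ℕ,
      Ideal.map (rename (Prod.map (Fin.castSucc : Fin n → Fin (n + 1))
        (Fin.castSucc : Fin n → Fin (n + 1)))) (J n) ≤ J (n + 1)) :
    QuasiPolynomialCount (fun n =>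
      Nat.card (Quot (fun (P Q : {P : Ideal (MvPolynomial (Fin n × Fin n) K) //
          P ∈ (J n).minimalPrimes}) =>
        ∃ π : Equiv.Perm (Fin n),
          Ideal.map (rename (Prod.map (⇑π) (⇑π))) P.1 = Q.1))) := by
  have hcount := card_quot_components_mem (BoundedRankFamily.ofChain J hminors)
  exact quasiPolynomialCount_iff.2 <| eventuallyQuasiPolynomial.congr hcount <|
    .of_forall fun n => congrArg Nat.cast (card_quot_minimalPrimes hminors hsym hincl n)
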